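/- arXiv:2010.03353 — 2 statements merged into one kernel-verified Lean document; each statement's English description precedes it below -/
import Mathlib

section
/- (Korn–Maxwell–Sobolev, sufficiency, 1 < p < 3) Let 1 < p < 3 and let 𝔸 be an elliptic first-order homogeneous operator on ℝ³ with matrix representative A ∈ 𝓛(ℝ^{3×3}; ℝᴺ). Then there is c = c(p, A) > 0 such that for every open Ω ⊂ ℝ³ and every F ∈ C_c^∞(Ω; ℝ^{3×3}): ‖F‖_{L^{p*}(Ω)} ≤ c(‖A[F]‖_{L^{p*}(Ω)} + ‖curl F‖_{Lᵖ(Ω)}), where p* = 3p/(3-p). -/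
open MeasureTheory
open scoped ENNReal

noncomputable def pd (j : Fin 3) (f : (Fin 3 → ℝ) → ℝ) (x : Fin 3 → ℝ) : ℝ :=
  fderiv ℝ f x (Pi.single j 1)

/-- The row-wise curl of a matrix field `F : ℝ³ → ℝ^{3×3}`. -/
noncomputable def mcurl (F : (Fin 3 → ℝ) → Fin 3 → Fin 3 → ℝ) (x : Fin 3 → ℝ) :
    Fin 3 → Fin 3 → ℝ :=
  fun i => ![pd 1 (fun y => F y i 2) x - pd 2 (fun y => F y i 1) x,
             pd 2 (fun y => F y i 0) x - pd 0 (fun y => F y i 2) x,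
             pd 0 (fun y => F y i 1) x - pd 1 (fun y => F y i 0) x]

/-- `A` induces an elliptic operator `𝔸u = A[∇u]`: the symbol `v ↦ A[v ⊗ ξ]` is
injective for every `ξ ≠ 0`. -/
def IsElliptic {N : ℕ} (A : (Fin 3 → Fin 3 → ℝ) →ₗ[ℝ] (Fin N → ℝ)) : Prop :=
  ∀ ξ : Fin 3 → ℝ, ξ ≠ 0 →
    Function.Injective (fun v : Fin 3 → ℝ => A (fun i j => v i * ξ j))

/-!
Put `a(ξ) v = A[v ⊗ ξ]`. By ellipticity `a` has the left inverse `b = (aᵀ a)⁻¹ aᵀ`, smooth and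
homogeneous of degree `-1` off the origin, so that `F = T (A[F]) + R F` with Fourier multiplier
operators `T`, of symbol `w ↦ (b w) ⊗ ξ`, and `R`, of symbol `F ↦ F - (b A[F]) ⊗ ξ`, both of
degree `0`. The symbol of `R` annihilates every `v ⊗ ξ`, hence factors through the array
`F_{kl} ξ_m - F_{km} ξ_l`, and `∇ R F = S (curl F)` with a multiplier operator `S` of degree `0`.
The `L^{p*}` bound for `T`, and the `L^p` bound for `S` followed by the Sobolev inequality, give the
claim.

The bounds for symbols of degree `0` come from the Hilbert transform. Cotlar's identity bounds the
symbols `sign ⟨θ, ξ⟩` on `L^{2^k}` uniformly in `θ`. Over each face of the cube, the coordinates of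
the central projection onto the face express a symbol of degree `0` as a superposition of such
signs, and the cones over the six faces cover the space. Marcinkiewicz interpolation gives all
exponents `r ≥ 2`, and duality those in `(1, 2]`.
-/

namespace KornMaxwellSobolev

open FourierTransform
open scoped SchwartzMap NNReal Convolution

section IntegrableBounded

lemma memLp_of_memLp_of_bounded {α F : Type*} {mα : MeasurableSpace α} {μ : Measure α}
    [NormedAddCommGroup F] {f : α → F} {q r : ℝ≥0∞} (hf : MemLp f q μ) (hq : q ≠ 0)
    (hqr : q ≤ r) (hr : r ≠ ∞) {B : ℝ} (hB : ∀ x, ‖f x‖ ≤ B) : MemLp f r μ := by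
  have hq' : q ≠ ∞ := ne_top_of_le_ne_top hr hqr
  have hle : q.toReal ≤ r.toReal := ENNReal.toReal_mono hr hqr
  rw [← integrable_norm_rpow_iff hf.1 (hq.bot_lt.trans_le hqr).ne' hr]
  refine ((hf.integrable_norm_rpow hq hq').const_mul (B ^ (r.toReal - q.toReal))).mono'
    (hf.1.norm.aemeasurable.pow_const _).aestronglyMeasurable (.of_forall fun x => ?_)
  calc ‖‖f x‖ ^ r.toReal‖ = ‖f x‖ ^ (r.toReal - q.toReal) * ‖f x‖ ^ q.toReal := by
        rw [Real.norm_of_nonneg (by positivity), ← Real.rpow_add_of_nonneg (norm_nonneg _)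
          (sub_nonneg.2 hle) ENNReal.toReal_nonneg, sub_add_cancel]
    _ ≤ B ^ (r.toReal - q.toReal) * ‖f x‖ ^ q.toReal := by
        gcongr
        exact hB x

variable {V : Type*} [NormedAddCommGroup V] [InnerProductSpace ℝ V] [FiniteDimensional ℝ V]
  [MeasurableSpace V] [BorelSpace V] {φ ψ : V → ℂ}

/-- Integrable and bounded functions: a class on which the Fourier integral converges, which is
stable under bounded multipliers and convolution, and which lies in every `L^r`. -/
structure IntegrableBounded (φ : V → ℂ) : Prop where
  integrable : Integrable φ
  bounded : ∃ B : ℝ, ∀ x, ‖φ x‖ ≤ B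

lemma integral_fourier_mul_eq (hφ : Integrable φ) (hψ : Integrable ψ) :
    ∫ ξ, 𝓕 φ ξ * ψ ξ = ∫ x, φ x * 𝓕 ψ x := by
  have h := VectorFourier.integral_fourierIntegral_smul_eq_flip (L := innerₗ V) (μ := volume)
    (ν := volume) Real.continuous_fourierChar continuous_inner hφ hψ
  rwa [flip_innerₗ] at h

lemma norm_fourier_le (φ : V → ℂ) (x : V) : ‖𝓕 φ x‖ ≤ ∫ v, ‖φ v‖ :=
  VectorFourier.norm_fourierIntegral_le_integral_norm _ _ _ _ _

lemma continuous_fourier (hφ : Integrable φ) : Continuous (𝓕 φ) :=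
  VectorFourier.fourierIntegral_continuous Real.continuous_fourierChar continuous_inner hφ

lemma aestronglyMeasurable_fourier (hφ : Integrable φ) :
    AEStronglyMeasurable (𝓕 φ) (volume : Measure V) :=
  (continuous_fourier hφ).aestronglyMeasurable

lemma fourier_add (hφ : Integrable φ) (hψ : Integrable ψ) :
    𝓕 (fun x => φ x + ψ x) = 𝓕 φ + 𝓕 ψ :=
  VectorFourier.fourierIntegral_add (L := innerₗ V) (μ := volume)
    Real.continuous_fourierChar continuous_inner hφ hψ

lemma fourier_const_mul (c : ℂ) (φ : V → ℂ) : 𝓕 (fun x => c * φ x) = c • 𝓕 φ :=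
  VectorFourier.fourierIntegral_const_smul Real.fourierChar volume (innerₗ V) φ c

namespace IntegrableBounded

lemma mul_left {m : V → ℂ} (hφ : IntegrableBounded φ) (hm : AEStronglyMeasurable m volume)
    {K : ℝ} (hK : ∀ x, ‖m x‖ ≤ K) : IntegrableBounded fun x => m x * φ x := by
  refine ⟨hφ.integrable.bdd_mul hm (.of_forall hK), ?_⟩
  obtain ⟨B, hB⟩ := hφ.bounded
  exact ⟨K * B, fun x => norm_mul_le_of_le (hK x) (hB x)⟩

lemma memLp (hφ : IntegrableBounded φ) {r : ℝ≥0∞} (hr : 1 ≤ r) (hrt : r ≠ ∞) :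
    MemLp φ r volume := by
  obtain ⟨B, hB⟩ := hφ.bounded
  exact memLp_of_memLp_of_bounded (memLp_one_iff_integrable.2 hφ.integrable) one_ne_zero hr hrt hB

lemma memLp_two (hφ : IntegrableBounded φ) : MemLp φ 2 volume :=
  hφ.memLp one_le_two ENNReal.ofNat_ne_top

lemma fourier_toLp_ae_eq (hφ : IntegrableBounded φ) :
    ⇑(𝓕 (hφ.memLp_two.toLp φ) : Lp ℂ 2 (volume : Measure V)) =ᵐ[volume] 𝓕 φ := by
  set φ₂ : Lp ℂ 2 (volume : Measure V) := hφ.memLp_two.toLp φ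
  have hdist := Lp.fourier_toTemperedDistribution_eq φ₂
  refine ae_eq_of_integral_contDiff_smul_eq ((Lp.memLp _).locallyIntegrable one_le_two)
    (continuous_fourier hφ.integrable).locallyIntegrable fun g hg hgc => ?_
  let G : 𝓢(V, ℂ) := (hgc.comp_left (g := Complex.ofReal) Complex.ofReal_zero).toSchwartzMap
    (Complex.ofRealCLM.contDiff.comp hg)
  have hG := congrArg (fun T => T G) hdist
  simp only [TemperedDistribution.fourier_apply, Lp.toTemperedDistribution_apply] at hG
  calc ∫ x, g x • (𝓕 φ₂ : Lp ℂ 2 (volume : Measure V)) x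
      = ∫ x, G x • (𝓕 φ₂ : Lp ℂ 2 (volume : Measure V)) x := rfl
    _ = ∫ x, (𝓕 G) x • φ₂ x := hG.symm
    _ = ∫ x, φ x * 𝓕 (G : V → ℂ) x := integral_congr_ae <| by
        filter_upwards [hφ.memLp_two.coeFn_toLp] with x hx
        rw [hx, SchwartzMap.fourier_coe, smul_eq_mul, mul_comm]
    _ = ∫ x, 𝓕 φ x * G x := (integral_fourier_mul_eq hφ.integrable G.integrable).symm
    _ = ∫ x, g x • 𝓕 φ x := by
        congr 1 with x
        exact mul_comm _ _

lemma eLpNorm_fourier (hφ : IntegrableBounded φ) :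
    eLpNorm (𝓕 φ) 2 volume = eLpNorm φ 2 volume := by
  rw [← eLpNorm_congr_ae hφ.fourier_toLp_ae_eq, ← eLpNorm_congr_ae hφ.memLp_two.coeFn_toLp,
    ← ENNReal.toReal_eq_toReal_iff' (Lp.eLpNorm_ne_top _) (Lp.eLpNorm_ne_top _),
    ← Lp.norm_def, ← Lp.norm_def]
  exact Lp.norm_fourier_eq _

lemma memLp_fourier (hφ : IntegrableBounded φ) {r : ℝ≥0∞} (hr : 2 ≤ r) (hrt : r ≠ ∞) :
    MemLp (𝓕 φ) r volume := by
  refine memLp_of_memLp_of_bounded (q := 2)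
    ⟨aestronglyMeasurable_fourier hφ.integrable, ?_⟩ two_ne_zero hr hrt (norm_fourier_le φ)
  rw [hφ.eLpNorm_fourier]
  exact hφ.memLp_two.2

lemma integrable_mul_comp_sub (hφ : IntegrableBounded φ) (hψ : IntegrableBounded ψ) (x : V) :
    Integrable fun t => φ t * ψ (x - t) := by
  obtain ⟨B, hB⟩ := hψ.bounded
  exact hφ.integrable.mul_bdd (hψ.integrable.comp_sub_left x).aestronglyMeasurable
    (.of_forall fun t => hB _)

lemma convolution (hφ : IntegrableBounded φ) (hψ : IntegrableBounded ψ) :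
    IntegrableBounded (φ ⋆[.mul ℂ ℂ, volume] ψ) := by
  refine ⟨hφ.integrable.integrable_convolution _ hψ.integrable, ?_⟩
  obtain ⟨B, hB⟩ := hψ.bounded
  refine ⟨∫ t, ‖φ t‖ * B, fun x => ?_⟩
  refine norm_integral_le_of_norm_le (hφ.integrable.norm.mul_const B) (.of_forall fun t => ?_)
  exact norm_mul_le_of_le le_rfl (hB _)

end IntegrableBounded

end IntegrableBounded

section Multipliers

variable {V : Type*} [NormedAddCommGroup V] [InnerProductSpace ℝ V] [FiniteDimensional ℝ V]
  [MeasurableSpace V] [BorelSpace V] {r : ℝ≥0∞} {K K' : ℝ≥0} {m m' φ : V → ℂ}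

/-- `m` is bounded by `K` and is a Fourier multiplier on `L^r` with norm at most `K`. The multiplier
inequality is tested on Fourier transforms `𝓕 φ` of integrable bounded functions, so that the
operator is simply `𝓕 φ ↦ 𝓕 (m φ)`. -/
structure HasMultiplierBound (r : ℝ≥0∞) (K : ℝ≥0) (m : V → ℂ) : Prop where
  aestronglyMeasurable : AEStronglyMeasurable m volume
  norm_le : ∀ ξ, ‖m ξ‖ ≤ K
  eLpNorm_le : ∀ φ, IntegrableBounded φ →
    eLpNorm (𝓕 fun ξ => m ξ * φ ξ) r volume ≤ K * eLpNorm (𝓕 φ) r volume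

namespace HasMultiplierBound

lemma integrableBounded (hm : HasMultiplierBound r K m) (hφ : IntegrableBounded φ) :
    IntegrableBounded fun ξ => m ξ * φ ξ :=
  hφ.mul_left hm.aestronglyMeasurable hm.norm_le

lemma mul (hm : HasMultiplierBound r K m) (hm' : HasMultiplierBound r K' m') :
    HasMultiplierBound r (K * K') fun ξ => m ξ * m' ξ := by
  refine ⟨hm.aestronglyMeasurable.mul hm'.aestronglyMeasurable,
    fun ξ => norm_mul_le_of_le (hm.norm_le ξ) (hm'.norm_le ξ), fun φ hφ => ?_⟩
  simp only [mul_assoc, ENNReal.coe_mul]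
  exact (hm.eLpNorm_le _ (hm'.integrableBounded hφ)).trans (by gcongr; exact hm'.eLpNorm_le φ hφ)

lemma mono (hm : HasMultiplierBound r K m) (hK : K ≤ K') : HasMultiplierBound r K' m :=
  ⟨hm.aestronglyMeasurable, fun ξ => (hm.norm_le ξ).trans (NNReal.coe_le_coe.2 hK),
    fun φ hφ => (hm.eLpNorm_le φ hφ).trans (by gcongr)⟩

lemma add (hr : 1 ≤ r) (hm : HasMultiplierBound r K m) (hm' : HasMultiplierBound r K' m') :
    HasMultiplierBound r (K + K') fun ξ => m ξ + m' ξ := by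
  refine ⟨hm.aestronglyMeasurable.add hm'.aestronglyMeasurable,
    fun ξ => norm_add_le_of_le (hm.norm_le ξ) (hm'.norm_le ξ), fun φ hφ => ?_⟩
  have hmφ := (hm.integrableBounded hφ).integrable
  have hmφ' := (hm'.integrableBounded hφ).integrable
  simp only [add_mul, ENNReal.coe_add]
  rw [fourier_add hmφ hmφ']
  exact (eLpNorm_add_le (aestronglyMeasurable_fourier hmφ) (aestronglyMeasurable_fourier hmφ')
    hr).trans (add_le_add (hm.eLpNorm_le φ hφ) (hm'.eLpNorm_le φ hφ))

lemma const (r : ℝ≥0∞) (c : ℂ) : HasMultiplierBound r ‖c‖₊ fun _ : V => c := by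
  refine ⟨aestronglyMeasurable_const, fun _ => le_rfl, fun φ _ => ?_⟩
  rw [fourier_const_mul, eLpNorm_const_smul]
  rfl

lemma congr_ae (hm : HasMultiplierBound r K m) (h : m' =ᵐ[volume] m) (hK : ∀ ξ, ‖m' ξ‖ ≤ K) :
    HasMultiplierBound r K m' := by
  refine ⟨hm.aestronglyMeasurable.congr h.symm, hK, fun φ hφ => ?_⟩
  have hF : 𝓕 (fun ξ => m' ξ * φ ξ) = 𝓕 fun ξ => m ξ * φ ξ :=
    funext <| Real.fourier_congr_ae <| by filter_upwards [h] with ξ hξ using by rw [hξ]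
  exact hF ▸ hm.eLpNorm_le φ hφ

lemma of_norm_le_one (hm : AEStronglyMeasurable m volume) (h : ∀ ξ, ‖m ξ‖ ≤ 1) :
    HasMultiplierBound 2 1 m := by
  refine ⟨hm, h, fun φ hφ => ?_⟩
  rw [(hφ.mul_left hm h).eLpNorm_fourier, hφ.eLpNorm_fourier, ENNReal.coe_one, one_mul]
  exact eLpNorm_mono fun ξ => by
    rw [norm_mul]
    exact mul_le_of_le_one_left (norm_nonneg _) (h ξ)

end HasMultiplierBound

end Multipliers

section HalfSpaceSign

lemma eLpNorm_mul_self {α : Type*} {mα : MeasurableSpace α} {μ : Measure α} (f : α → ℂ)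
    (r : ℝ≥0∞) : eLpNorm (fun x => f x * f x) r μ = eLpNorm f (2 * r) μ ^ 2 := by
  have h := eLpNorm_norm_rpow (p := r) (μ := μ) f (zero_lt_two' ℝ)
  rw [ENNReal.ofReal_ofNat, mul_comm, ENNReal.rpow_ofNat] at h
  rw [← h]
  exact eLpNorm_congr_norm_ae (.of_forall fun x => by simp [sq])

lemma eLpNorm_mul_le {α : Type*} {mα : MeasurableSpace α} {μ : Measure α} {f g : α → ℂ}
    (r : ℝ≥0∞) (hf : AEStronglyMeasurable f μ) (hg : AEStronglyMeasurable g μ) :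
    eLpNorm (fun x => f x * g x) r μ ≤ eLpNorm f (2 * r) μ * eLpNorm g (2 * r) μ := by
  have : ENNReal.HolderTriple (2 * r) (2 * r) r := ⟨by
    rw [ENNReal.mul_inv (.inl two_ne_zero) (.inl ENNReal.ofNat_ne_top), ← add_mul,
      ENNReal.inv_two_add_inv_two, one_mul]⟩
  exact eLpNorm_smul_le_mul_eLpNorm (φ := f) (f := g) hg hf

lemma le_mul_of_sq_le {a b : ℝ≥0∞} {K : ℝ≥0} (ha : a ≠ ∞) (hb : b ≠ ∞)
    (h : a ^ 2 ≤ 2 * (K * (b * a)) + b ^ 2) : a ≤ (2 * K + 1 : ℝ≥0) * b := by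
  lift a to ℝ≥0 using ha
  lift b to ℝ≥0 using hb
  norm_cast at h ⊢
  by_contra! hc
  have hab : b ≤ a := le_trans (le_mul_of_one_le_left' le_add_self) hc.le
  have : a ^ 2 < a ^ 2 := calc
    a ^ 2 ≤ 2 * (K * (b * a)) + b ^ 2 := h
    _ ≤ 2 * (K * (b * a)) + b * a := by rw [sq]; gcongr
    _ = (2 * K + 1) * b * a := by ring
    _ < a * a := by gcongr; exact (zero_le).trans_lt hc
    _ = a ^ 2 := (sq a).symm
  exact this.false

variable {V : Type*} [NormedAddCommGroup V] [InnerProductSpace ℝ V]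

/-- The symbol `sign ⟨θ, ξ⟩` of the Hilbert transform in direction `θ`, with value `1` on the
hyperplane `⟨θ, ξ⟩ = 0`. -/
noncomputable def halfSpaceSign (θ ξ : V) : ℂ := if 0 ≤ inner ℝ θ ξ then 1 else -1

lemma norm_halfSpaceSign (θ ξ : V) : ‖halfSpaceSign θ ξ‖ = 1 := by
  unfold halfSpaceSign
  split_ifs <;> simp

lemma halfSpaceSign_mul_add_one (θ a b : V) :
    halfSpaceSign θ a * halfSpaceSign θ b + 1 =
      halfSpaceSign θ (a + b) * (halfSpaceSign θ a + halfSpaceSign θ b) := by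
  unfold halfSpaceSign
  rw [inner_add_right]
  split_ifs <;> first | (norm_num; done) | (exfalso; linarith)

variable [FiniteDimensional ℝ V] [MeasurableSpace V] [BorelSpace V] {φ : V → ℂ}

lemma measurable_halfSpaceSign_uncurry :
    Measurable fun z : V × V => halfSpaceSign z.1 z.2 :=
  .ite (measurableSet_le measurable_const (by fun_prop)) measurable_const measurable_const

lemma measurable_halfSpaceSign (θ : V) : Measurable (halfSpaceSign θ) :=
  measurable_halfSpaceSign_uncurry.comp measurable_prodMk_left

lemma hasMultiplierBound_two_halfSpaceSign (θ : V) : HasMultiplierBound 2 1 (halfSpaceSign θ) :=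
  .of_norm_le_one (measurable_halfSpaceSign θ).aestronglyMeasurable
    fun ξ => (norm_halfSpaceSign θ ξ).le

lemma convolution_halfSpaceSign_add (θ : V) (hφ : IntegrableBounded φ) (ξ : V) :
    ((fun ξ => halfSpaceSign θ ξ * φ ξ) ⋆[.mul ℂ ℂ, volume] fun ξ => halfSpaceSign θ ξ * φ ξ) ξ +
        (φ ⋆[.mul ℂ ℂ, volume] φ) ξ =
      2 * (halfSpaceSign θ ξ * (φ ⋆[.mul ℂ ℂ, volume] fun ξ => halfSpaceSign θ ξ * φ ξ) ξ) := by
  set ψ : V → ℂ := fun ξ => halfSpaceSign θ ξ * φ ξ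
  have hψ : IntegrableBounded ψ := (hasMultiplierBound_two_halfSpaceSign θ).integrableBounded hφ
  have hcomm : (φ ⋆[.mul ℂ ℂ, volume] ψ) ξ = (ψ ⋆[.mul ℂ ℂ, volume] φ) ξ := by
    rw [← convolution_flip]
    congr 1
    ext
    simp
  calc _ = halfSpaceSign θ ξ *
        ((φ ⋆[.mul ℂ ℂ, volume] ψ) ξ + (ψ ⋆[.mul ℂ ℂ, volume] φ) ξ) := by
        simp only [convolution_def, ContinuousLinearMap.mul_apply']
        rw [← integral_add (hψ.integrable_mul_comp_sub hψ ξ) (hφ.integrable_mul_comp_sub hφ ξ),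
          ← integral_add (hφ.integrable_mul_comp_sub hψ ξ) (hψ.integrable_mul_comp_sub hφ ξ),
          ← integral_const_mul]
        congr 1 with t
        have hsign := halfSpaceSign_mul_add_one θ t (ξ - t)
        rw [add_sub_cancel] at hsign
        linear_combination (φ t * φ (ξ - t)) * hsign
    _ = _ := by rw [← hcomm]; ring

/-- Cotlar's identity `(Hf)² + f² = 2 H(f · Hf)`. -/
lemma cotlar_identity (θ : V) (hφ : IntegrableBounded φ) (x : V) :
    𝓕 (fun ξ => halfSpaceSign θ ξ * φ ξ) x * 𝓕 (fun ξ => halfSpaceSign θ ξ * φ ξ) x +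
        𝓕 φ x * 𝓕 φ x =
      2 * 𝓕 (fun ξ => halfSpaceSign θ ξ *
        (φ ⋆[.mul ℂ ℂ, volume] fun ξ => halfSpaceSign θ ξ * φ ξ) ξ) x := by
  have hψ := (hasMultiplierBound_two_halfSpaceSign θ).integrableBounded hφ
  rw [← Real.fourier_mul_convolution_eq hψ.integrable hψ.integrable,
    ← Real.fourier_mul_convolution_eq hφ.integrable hφ.integrable, ← Pi.add_apply,
    ← fourier_add (hψ.convolution hψ).integrable (hφ.convolution hφ).integrable,
    funext (convolution_halfSpaceSign_add θ hφ), fourier_const_mul]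
  rfl

lemma HasMultiplierBound.halfSpaceSign_double {r : ℝ≥0∞} (hr : 2 ≤ r) (hrt : r ≠ ∞) {K : ℝ≥0}
    {θ : V} (h : HasMultiplierBound r K (halfSpaceSign θ)) :
    HasMultiplierBound (2 * r) (2 * K + 1) (halfSpaceSign θ) := by
  refine ⟨h.aestronglyMeasurable, fun ξ => by simp [norm_halfSpaceSign], fun φ hφ => ?_⟩
  set ψ : V → ℂ := fun ξ => halfSpaceSign θ ξ * φ ξ
  have hψ : IntegrableBounded ψ := h.integrableBounded hφ
  have hconv := hφ.convolution hψ
  have h2r : 2 ≤ 2 * r := hr.trans (le_mul_of_one_le_left' one_le_two)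
  have h2rt : 2 * r ≠ ∞ := ENNReal.mul_ne_top (by simp) hrt
  have hFφ := aestronglyMeasurable_fourier hφ.integrable
  have hFψ := aestronglyMeasurable_fourier hψ.integrable
  have hsq : (fun x => 𝓕 ψ x * 𝓕 ψ x) =
      (2 : ℂ) • 𝓕 (fun ξ => halfSpaceSign θ ξ * (φ ⋆[.mul ℂ ℂ, volume] ψ) ξ) -
        fun x => 𝓕 φ x * 𝓕 φ x :=
    funext fun x => eq_sub_of_add_eq (cotlar_identity θ hφ x)
  apply le_mul_of_sq_le (hψ.memLp_fourier h2r h2rt).2.ne (hφ.memLp_fourier h2r h2rt).2.ne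
  calc eLpNorm (𝓕 ψ) (2 * r) volume ^ 2
      = eLpNorm (fun x => 𝓕 ψ x * 𝓕 ψ x) r volume := (eLpNorm_mul_self _ _).symm
    _ ≤ 2 * eLpNorm (𝓕 fun ξ => halfSpaceSign θ ξ * (φ ⋆[.mul ℂ ℂ, volume] ψ) ξ) r volume +
          eLpNorm (fun x => 𝓕 φ x * 𝓕 φ x) r volume := by
        rw [hsq]
        refine (eLpNorm_sub_le ((aestronglyMeasurable_fourier
          (h.integrableBounded hconv).integrable).const_smul _) (hFφ.mul hFφ)
          (one_le_two.trans hr)).trans_eq ?_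
        rw [eLpNorm_const_smul, ← ofReal_norm, Complex.norm_ofNat, ENNReal.ofReal_ofNat]
        rfl
    _ ≤ 2 * (K * eLpNorm (𝓕 (φ ⋆[.mul ℂ ℂ, volume] ψ)) r volume) +
          eLpNorm (𝓕 φ) (2 * r) volume ^ 2 := by
        rw [eLpNorm_mul_self]
        gcongr
        exact h.eLpNorm_le _ hconv
    _ ≤ 2 * (K * (eLpNorm (𝓕 φ) (2 * r) volume * eLpNorm (𝓕 ψ) (2 * r) volume)) +
          eLpNorm (𝓕 φ) (2 * r) volume ^ 2 := by
        rw [funext (Real.fourier_mul_convolution_eq hφ.integrable hψ.integrable)]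
        gcongr
        exact eLpNorm_mul_le r hFφ hFψ

lemma exists_hasMultiplierBound_halfSpaceSign (V : Type*) [NormedAddCommGroup V]
    [InnerProductSpace ℝ V] [FiniteDimensional ℝ V] [MeasurableSpace V] [BorelSpace V] (k : ℕ) :
    ∃ K : ℝ≥0, ∀ θ : V, HasMultiplierBound (2 ^ (k + 1)) K (halfSpaceSign θ) := by
  induction k with
  | zero => exact ⟨1, fun θ => by simpa using hasMultiplierBound_two_halfSpaceSign θ⟩
  | succ k ih =>
    obtain ⟨K, hK⟩ := ih
    refine ⟨2 * K + 1, fun θ => ?_⟩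
    rw [pow_succ' _ (k + 1)]
    exact (hK θ).halfSpaceSign_double (le_self_pow₀ one_le_two k.succ_ne_zero) (by simp)

end HalfSpaceSign

section IntegralOfMultipliers

lemma eLpNorm_le_iff_lintegral_rpow_le {α F : Type*} {mα : MeasurableSpace α} {μ : Measure α}
    [NormedAddCommGroup F] {f : α → F} {r C : ℝ≥0∞} (hr0 : r ≠ 0) (hrt : r ≠ ∞) :
    eLpNorm f r μ ≤ C ↔ ∫⁻ x, ‖f x‖ₑ ^ r.toReal ∂μ ≤ C ^ r.toReal := by
  rw [eLpNorm_eq_lintegral_rpow_enorm_toReal hr0 hrt, one_div,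
    ENNReal.rpow_inv_le_iff (ENNReal.toReal_pos hr0 hrt)]

lemma eLpNorm_integral_le {S α F : Type*} {mS : MeasurableSpace S} {mα : MeasurableSpace α}
    [NormedAddCommGroup F] [NormedSpace ℝ F] {ν : Measure S} [IsFiniteMeasure ν] {μ : Measure α}
    [SFinite μ] {G : S → α → F} (hG : AEStronglyMeasurable (Function.uncurry G) (ν.prod μ))
    {r N : ℝ≥0∞} (hr : 1 ≤ r) (hrt : r ≠ ∞) (hN : ∀ᵐ s ∂ν, eLpNorm (G s) r μ ≤ N) :
    eLpNorm (fun x => ∫ s, G s x ∂ν) r μ ≤ ν Set.univ * N := by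
  have hr0 : r ≠ 0 := (one_pos.trans_le hr).ne'
  have hρ1 : 1 ≤ r.toReal := by simpa using ENNReal.toReal_mono hrt hr
  have hρ : 0 < r.toReal := one_pos.trans_le hρ1
  have jensen : ∀ᵐ x ∂μ, ‖∫ s, G s x ∂ν‖ₑ ^ r.toReal ≤
      ν Set.univ ^ (r.toReal - 1) * ∫⁻ s, ‖G s x‖ₑ ^ r.toReal ∂ν := by
    filter_upwards [hG.prod_swap.prodMk_left] with x hx
    have h := (enorm_integral_le_lintegral_enorm _).trans
      (eLpNorm_one_eq_lintegral_enorm.symm.trans_le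
        (eLpNorm_le_eLpNorm_mul_rpow_measure_univ hr hx))
    rw [eLpNorm_eq_lintegral_rpow_enorm_toReal hr0 hrt] at h
    refine (ENNReal.rpow_le_rpow h hρ.le).trans_eq ?_
    rw [ENNReal.mul_rpow_of_nonneg _ _ hρ.le, ← ENNReal.rpow_mul, ← ENNReal.rpow_mul,
      one_div_mul_cancel hρ.ne', ENNReal.rpow_one, mul_comm, ENNReal.toReal_one, div_one, sub_mul,
      one_mul, one_div_mul_cancel hρ.ne']
    rfl
  rw [eLpNorm_le_iff_lintegral_rpow_le hr0 hrt]
  calc ∫⁻ x, ‖∫ s, G s x ∂ν‖ₑ ^ r.toReal ∂μ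
      ≤ ∫⁻ x, ν Set.univ ^ (r.toReal - 1) * ∫⁻ s, ‖G s x‖ₑ ^ r.toReal ∂ν ∂μ :=
        lintegral_mono_ae jensen
    _ = ν Set.univ ^ (r.toReal - 1) * ∫⁻ s, ∫⁻ x, ‖G s x‖ₑ ^ r.toReal ∂μ ∂ν := by
        rw [lintegral_const_mul' _ _
          (ENNReal.rpow_ne_top_of_nonneg (sub_nonneg.2 hρ1) (measure_ne_top ν _)),
          lintegral_lintegral_swap (hG.prod_swap.enorm.pow_const _)]
    _ ≤ ν Set.univ ^ (r.toReal - 1) * ∫⁻ _, N ^ r.toReal ∂ν := by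
        gcongr ν Set.univ ^ (r.toReal - 1) * ?_
        apply lintegral_mono_ae
        filter_upwards [hN] with s hs
        exact (eLpNorm_le_iff_lintegral_rpow_le hr0 hrt).1 hs
    _ = ν Set.univ ^ (r.toReal - 1) * ν Set.univ ^ (1 : ℝ) * N ^ r.toReal := by
        rw [lintegral_const, ENNReal.rpow_one, mul_assoc, mul_comm (N ^ _)]
    _ = (ν Set.univ * N) ^ r.toReal := by
        rw [← ENNReal.rpow_add_of_nonneg _ _ (sub_nonneg.2 hρ1) zero_le_one, sub_add_cancel,
          ENNReal.mul_rpow_of_nonneg _ _ hρ.le]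

variable {S : Type*} [MeasurableSpace S] {ν : Measure S}
  {V : Type*} [NormedAddCommGroup V] [InnerProductSpace ℝ V] [FiniteDimensional ℝ V]
  [MeasurableSpace V] [BorelSpace V] {n : S → V → ℂ} {φ : V → ℂ}

lemma aestronglyMeasurable_fourier_uncurry (hn : Measurable (Function.uncurry n))
    (hφ : Integrable φ) :
    AEStronglyMeasurable (Function.uncurry fun s => 𝓕 fun ξ => n s ξ * φ ξ)
      (ν.prod (volume : Measure V)) := by
  have hkernel : Continuous fun z : V × V => Real.fourierChar (-inner ℝ z.2 z.1) :=
    Real.continuous_fourierChar.comp (continuous_snd.inner continuous_fst).neg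
  have hnφ : AEStronglyMeasurable (fun z : (S × V) × V => n z.1.1 z.2 * φ z.2)
      ((ν.prod volume).prod volume) :=
    (hn.comp (by fun_prop : Measurable fun z : (S × V) × V =>
      (z.1.1, z.2))).aestronglyMeasurable.mul hφ.1.comp_snd
  refine (((hkernel.stronglyMeasurable.comp_measurable (by fun_prop :
    Measurable fun z : (S × V) × V => (z.1.2, z.2))).aestronglyMeasurable.smul
      hnφ).integral_prod_right').congr ?_
  filter_upwards with z
  exact (Real.fourier_eq (fun ξ => n z.1 ξ * φ ξ) z.2).symm

variable [IsFiniteMeasure ν]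

lemma fourier_integral_mul (hn : Measurable (Function.uncurry n)) {K : ℝ}
    (hK : ∀ᵐ s ∂ν, ∀ ξ, ‖n s ξ‖ ≤ K) (hφ : Integrable φ) (x : V) :
    𝓕 (fun ξ => (∫ s, n s ξ ∂ν) * φ ξ) x = ∫ s, 𝓕 (fun ξ => n s ξ * φ ξ) x ∂ν := by
  have hint : Integrable (fun z : S × V => Real.fourierChar (-inner ℝ z.2 x) • (n z.1 z.2 * φ z.2))
      (ν.prod volume) := by
    have hkernel : Continuous fun ξ : V => Real.fourierChar (-inner ℝ ξ x) :=
      Real.continuous_fourierChar.comp (continuous_id.inner continuous_const).neg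
    refine ((hφ.norm.const_mul K).comp_snd ν).mono'
      ((hkernel.stronglyMeasurable.comp_measurable measurable_snd).aestronglyMeasurable.smul
        (hn.aestronglyMeasurable.mul hφ.1.comp_snd)) ?_
    filter_upwards [Measure.quasiMeasurePreserving_fst.ae hK] with z hz
    rw [Circle.norm_smul]
    exact norm_mul_le_of_le (hz z.2) le_rfl
  simp only [Real.fourier_eq]
  rw [integral_integral_swap hint]
  congr 1 with ξ
  rw [← integral_mul_const, Circle.smul_def, ← integral_smul]
  rfl

lemma HasMultiplierBound.integral {r : ℝ≥0∞} (hr : 1 ≤ r) (hrt : r ≠ ∞) {K : ℝ≥0}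
    (hn : Measurable (Function.uncurry n)) (h : ∀ᵐ s ∂ν, HasMultiplierBound r K (n s)) :
    HasMultiplierBound r ((ν Set.univ).toNNReal * K) fun ξ => ∫ s, n s ξ ∂ν := by
  refine ⟨hn.stronglyMeasurable.integral_prod_left'.aestronglyMeasurable, fun ξ => ?_,
    fun φ hφ => ?_⟩
  · rw [mul_comm]
    exact norm_integral_le_of_norm_le_const (h.mono fun s hs => hs.norm_le ξ)
  · rw [funext (fourier_integral_mul hn (h.mono fun s hs => hs.norm_le) hφ.integrable),
      ENNReal.coe_mul, ENNReal.coe_toNNReal (measure_ne_top ν _), mul_assoc]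
    exact eLpNorm_integral_le (aestronglyMeasurable_fourier_uncurry hn hφ.integrable) hr hrt
      (h.mono fun s hs => hs.eLpNorm_le φ hφ)

end IntegralOfMultipliers

section ConeMultipliers

variable {V : Type*} [NormedAddCommGroup V] [InnerProductSpace ℝ V]

/-- The indicator function of the closed half space `⟨θ, ξ⟩ ≥ 0`. -/
noncomputable def halfSpaceIndicator (θ ξ : V) : ℂ := if 0 ≤ inner ℝ θ ξ then 1 else 0

/-- The indicator function of the cone `|⟨a, ξ⟩| ≤ ⟨c, ξ⟩`, `⟨c, ξ⟩ > 0`. -/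
noncomputable def coneIndicator (a c ξ : V) : ℂ :=
  if 0 < inner ℝ c ξ ∧ |inner ℝ a ξ| ≤ inner ℝ c ξ then 1 else 0

lemma halfSpaceIndicator_eq (θ ξ : V) :
    halfSpaceIndicator θ ξ = 1 / 2 * (1 + halfSpaceSign θ ξ) := by
  unfold halfSpaceIndicator halfSpaceSign
  split_ifs <;> norm_num

lemma coneIndicator_eq (a c ξ : V) :
    coneIndicator a c ξ = (1 - halfSpaceIndicator (-c) ξ) *
      (halfSpaceIndicator (c - a) ξ * halfSpaceIndicator (c + a) ξ) := by
  unfold coneIndicator halfSpaceIndicator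
  simp only [inner_neg_left, inner_sub_left, inner_add_left, abs_le]
  split_ifs <;> first | (norm_num; done) | (exfalso; grind)

lemma eq_add_integral_halfSpaceIndicator {a c ξ : V} (hc : 0 < inner ℝ c ξ)
    (ha : |inner ℝ a ξ| ≤ inner ℝ c ξ) {P P' : ℝ → ℂ} (hP : ∀ s, HasDerivAt P (P' s) s)
    (hP' : Continuous P') :
    P (inner ℝ a ξ / inner ℝ c ξ) =
      P (-1) + ∫ s in Set.Icc (-1) 1, P' s * halfSpaceIndicator (a - s • c) ξ := by
  set u := inner ℝ a ξ / inner ℝ c ξ with hu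
  have hu1 : -1 ≤ u ∧ u ≤ 1 := abs_le.1 <| by
    rw [hu, abs_div, abs_of_pos hc]
    exact (div_le_one hc).2 ha
  have hind : ∀ s, P' s * halfSpaceIndicator (a - s • c) ξ = (Set.Iic u).indicator P' s := by
    intro s
    have hs : 0 ≤ inner ℝ (a - s • c) ξ ↔ s ≤ u := by
      rw [inner_sub_left, real_inner_smul_left, sub_nonneg, hu, le_div_iff₀ hc]
    simp only [halfSpaceIndicator, hs, Set.indicator_apply, Set.mem_Iic, mul_ite, mul_one, mul_zero]
  have hIcc : Set.Iic u ∩ Set.Icc (-1) 1 = Set.Icc (-1) u :=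
    Set.ext fun s => ⟨fun h => ⟨h.2.1, h.1⟩, fun h => ⟨h.2, h.1, h.2.trans hu1.2⟩⟩
  simp only [hind]
  rw [integral_indicator measurableSet_Iic, Measure.restrict_restrict measurableSet_Iic, hIcc,
    integral_Icc_eq_integral_Ioc, ← intervalIntegral.integral_of_le hu1.1,
    intervalIntegral.integral_eq_sub_of_hasDerivAt (fun s _ => hP s)
      (hP'.intervalIntegrable _ _), add_sub_cancel]

variable [FiniteDimensional ℝ V] [MeasurableSpace V] [BorelSpace V] {r : ℝ≥0∞} {K B : ℝ≥0}

lemma HasMultiplierBound.one_sub (hr : 1 ≤ r) {m : V → ℂ} (hm : HasMultiplierBound r K m) :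
    HasMultiplierBound r (1 + K) fun ξ => 1 - m ξ := by
  have h := (HasMultiplierBound.const r 1).add hr ((HasMultiplierBound.const r (-1)).mul hm)
  simpa only [nnnorm_neg, nnnorm_one, one_mul, neg_mul, ← sub_eq_add_neg] using h

lemma exists_hasMultiplierBound_halfSpaceIndicator (V : Type*) [NormedAddCommGroup V]
    [InnerProductSpace ℝ V] [FiniteDimensional ℝ V] [MeasurableSpace V] [BorelSpace V] (k : ℕ) :
    ∃ K : ℝ≥0, ∀ θ : V, HasMultiplierBound (2 ^ (k + 1)) K (halfSpaceIndicator θ) := by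
  obtain ⟨K, hK⟩ := exists_hasMultiplierBound_halfSpaceSign V k
  have hr : (1 : ℝ≥0∞) ≤ 2 ^ (k + 1) := one_le_pow₀ one_le_two
  refine ⟨‖(1 / 2 : ℂ)‖₊ * (‖(1 : ℂ)‖₊ + K), fun θ => ?_⟩
  rw [funext (halfSpaceIndicator_eq θ)]
  exact (HasMultiplierBound.const _ _).mul ((HasMultiplierBound.const _ 1).add hr (hK θ))

lemma measurable_halfSpaceIndicator_uncurry :
    Measurable fun z : V × V => halfSpaceIndicator z.1 z.2 :=
  .ite (measurableSet_le measurable_const (by fun_prop)) measurable_const measurable_const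

lemma measurable_coneIndicator (a c : V) : Measurable (coneIndicator a c) := by
  have habs : Continuous fun ξ : V => |inner ℝ a ξ| := by fun_prop
  have hpos : MeasurableSet {ξ : V | 0 < inner ℝ c ξ} :=
    measurableSet_lt measurable_const (by fun_prop)
  have hle : MeasurableSet {ξ : V | |inner ℝ a ξ| ≤ inner ℝ c ξ} :=
    measurableSet_le habs.measurable (by fun_prop)
  exact .ite (hpos.inter hle) measurable_const measurable_const

lemma hasMultiplierBound_coneIndicator (hr : 1 ≤ r)
    (hK : ∀ θ : V, HasMultiplierBound r K (halfSpaceIndicator θ)) (a c : V) :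
    HasMultiplierBound r ((1 + K) * (K * K)) (coneIndicator a c) := by
  rw [funext (coneIndicator_eq a c)]
  exact ((hK (-c)).one_sub hr).mul ((hK (c - a)).mul (hK (c + a)))

/-- By the fundamental theorem of calculus, a function of the quotient `⟨a, ξ⟩ / ⟨c, ξ⟩` is on the
cone a superposition of indicators of the half spaces `⟨a - s c, ξ⟩ ≥ 0`, `|s| ≤ 1`. -/
lemma HasMultiplierBound.coneIndicator_mul_comp_div (hr : 1 ≤ r) (hrt : r ≠ ∞)
    (hK : ∀ θ : V, HasMultiplierBound r K (halfSpaceIndicator θ)) (a c : V) {P P' : ℝ → V → ℂ}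
    (hP : ∀ ξ s, HasDerivAt (fun s => P s ξ) (P' s ξ) s) (hP' : ∀ ξ, Continuous fun s => P' s ξ)
    (hmeas : Measurable (Function.uncurry P')) (hB : HasMultiplierBound r B (P (-1)))
    (hB' : ∀ s ∈ Set.Icc (-1 : ℝ) 1, HasMultiplierBound r B (P' s)) :
    HasMultiplierBound r ((1 + K) * (K * K) * (B + 2 * (B * K)))
      fun ξ => coneIndicator a c ξ * P (inner ℝ a ξ / inner ℝ c ξ) ξ := by
  have hn : Measurable (Function.uncurry fun (s : ℝ) ξ =>
      P' s ξ * halfSpaceIndicator (a - s • c) ξ) :=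
    hmeas.mul (measurable_halfSpaceIndicator_uncurry.comp
      (by fun_prop : Measurable fun z : ℝ × V => (a - z.1 • c, z.2)))
  have hint := HasMultiplierBound.integral (ν := volume.restrict (Set.Icc (-1) 1)) hr hrt hn
    ((ae_restrict_mem measurableSet_Icc).mono fun s hs => (hB' s hs).mul (hK (a - s • c)))
  have hvol : (volume.restrict (Set.Icc (-1 : ℝ) 1) Set.univ).toNNReal = 2 := by
    rw [Measure.restrict_apply_univ, Real.volume_Icc, sub_neg_eq_add,
      one_add_one_eq_two, ENNReal.ofReal_ofNat, ENNReal.toNNReal_ofNat]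
  rw [hvol] at hint
  convert (hasMultiplierBound_coneIndicator hr hK a c).mul (hB.add hr hint) using 2 with ξ
  by_cases hξ : 0 < inner ℝ c ξ ∧ |inner ℝ a ξ| ≤ inner ℝ c ξ
  · rw [eq_add_integral_halfSpaceIndicator hξ.1 hξ.2 (hP ξ) (hP' ξ)]
  · simp only [coneIndicator, hξ, if_false, zero_mul]

lemma exists_nnnorm_le_on_square {f : ℝ × ℝ → ℂ} (hf : Continuous f) :
    ∃ B : ℝ≥0, ∀ s ∈ Set.Icc (-1 : ℝ) 1, ∀ t ∈ Set.Icc (-1 : ℝ) 1, ‖f (s, t)‖₊ ≤ B := by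
  obtain ⟨B, hB⟩ := (isCompact_Icc.prod isCompact_Icc :
    IsCompact (Set.Icc (-1 : ℝ) 1 ×ˢ Set.Icc (-1 : ℝ) 1)).exists_bound_of_continuousOn
      hf.continuousOn
  exact ⟨B.toNNReal, fun s hs t ht => NNReal.coe_le_coe.1 <|
    (hB (s, t) ⟨hs, ht⟩).trans (Real.le_coe_toNNReal B)⟩

lemma exists_hasMultiplierBound_cone_section (hr : 1 ≤ r) (hrt : r ≠ ∞)
    (hK : ∀ θ : V, HasMultiplierBound r K (halfSpaceIndicator θ)) (b c : V) {G : ℝ × ℝ → ℂ}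
    (hG : ContDiff ℝ 1 G) :
    ∃ C, ∀ s ∈ Set.Icc (-1 : ℝ) 1, HasMultiplierBound r C
      fun ξ => coneIndicator b c ξ * G (s, inner ℝ b ξ / inner ℝ c ξ) := by
  have hG₂ : Continuous fun z => fderiv ℝ G z (0, 1) :=
    (hG.continuous_fderiv one_ne_zero).clm_apply continuous_const
  obtain ⟨B, hB⟩ := exists_nnnorm_le_on_square hG.continuous
  obtain ⟨B₂, hB₂⟩ := exists_nnnorm_le_on_square hG₂
  refine ⟨_, fun s hs => .coneIndicator_mul_comp_div hr hrt hK b c (B := max B B₂)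
    (P := fun t _ => G (s, t)) (P' := fun t _ => fderiv ℝ G (s, t) (0, 1)) (fun _ t => ?_)
    (fun _ => by fun_prop) ((hG₂.comp (.prodMk_right s)).measurable.comp measurable_fst)
    ((HasMultiplierBound.const r _).mono ((hB s hs _ (by simp)).trans (le_max_left _ _)))
    fun t ht => (HasMultiplierBound.const r _).mono ((hB₂ s hs t ht).trans (le_max_right _ _))⟩
  exact (hG.differentiable one_ne_zero (s, t)).hasFDerivAt.comp_hasDerivAt t
    ((hasDerivAt_const t s).prodMk (hasDerivAt_id t))

lemma exists_hasMultiplierBound_cone_mul_cone (hr : 1 ≤ r) (hrt : r ≠ ∞)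
    (hK : ∀ θ : V, HasMultiplierBound r K (halfSpaceIndicator θ)) (a b c : V) {G : ℝ × ℝ → ℂ}
    (hG : ContDiff ℝ 2 G) :
    ∃ C, HasMultiplierBound r C fun ξ => coneIndicator a c ξ *
      (coneIndicator b c ξ * G (inner ℝ a ξ / inner ℝ c ξ, inner ℝ b ξ / inner ℝ c ξ)) := by
  set G₁ : ℝ × ℝ → ℂ := fun z => fderiv ℝ G z (1, 0)
  have hG₁ : ContDiff ℝ 1 G₁ :=
    (hG.fderiv_right (one_add_one_eq_two (R := WithTop ℕ∞)).le).clm_apply contDiff_const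
  have hG₁c : Continuous G₁ := hG₁.continuous
  obtain ⟨B, hB⟩ := exists_hasMultiplierBound_cone_section hr hrt hK b c (hG.of_le one_le_two)
  obtain ⟨B₁, hB₁⟩ := exists_hasMultiplierBound_cone_section hr hrt hK b c hG₁
  refine ⟨_, .coneIndicator_mul_comp_div hr hrt hK a c (B := max B B₁)
    (P := fun s ξ => coneIndicator b c ξ * G (s, inner ℝ b ξ / inner ℝ c ξ))
    (P' := fun s ξ => coneIndicator b c ξ * G₁ (s, inner ℝ b ξ / inner ℝ c ξ))
    (fun ξ s => .const_mul _ ?_) (fun ξ => by fun_prop) ?_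
    ((hB (-1) (by simp)).mono (le_max_left _ _)) fun s hs => (hB₁ s hs).mono (le_max_right _ _)⟩
  · exact (hG.differentiable two_ne_zero _).hasFDerivAt.comp_hasDerivAt s
      ((hasDerivAt_id s).prodMk (hasDerivAt_const s _))
  · exact ((measurable_coneIndicator b c).comp measurable_snd).mul <| hG₁c.measurable.comp <|
      measurable_fst.prodMk (.div (by fun_prop) (by fun_prop))

end ConeMultipliers

section HomogeneousMultipliers

/-- `m` is a symbol of class `C²` away from the origin and positively homogeneous of degree `d`. -/
structure IsHomogeneousSymbol {V F : Type*} [NormedAddCommGroup V] [NormedSpace ℝ V]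
    [NormedAddCommGroup F] [NormedSpace ℝ F] (d : ℤ) (m : V → F) : Prop where
  contDiffOn : ContDiffOn ℝ 2 m {0}ᶜ
  map_smul : ∀ t : ℝ, 0 < t → ∀ ξ ≠ 0, m (t • ξ) = t ^ d • m ξ

variable {V : Type*} [NormedAddCommGroup V] [InnerProductSpace ℝ V] [FiniteDimensional ℝ V]
  [MeasurableSpace V] [BorelSpace V] {r : ℝ≥0∞} {K : ℝ≥0} {m : V → ℂ}

lemma exists_hasMultiplierBound_prod {ι : Type*} {f : ι → V → ℂ}
    (hf : ∀ i, ∃ C, HasMultiplierBound r C (f i)) (S : Finset ι) :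
    ∃ C, HasMultiplierBound r C fun ξ => ∏ i ∈ S, f i ξ := by
  classical
  induction S using Finset.induction_on with
  | empty => exact ⟨_, by simpa only [Finset.prod_empty] using HasMultiplierBound.const r 1⟩
  | insert i S hi ih =>
    obtain ⟨C, hC⟩ := ih
    obtain ⟨D, hD⟩ := hf i
    exact ⟨D * C, by simpa only [Finset.prod_insert hi] using hD.mul hC⟩

lemma exists_hasMultiplierBound_mul_one_sub_prod {ι : Type*} {f : ι → V → ℂ} (hr : 1 ≤ r)
    (hf : ∀ i, ∃ C, HasMultiplierBound r C (f i))
    (hmf : ∀ i, ∃ C, HasMultiplierBound r C fun ξ => m ξ * f i ξ) (S : Finset ι) :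
    ∃ C, HasMultiplierBound r C fun ξ => m ξ * (1 - ∏ i ∈ S, (1 - f i ξ)) := by
  classical
  induction S using Finset.induction_on with
  | empty =>
    exact ⟨_, by simpa only [Finset.prod_empty, sub_self, mul_zero] using
      HasMultiplierBound.const r 0⟩
  | insert i S hi ih =>
    obtain ⟨C, hC⟩ := ih
    obtain ⟨D, hD⟩ := hmf i
    obtain ⟨D', hD'⟩ := exists_hasMultiplierBound_prod (f := fun i ξ => 1 - f i ξ)
      (fun i => (hf i).imp' _ fun _ h => h.one_sub hr) S
    refine ⟨C + D * D', ?_⟩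
    convert hC.add hr (hD.mul hD') using 2 with ξ
    rw [Finset.prod_insert hi]
    ring

/-- If finitely many multipliers `f i` cover `V \ {0}` by the sets `{f i = 1}`, it is enough to
bound each `m * f i`, because `m = m * (1 - ∏ i, (1 - f i))` off the origin. -/
lemma exists_hasMultiplierBound_of_cover [Nontrivial V] {ι : Type*} [Finite ι] {f : ι → V → ℂ}
    (hr : 1 ≤ r) (hf : ∀ i, ∃ C, HasMultiplierBound r C (f i))
    (hmf : ∀ i, ∃ C, HasMultiplierBound r C fun ξ => m ξ * f i ξ)
    (hcover : ∀ ξ ≠ 0, ∃ i, f i ξ = 1) : ∃ C, HasMultiplierBound r C m := by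
  cases nonempty_fintype ι
  obtain ⟨C, hC⟩ := exists_hasMultiplierBound_mul_one_sub_prod hr hf hmf Finset.univ
  have heq : ∀ ξ ≠ 0, m ξ = m ξ * (1 - ∏ i, (1 - f i ξ)) := fun ξ hξ => by
    obtain ⟨i, hi⟩ := hcover ξ hξ
    rw [Finset.prod_eq_zero (Finset.mem_univ i) (by rw [hi, sub_self]), sub_zero, mul_one]
  refine ⟨C + ‖m 0‖₊, (hC.mono le_self_add).congr_ae ?_ fun ξ => ?_⟩
  · filter_upwards [volume.ae_ne 0] with ξ hξ using heq ξ hξ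
  · rcases eq_or_ne ξ 0 with rfl | hξ
    · simp
    · rw [heq ξ hξ, NNReal.coe_add]
      exact (hC.norm_le ξ).trans (le_add_of_nonneg_right (NNReal.coe_nonneg _))

/-- On the cone, homogeneity reduces `m` to its values on the affine plane `⟨c, ξ⟩ = 1`. -/
lemma IsHomogeneousSymbol.exists_hasMultiplierBound_mul_cone (hm : IsHomogeneousSymbol 0 m)
    (hr : 1 ≤ r) (hrt : r ≠ ∞) (hK : ∀ θ : V, HasMultiplierBound r K (halfSpaceIndicator θ))
    {a b c : V} (hne : ∀ s t : ℝ, c + s • a + t • b ≠ 0)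
    (hexpand : ∀ ξ, ξ = inner ℝ c ξ • c + inner ℝ a ξ • a + inner ℝ b ξ • b) :
    ∃ C, HasMultiplierBound r C fun ξ => m ξ * (coneIndicator a c ξ * coneIndicator b c ξ) := by
  have hG : ContDiff ℝ 2 fun z : ℝ × ℝ => m (c + z.1 • a + z.2 • b) :=
    contDiff_iff_contDiffAt.2 fun z =>
      (hm.contDiffOn.contDiffAt (isOpen_compl_singleton.mem_nhds (hne z.1 z.2))).comp z
        (by fun_prop)
  obtain ⟨C, hC⟩ := exists_hasMultiplierBound_cone_mul_cone hr hrt hK a b c hG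
  refine ⟨C, ?_⟩
  convert hC using 2 with ξ
  by_cases hξ : 0 < inner ℝ c ξ
  · have hproj : m ξ =
        m (c + (inner ℝ a ξ / inner ℝ c ξ) • a + (inner ℝ b ξ / inner ℝ c ξ) • b) := by
      have hξ0 : ξ ≠ 0 := by
        rintro rfl
        simp at hξ
      have hscale : c + (inner ℝ a ξ / inner ℝ c ξ) • a + (inner ℝ b ξ / inner ℝ c ξ) • b =
          (inner ℝ c ξ)⁻¹ • ξ := by
        rw [eq_inv_smul_iff₀ hξ.ne', smul_add, smul_add, smul_smul, smul_smul,
          mul_div_cancel₀ _ hξ.ne', mul_div_cancel₀ _ hξ.ne']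
        exact (hexpand ξ).symm
      rw [hscale, hm.map_smul _ (inv_pos.2 hξ) ξ hξ0, zpow_zero, one_smul]
    rw [← hproj]
    ring
  · simp only [coneIndicator, hξ, false_and, if_false, zero_mul, mul_zero]

/-- The indicator function of the set where the coordinate `i.1` has the largest absolute value
and the sign prescribed by `i.2`. -/
noncomputable def faceIndicator (i : Fin 3 × Bool) (ξ : EuclideanSpace ℝ (Fin 3)) : ℂ :=
  coneIndicator (.single (i.1 + 1) 1) (.single i.1 (if i.2 then 1 else -1)) ξ *
    coneIndicator (.single (i.1 + 2) 1) (.single i.1 (if i.2 then 1 else -1)) ξ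

lemma exists_faceIndicator_eq_one {ξ : EuclideanSpace ℝ (Fin 3)} (hξ : ξ ≠ 0) :
    ∃ i, faceIndicator i ξ = 1 := by
  obtain ⟨k, hk⟩ := Finite.exists_max fun k => |ξ k|
  have hpos : 0 < |ξ k| := by
    by_contra! hle
    exact hξ (PiLp.ext fun j => abs_nonpos_iff.1 ((hk j).trans hle))
  have hsign : ∃ σ : Bool, (if σ then (1 : ℝ) else -1) * ξ k = |ξ k| := by
    rcases abs_choice (ξ k) with h | h
    · exact ⟨true, by simp [h]⟩
    · exact ⟨false, by simp [h]⟩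
  obtain ⟨σ, hσ⟩ := hsign
  refine ⟨(k, σ), ?_⟩
  simp only [faceIndicator, coneIndicator, EuclideanSpace.inner_single_left, conj_trivial, hσ,
    one_mul, hpos, hk, and_self, if_true]

lemma exists_hasMultiplierBound_mul_faceIndicator {m : EuclideanSpace ℝ (Fin 3) → ℂ}
    (hm : IsHomogeneousSymbol 0 m) (hr : 1 ≤ r) (hrt : r ≠ ∞)
    (hK : ∀ θ : EuclideanSpace ℝ (Fin 3), HasMultiplierBound r K (halfSpaceIndicator θ))
    (i : Fin 3 × Bool) : ∃ C, HasMultiplierBound r C fun ξ => m ξ * faceIndicator i ξ := by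
  obtain ⟨k, σ⟩ := i
  have hk : k ≠ k + 1 ∧ k ≠ k + 2 ∧ k + 1 ≠ k + 2 := by fin_cases k <;> decide
  have hσ : (if σ then (1 : ℝ) else -1) * (if σ then 1 else -1) = 1 := by split_ifs <;> norm_num
  refine hm.exists_hasMultiplierBound_mul_cone hr hrt hK (fun s t h => ?_) fun ξ => ?_
  · have h0 : (if σ then (1 : ℝ) else -1) = 0 := by
      simpa [hk.1, hk.2.1] using congrArg (fun v : EuclideanSpace ℝ (Fin 3) => v k) h
    simp [h0] at hσ
  · ext j
    have hj : j = k ∨ j = k + 1 ∨ j = k + 2 := by fin_cases k <;> fin_cases j <;> decide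
    simp only [EuclideanSpace.inner_single_left, conj_trivial, PiLp.add_apply, PiLp.smul_apply,
      PiLp.single_apply, smul_eq_mul, one_mul]
    rcases hj with rfl | rfl | rfl
    · simp only [hk, if_true, if_false]
      linear_combination -ξ j * hσ
    · simp [hk.1.symm, hk.2.2]
    · simp [hk.2.1.symm, hk.2.2.symm]

lemma IsHomogeneousSymbol.exists_hasMultiplierBound {m : EuclideanSpace ℝ (Fin 3) → ℂ}
    (hm : IsHomogeneousSymbol 0 m) (k : ℕ) : ∃ C, HasMultiplierBound (2 ^ (k + 1)) C m := by
  obtain ⟨K, hK⟩ := exists_hasMultiplierBound_halfSpaceIndicator (EuclideanSpace ℝ (Fin 3)) k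
  have hr : (1 : ℝ≥0∞) ≤ 2 ^ (k + 1) := one_le_pow₀ one_le_two
  have hrt : (2 ^ (k + 1) : ℝ≥0∞) ≠ ∞ := ENNReal.pow_ne_top ENNReal.ofNat_ne_top
  exact exists_hasMultiplierBound_of_cover hr
    (fun _ => ⟨_, (hasMultiplierBound_coneIndicator hr hK _ _).mul
      (hasMultiplierBound_coneIndicator hr hK _ _)⟩)
    (exists_hasMultiplierBound_mul_faceIndicator hm hr hrt hK)
    fun _ => exists_faceIndicator_eq_one

end HomogeneousMultipliers

section RealInterpolation

lemma setLIntegral_Iio_rpow {s u : ℝ} (hs : 0 < s) (hu : 0 ≤ u) :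
    ∫⁻ t in Set.Iio u, ENNReal.ofReal (t ^ (s - 1)) ∂volume.restrict (Set.Ioi 0) =
      ENNReal.ofReal (u ^ s / s) := by
  rw [Measure.restrict_restrict measurableSet_Iio, Set.Iio_inter_Ioi,
    restrict_Ioo_eq_restrict_Ioc, ← ofReal_integral_eq_lintegral_ofReal
      (intervalIntegral.intervalIntegrable_rpow' (by linarith)).1,
    ← intervalIntegral.integral_of_le hu, integral_rpow (Or.inl (by linarith)),
    sub_add_cancel, Real.zero_rpow hs.ne', sub_zero]
  filter_upwards [ae_restrict_mem measurableSet_Ioc] with t ht using Real.rpow_nonneg ht.1.le _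

lemma setLIntegral_Ici_rpow {s u : ℝ} (hs : 0 < s) (hu : 0 < u) :
    ∫⁻ t in Set.Ici u, ENNReal.ofReal (t ^ (-s - 1)) ∂volume.restrict (Set.Ioi 0) =
      ENNReal.ofReal (u ^ (-s) / s) := by
  rw [Measure.restrict_restrict measurableSet_Ici,
    Set.inter_eq_left.2 (Set.Ici_subset_Ioi.2 hu), Measure.restrict_congr_set Ioi_ae_eq_Ici.symm,
    ← ofReal_integral_eq_lintegral_ofReal (integrableOn_Ioi_rpow_of_lt (by linarith) hu),
    integral_Ioi_rpow_of_lt (by linarith) hu, sub_add_cancel, neg_div_neg_eq]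
  filter_upwards [ae_restrict_mem measurableSet_Ioi] with t ht
    using Real.rpow_nonneg (hu.trans ht).le _

lemma enorm_rpow_mul_ofReal {F : Type*} [NormedAddCommGroup F] {y : F} (hy : y ≠ 0) {c : ℝ}
    (hc : 0 ≤ c) (q s : ℝ) :
    ‖y‖ₑ ^ q * ENNReal.ofReal (c * ‖y‖ ^ s) = ENNReal.ofReal c * ‖y‖ₑ ^ (q + s) := by
  rw [ENNReal.ofReal_mul hc, ← ENNReal.ofReal_rpow_of_pos (norm_pos_iff.2 hy), ofReal_norm,
    mul_left_comm, ENNReal.rpow_add _ _ (enorm_ne_zero.2 hy) enorm_ne_top]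

variable {α F : Type*} {mα : MeasurableSpace α} {μ : Measure α} [NormedAddCommGroup F] {f : α → F}

lemma meas_half_le_norm_le {F' : Type*} [NormedAddCommGroup F'] {g : α → F'} {q K : ℝ≥0}
    (hq : q ≠ 0) (hg : AEStronglyMeasurable g μ) {S : Set α} (hS : MeasurableSet S)
    (h : eLpNorm g q μ ≤ K * eLpNorm (S.indicator f) q μ) {t : ℝ} (ht : 0 < t) :
    μ {x | t / 2 ≤ ‖g x‖} ≤ ((2 * K) ^ (q : ℝ) : ℝ≥0) *
      (ENNReal.ofReal (t ^ (-(q : ℝ))) * ∫⁻ x in S, ‖f x‖ₑ ^ (q : ℝ) ∂μ) := by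
  have hf : eLpNorm (S.indicator f) q μ ^ (q : ℝ) = ∫⁻ x in S, ‖f x‖ₑ ^ (q : ℝ) ∂μ := by
    rw [eLpNorm_indicator_eq_eLpNorm_restrict hS, eLpNorm_nnreal_pow_eq_lintegral hq]
  have hset : {x | t / 2 ≤ ‖g x‖} = {x | ENNReal.ofReal (t / 2) ≤ ‖g x‖ₑ} := by
    ext x
    rw [Set.mem_ofPred_eq, Set.mem_ofPred_eq, ← ofReal_norm,
      ENNReal.ofReal_le_ofReal_iff (norm_nonneg _)]
  have hinv : (ENNReal.ofReal (t / 2))⁻¹ ^ (q : ℝ) =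
      2 ^ (q : ℝ) * ENNReal.ofReal (t ^ (-(q : ℝ))) := by
    rw [← ENNReal.ofReal_inv_of_pos (half_pos ht), inv_div, div_eq_mul_inv,
      ENNReal.ofReal_mul zero_le_two, ENNReal.mul_rpow_of_nonneg _ _ q.coe_nonneg,
      ENNReal.ofReal_rpow_of_nonneg (inv_nonneg.2 ht.le) q.coe_nonneg, Real.inv_rpow ht.le,
      Real.rpow_neg ht.le, ENNReal.ofReal_ofNat]
  calc μ {x | t / 2 ≤ ‖g x‖}
      ≤ (ENNReal.ofReal (t / 2))⁻¹ ^ (q : ℝ) * eLpNorm g q μ ^ (q : ℝ) := by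
        rw [hset]
        exact meas_ge_le_mul_pow_eLpNorm_enorm μ (ENNReal.coe_ne_zero.2 hq) ENNReal.coe_ne_top hg
          (by simpa using ht) (by simp)
    _ ≤ 2 ^ (q : ℝ) * ENNReal.ofReal (t ^ (-(q : ℝ))) *
          (K ^ (q : ℝ) * eLpNorm (S.indicator f) q μ ^ (q : ℝ)) := by
        rw [hinv, ← ENNReal.mul_rpow_of_nonneg _ _ q.coe_nonneg]
        gcongr
    _ = _ := by
        rw [hf, ENNReal.coe_rpow_of_nonneg _ q.coe_nonneg, ENNReal.coe_mul,
          ENNReal.mul_rpow_of_nonneg _ _ q.coe_nonneg, ENNReal.coe_ofNat]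
        ring

variable [SFinite μ]

lemma lintegral_mul_setLIntegral_swap {β : Type*} {mβ : MeasurableSpace β} {ν : Measure β}
    [SFinite ν] {R : β → α → Prop} (hR : MeasurableSet {z : β × α | R z.1 z.2}) {w : β → ℝ≥0∞}
    {h : α → ℝ≥0∞} (hw : Measurable w) (hh : Measurable h) :
    ∫⁻ t, w t * ∫⁻ x in {x | R t x}, h x ∂μ ∂ν = ∫⁻ x, h x * ∫⁻ t in {t | R t x}, w t ∂ν ∂μ := by
  let G : β × α → ℝ≥0∞ := {z | R z.1 z.2}.indicator fun z => w z.1 * h z.2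
  have hG : Measurable G := ((hw.comp measurable_fst).mul (hh.comp measurable_snd)).indicator hR
  calc ∫⁻ t, w t * ∫⁻ x in {x | R t x}, h x ∂μ ∂ν
      = ∫⁻ t, ∫⁻ x, G (t, x) ∂μ ∂ν := lintegral_congr fun t => by
        rw [← lintegral_const_mul _ hh]
        exact (lintegral_indicator (measurable_prodMk_left hR) _).symm
    _ = ∫⁻ x, ∫⁻ t, G (t, x) ∂ν ∂μ := lintegral_lintegral_swap hG.aemeasurable
    _ = ∫⁻ x, h x * ∫⁻ t in {t | R t x}, w t ∂ν ∂μ := lintegral_congr fun x => by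
        rw [← lintegral_const_mul _ hw, ← funext fun t => mul_comm (w t) (h x)]
        exact lintegral_indicator (measurable_prodMk_right hR) _

lemma lintegral_rpow_mul_setLIntegral_lt (hf : StronglyMeasurable f) {q r : ℝ} (hq : 0 < q)
    (hqr : q < r) :
    ∫⁻ t in Set.Ioi (0 : ℝ), ENNReal.ofReal (t ^ (r - 1 - q)) *
        ∫⁻ x in {x | t < ‖f x‖}, ‖f x‖ₑ ^ q ∂μ =
      ENNReal.ofReal (r - q)⁻¹ * ∫⁻ x, ‖f x‖ₑ ^ r ∂μ := by
  have hs : 0 < r - q := sub_pos.2 hqr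
  rw [lintegral_mul_setLIntegral_swap (R := fun (t : ℝ) x => t < ‖f x‖)
    (measurableSet_lt measurable_fst (hf.norm.measurable.comp measurable_snd)) (by fun_prop)
    (hf.enorm.pow_const q), ← lintegral_const_mul _ (hf.enorm.pow_const r)]
  refine lintegral_congr fun x => ?_
  rcases eq_or_ne (f x) 0 with hx | hx
  · simp [hx, hq, hq.trans hqr]
  · have h := setLIntegral_Iio_rpow hs (norm_nonneg (f x))
    rw [sub_right_comm] at h
    change ‖f x‖ₑ ^ q * ∫⁻ t in Set.Iio ‖f x‖, _ ∂_ = _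
    rw [h, div_eq_inv_mul, enorm_rpow_mul_ofReal hx (inv_nonneg.2 hs.le), add_sub_cancel]

lemma lintegral_rpow_mul_setLIntegral_le (hf : StronglyMeasurable f) {q r : ℝ} (hr : 0 < r)
    (hrq : r < q) :
    ∫⁻ t in Set.Ioi (0 : ℝ), ENNReal.ofReal (t ^ (r - 1 - q)) *
        ∫⁻ x in {x | ‖f x‖ ≤ 2 * t}, ‖f x‖ₑ ^ q ∂μ =
      ENNReal.ofReal (2 ^ (q - r) / (q - r)) * ∫⁻ x, ‖f x‖ₑ ^ r ∂μ := by
  have hs : 0 < q - r := sub_pos.2 hrq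
  rw [lintegral_mul_setLIntegral_swap (R := fun (t : ℝ) x => ‖f x‖ ≤ 2 * t)
    (measurableSet_le (hf.norm.measurable.comp measurable_snd) (by fun_prop)) (by fun_prop)
    (hf.enorm.pow_const q), ← lintegral_const_mul _ (hf.enorm.pow_const r)]
  refine lintegral_congr fun x => ?_
  rcases eq_or_ne (f x) 0 with hx | hx
  · simp [hx, hr, hr.trans hrq]
  · have h := setLIntegral_Ici_rpow hs (half_pos (norm_pos_iff.2 hx))
    have hset : {t : ℝ | ‖f x‖ ≤ 2 * t} = Set.Ici (‖f x‖ / 2) :=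
      Set.ext fun t => (div_le_iff₀' (two_pos (α := ℝ))).symm
    rw [hset, show r - 1 - q = -(q - r) - 1 by ring, h, Real.div_rpow (norm_nonneg _) two_pos.le,
      Real.rpow_neg two_pos.le, div_inv_eq_mul, mul_comm (‖f x‖ ^ (-(q - r))), mul_div_right_comm,
      enorm_rpow_mul_ofReal hx (by positivity), neg_sub, add_sub_cancel]

lemma lintegral_rpow_le_of_distribution_le {F' : Type*} [NormedAddCommGroup F'] {g : α → F'}
    (hf : StronglyMeasurable f) (hg : AEStronglyMeasurable g μ) {q₀ r q₁ : ℝ} (h₀ : 0 < q₀)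
    (h₀r : q₀ < r) (hr₁ : r < q₁) {C₀ C₁ : ℝ≥0}
    (h : ∀ t : ℝ, 0 < t → μ {x | t ≤ ‖g x‖} ≤
      C₀ * (ENNReal.ofReal (t ^ (-q₀)) * ∫⁻ x in {x | t < ‖f x‖}, ‖f x‖ₑ ^ q₀ ∂μ) +
      C₁ * (ENNReal.ofReal (t ^ (-q₁)) * ∫⁻ x in {x | ‖f x‖ ≤ 2 * t}, ‖f x‖ₑ ^ q₁ ∂μ)) :
    ∫⁻ x, ‖g x‖ₑ ^ r ∂μ ≤ ENNReal.ofReal r * (C₀ * ENNReal.ofReal (r - q₀)⁻¹ +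
      C₁ * ENNReal.ofReal (2 ^ (q₁ - r) / (q₁ - r))) * ∫⁻ x, ‖f x‖ₑ ^ r ∂μ := by
  have hr : 0 < r := h₀.trans h₀r
  have hlayer : ∫⁻ x, ‖g x‖ₑ ^ r ∂μ = ENNReal.ofReal r * ∫⁻ t in Set.Ioi (0 : ℝ),
      μ {x | t ≤ ‖g x‖} * ENNReal.ofReal (t ^ (r - 1)) := by
    rw [← lintegral_rpow_eq_lintegral_meas_le_mul μ (.of_forall fun x => norm_nonneg (g x))
      hg.norm.aemeasurable hr]
    simp only [← ENNReal.ofReal_rpow_of_nonneg (norm_nonneg _) hr.le, ofReal_norm]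
  have hpow {t : ℝ} (ht : 0 < t) (q : ℝ) : ENNReal.ofReal (t ^ (r - 1 - q)) =
      ENNReal.ofReal (t ^ (-q)) * ENNReal.ofReal (t ^ (r - 1)) := by
    rw [← ENNReal.ofReal_mul (Real.rpow_nonneg ht.le _), ← Real.rpow_add ht, neg_add_eq_sub]
  have hmeas : Measurable fun t : ℝ => C₀ * (ENNReal.ofReal (t ^ (r - 1 - q₀)) *
      ∫⁻ x in {x | t < ‖f x‖}, ‖f x‖ₑ ^ q₀ ∂μ) := by
    refine .const_mul (.mul (by fun_prop) (Antitone.measurable fun s t hst => ?_)) _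
    exact lintegral_mono_set fun x hx => lt_of_le_of_lt hst hx
  rw [hlayer, mul_assoc, add_mul, mul_assoc, mul_assoc,
    ← lintegral_rpow_mul_setLIntegral_lt hf h₀ h₀r, ← lintegral_rpow_mul_setLIntegral_le hf hr hr₁,
    ← lintegral_const_mul' _ _ ENNReal.coe_ne_top, ← lintegral_const_mul' _ _ ENNReal.coe_ne_top,
    ← lintegral_add_left hmeas]
  gcongr 1
  refine setLIntegral_mono' measurableSet_Ioi fun t ht => ?_
  rw [hpow ht, hpow ht]
  refine (mul_le_mul_left (h t ht) _).trans_eq ?_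
  ring

/-- In Marcinkiewicz's theorem the linear operator `f ↦ g` enters only through the pieces `g₀`, `g₁`
of `g`, the images of the truncations of `f` at height `t`. -/
theorem exists_eLpNorm_le_of_truncation {F' : Type*} [NormedAddCommGroup F'] {q₀ r q₁ : ℝ≥0}
    (h₀ : 0 < q₀) (h₀r : q₀ < r) (hr₁ : r < q₁) (K₀ K₁ : ℝ≥0) (μ : Measure α) [SFinite μ] :
    ∃ C : ℝ≥0, ∀ {f : α → F} {g : α → F'}, StronglyMeasurable f →
      (∀ t : ℝ, 0 < t → ∃ g₀ g₁ : α → F', g = g₀ + g₁ ∧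
        AEStronglyMeasurable g₀ μ ∧ AEStronglyMeasurable g₁ μ ∧
        eLpNorm g₀ q₀ μ ≤ K₀ * eLpNorm ({x | t < ‖f x‖}.indicator f) q₀ μ ∧
        eLpNorm g₁ q₁ μ ≤ K₁ * eLpNorm ({x | ‖f x‖ ≤ 2 * t}.indicator f) q₁ μ) →
      eLpNorm g r μ ≤ C * eLpNorm f r μ := by
  have hr : r ≠ 0 := (h₀.trans h₀r).ne'
  let D : ℝ≥0 := (r : ℝ).toNNReal * ((2 * K₀) ^ (q₀ : ℝ) * ((r : ℝ) - q₀)⁻¹.toNNReal +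
    (2 * K₁) ^ (q₁ : ℝ) * (2 ^ ((q₁ : ℝ) - r) / ((q₁ : ℝ) - r)).toNNReal)
  refine ⟨D ^ ((r : ℝ)⁻¹), fun {f g} hf h => ?_⟩
  have hg : AEStronglyMeasurable g μ := by
    obtain ⟨g₀, g₁, rfl, hg₀, hg₁, -⟩ := h 1 one_pos
    exact hg₀.add hg₁
  have hD : ∫⁻ x, ‖g x‖ₑ ^ (r : ℝ) ∂μ ≤ D * ∫⁻ x, ‖f x‖ₑ ^ (r : ℝ) ∂μ := by
    refine lintegral_rpow_le_of_distribution_le hf hg (C₀ := (2 * K₀) ^ (q₀ : ℝ))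
      (C₁ := (2 * K₁) ^ (q₁ : ℝ)) (NNReal.coe_pos.2 h₀) (NNReal.coe_lt_coe.2 h₀r)
      (NNReal.coe_lt_coe.2 hr₁) fun t ht => ?_
    obtain ⟨g₀, g₁, rfl, hg₀, hg₁, hK₀, hK₁⟩ := h t ht
    have hsub : {x | t ≤ ‖(g₀ + g₁) x‖} ⊆ {x | t / 2 ≤ ‖g₀ x‖} ∪ {x | t / 2 ≤ ‖g₁ x‖} := by
      intro x hx
      by_contra! hlt
      simp only [Set.mem_union, Set.mem_ofPred_eq, not_or, not_le] at hlt
      exact absurd (hx.trans (norm_add_le _ _)) (by linarith)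
    refine (measure_mono hsub).trans ((measure_union_le _ _).trans (add_le_add ?_ ?_))
    · exact meas_half_le_norm_le h₀.ne' hg₀
        (measurableSet_lt measurable_const hf.norm.measurable) hK₀ ht
    · exact meas_half_le_norm_le (h₀.trans (h₀r.trans hr₁)).ne' hg₁
        (measurableSet_le hf.norm.measurable measurable_const) hK₁ ht
  have hr' : (0 : ℝ) < r := NNReal.coe_pos.2 (h₀.trans h₀r)
  rwa [← ENNReal.rpow_le_rpow_iff hr', ENNReal.mul_rpow_of_nonneg _ _ hr'.le,
    eLpNorm_nnreal_pow_eq_lintegral hr, eLpNorm_nnreal_pow_eq_lintegral hr,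
    ENNReal.coe_rpow_of_nonneg _ (inv_nonneg.2 hr'.le), ENNReal.rpow_inv_rpow hr'.ne']

end RealInterpolation

section TestFunctions

open scoped ContDiff

variable {V : Type*} [NormedAddCommGroup V] [NormedSpace ℝ V] {f g : V → ℂ}

/-- Smooth compactly supported complex functions, on which Fourier multiplier operators act. -/
structure IsTestFunction (f : V → ℂ) : Prop where
  contDiff : ContDiff ℝ ∞ f
  hasCompactSupport : HasCompactSupport f

namespace IsTestFunction

lemma mul_left (hf : IsTestFunction f) (hg : ContDiff ℝ ∞ g) :
    IsTestFunction fun x => g x * f x :=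
  ⟨hg.mul hf.contDiff, hf.hasCompactSupport.mul_left⟩

lemma sub (hf : IsTestFunction f) (hg : IsTestFunction g) : IsTestFunction fun x => f x - g x :=
  ⟨hf.contDiff.sub hg.contDiff, hf.hasCompactSupport.sub hg.hasCompactSupport⟩

lemma sum {ρ : Type*} {s : Finset ρ} {f : ρ → V → ℂ} (hf : ∀ i ∈ s, IsTestFunction (f i)) :
    IsTestFunction fun x => ∑ i ∈ s, f i x where
  contDiff := ContDiff.sum fun i hi => (hf i hi).contDiff
  hasCompactSupport := by
    rw [← Finset.sum_fn]
    exact Finset.sum_induction f HasCompactSupport (fun _ _ => .add) .zero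
      fun i hi => (hf i hi).hasCompactSupport

lemma fderiv_apply (hf : IsTestFunction f) (v : V) : IsTestFunction fun x => fderiv ℝ f x v :=
  ⟨(hf.contDiff.fderiv_right (m := ∞) le_rfl).clm_apply contDiff_const,
    (hf.hasCompactSupport.fderiv (𝕜 := ℝ)).comp_left (g := fun L : V →L[ℝ] ℂ => L v) rfl⟩

lemma exists_truncation (hf : IsTestFunction f) {t : ℝ} (ht : 0 < t) :
    ∃ f₀ f₁ : V → ℂ, IsTestFunction f₀ ∧ IsTestFunction f₁ ∧ f = f₀ + f₁ ∧
      (∀ x, ‖f₀ x‖ ≤ ‖{x | t < ‖f x‖}.indicator f x‖) ∧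
      ∀ x, ‖f₁ x‖ ≤ ‖{x | ‖f x‖ ≤ 2 * t}.indicator f x‖ := by
  let χ : V → ℝ := fun x => Real.smoothTransition (2 - ‖f x‖ ^ 2 / t ^ 2)
  have hχ : ContDiff ℝ ∞ fun x => (χ x : ℂ) := Complex.ofRealCLM.contDiff.comp <|
    Real.smoothTransition.contDiff.comp (contDiff_const.sub ((hf.contDiff.norm_sq ℝ).div_const _))
  have hχ₀ (x : V) : 0 ≤ χ x := Real.smoothTransition.nonneg _
  have hχ₁ (x : V) : χ x ≤ 1 := Real.smoothTransition.le_one _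
  refine ⟨fun x => (1 - (χ x : ℂ)) * f x, fun x => (χ x : ℂ) * f x,
    hf.mul_left (contDiff_const.sub hχ), hf.mul_left hχ, ?_, fun x => ?_, fun x => ?_⟩
  · ext x
    simp only [Pi.add_apply]
    ring
  · rw [norm_mul, ← Complex.ofReal_one, ← Complex.ofReal_sub, Complex.norm_real,
      Real.norm_of_nonneg (sub_nonneg.2 (hχ₁ x))]
    by_cases hx : t < ‖f x‖
    · rw [Set.indicator_of_mem (show x ∈ {x | t < ‖f x‖} from hx)]
      exact mul_le_of_le_one_left (norm_nonneg _) (sub_le_self _ (hχ₀ x))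
    · have hle : ‖f x‖ ^ 2 / t ^ 2 ≤ 1 :=
        (div_le_one (by positivity)).2 (by gcongr; exact not_lt.1 hx)
      rw [show χ x = 1 from Real.smoothTransition.one_of_one_le (by linarith), sub_self, zero_mul]
      exact norm_nonneg _
  · rw [norm_mul, Complex.norm_real, Real.norm_of_nonneg (hχ₀ x)]
    by_cases hx : ‖f x‖ ≤ 2 * t
    · rw [Set.indicator_of_mem (show x ∈ {x | ‖f x‖ ≤ 2 * t} from hx)]
      exact mul_le_of_le_one_left (norm_nonneg _) (hχ₁ x)
    · have hle : 2 ≤ ‖f x‖ ^ 2 / t ^ 2 := (le_div_iff₀ (by positivity)).2 (by nlinarith)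
      rw [show χ x = 0 from Real.smoothTransition.zero_of_nonpos (by linarith), zero_mul]
      exact norm_nonneg _

end IsTestFunction

end TestFunctions

section MultiplierOperators

open scoped ContDiff

variable {V : Type*} [NormedAddCommGroup V] [InnerProductSpace ℝ V] [FiniteDimensional ℝ V]
  [MeasurableSpace V] [BorelSpace V] {m f g h : V → ℂ}

/-- Bounded measurable functions, the symbols of Fourier multiplier operators. -/
structure IsBoundedSymbol (m : V → ℂ) : Prop where
  aestronglyMeasurable : AEStronglyMeasurable m volume
  bounded : ∃ B : ℝ, ∀ ξ, ‖m ξ‖ ≤ B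

/-- The Fourier multiplier operator `f ↦ 𝓕 (m 𝓕⁻ f)`. With this order of the two transforms it has
the symbol `m (-ξ)` in the usual convention `f ↦ 𝓕⁻ (m 𝓕 f)`. -/
noncomputable def multiplierOp (m f : V → ℂ) : V → ℂ := 𝓕 fun ξ => m ξ * 𝓕⁻ f ξ

lemma integrableBounded_schwartz (φ : 𝓢(V, ℂ)) : IntegrableBounded φ :=
  ⟨φ.integrable, _, φ.norm_le_seminorm ℝ⟩

namespace IsTestFunction

lemma exists_schwartz_eq_fourierInv (hf : IsTestFunction f) :
    ∃ φ : 𝓢(V, ℂ), ⇑φ = 𝓕⁻ f ∧ 𝓕 ⇑φ = f := by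
  let F : 𝓢(V, ℂ) := hf.hasCompactSupport.toSchwartzMap hf.contDiff
  exact ⟨𝓕⁻ F, SchwartzMap.fourierInv_coe F, by
    rw [← SchwartzMap.fourier_coe, FourierTransform.fourier_fourierInv_eq]; rfl⟩

lemma integrableBounded (hf : IsTestFunction f) : IntegrableBounded f :=
  integrableBounded_schwartz (hf.hasCompactSupport.toSchwartzMap hf.contDiff)

lemma integrableBounded_fourierInv (hf : IsTestFunction f) : IntegrableBounded (𝓕⁻ f) := by
  obtain ⟨φ, hφ, -⟩ := hf.exists_schwartz_eq_fourierInv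
  exact hφ ▸ integrableBounded_schwartz φ

lemma fourier_fourierInv (hf : IsTestFunction f) : 𝓕 (𝓕⁻ f) = f := by
  obtain ⟨φ, hφ, hφf⟩ := hf.exists_schwartz_eq_fourierInv
  rw [← hφ, hφf]

lemma fourierInv_add (hf : IsTestFunction f) (hg : IsTestFunction g) :
    𝓕⁻ (f + g) = 𝓕⁻ f + 𝓕⁻ g :=
  VectorFourier.fourierIntegral_add (L := -innerₗ V) (μ := volume) Real.continuous_fourierChar
    (by simp only [LinearMap.neg_apply, innerₗ_apply_apply]; fun_prop)
    hf.integrableBounded.integrable hg.integrableBounded.integrable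

end IsTestFunction

lemma HasMultiplierBound.isBoundedSymbol {r : ℝ≥0∞} {K : ℝ≥0} (hm : HasMultiplierBound r K m) :
    IsBoundedSymbol m :=
  ⟨hm.aestronglyMeasurable, K, hm.norm_le⟩

lemma HasMultiplierBound.eLpNorm_multiplierOp_le {r : ℝ≥0∞} {K : ℝ≥0}
    (hm : HasMultiplierBound r K m) (hf : IsTestFunction f) :
    eLpNorm (multiplierOp m f) r volume ≤ K * eLpNorm f r volume := by
  simpa only [multiplierOp, hf.fourier_fourierInv] using
    hm.eLpNorm_le _ hf.integrableBounded_fourierInv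

namespace IsBoundedSymbol

lemma integrable_mul_fourierInv (hm : IsBoundedSymbol m) (hf : IsTestFunction f) :
    Integrable fun ξ => m ξ * 𝓕⁻ f ξ := by
  obtain ⟨B, hB⟩ := hm.bounded
  exact (hf.integrableBounded_fourierInv.mul_left hm.aestronglyMeasurable hB).integrable

lemma multiplierOp_add (hm : IsBoundedSymbol m) (hf : IsTestFunction f) (hg : IsTestFunction g) :
    multiplierOp m (f + g) = multiplierOp m f + multiplierOp m g := by
  simp only [multiplierOp, hf.fourierInv_add hg, Pi.add_apply, mul_add]
  exact fourier_add (hm.integrable_mul_fourierInv hf) (hm.integrable_mul_fourierInv hg)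

lemma integrable_pow_mul_norm_mul_fourierInv (hm : IsBoundedSymbol m) (hf : IsTestFunction f)
    (n : ℕ) : Integrable fun ξ => ‖ξ‖ ^ n * ‖m ξ * 𝓕⁻ f ξ‖ := by
  obtain ⟨φ, hφ, -⟩ := hf.exists_schwartz_eq_fourierInv
  obtain ⟨B, hB⟩ := hm.bounded
  have hint := (φ.integrable_pow_mul volume n).bdd_mul (c := B) hm.aestronglyMeasurable.norm
    (.of_forall fun ξ => by simpa only [norm_norm] using hB ξ)
  simpa only [← hφ, norm_mul, mul_left_comm] using hint

lemma contDiff_multiplierOp (hm : IsBoundedSymbol m) (hf : IsTestFunction f) :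
    ContDiff ℝ ∞ (multiplierOp m f) :=
  Real.contDiff_fourier (N := ⊤) fun n _ => hm.integrable_pow_mul_norm_mul_fourierInv hf n

lemma integral_multiplierOp_mul (hm : IsBoundedSymbol m) (hm' : IsBoundedSymbol fun ξ => m (-ξ))
    (hf : IsTestFunction f) (hh : IsTestFunction h) :
    ∫ x, multiplierOp m f x * h x = ∫ x, f x * multiplierOp (fun ξ => m (-ξ)) h x := by
  simp only [mul_comm (f _)]
  rw [multiplierOp, multiplierOp,
    integral_fourier_mul_eq (hm.integrable_mul_fourierInv hf) hh.integrableBounded.integrable,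
    integral_fourier_mul_eq (hm'.integrable_mul_fourierInv hh) hf.integrableBounded.integrable,
    ← integral_neg_eq_self]
  congr 1 with ξ
  rw [Real.fourierInv_eq_fourier_neg, Real.fourierInv_eq_fourier_neg, neg_neg]
  ring

end IsBoundedSymbol

lemma HasMultiplierBound.exists_eLpNorm_multiplierOp_le {q₀ r q₁ K₀ K₁ : ℝ≥0} (h₀ : 0 < q₀)
    (h₀r : q₀ < r) (hr₁ : r < q₁) (hm₀ : HasMultiplierBound q₀ K₀ m)
    (hm₁ : HasMultiplierBound q₁ K₁ m) :
    ∃ C : ℝ≥0, ∀ f, IsTestFunction f →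
      eLpNorm (multiplierOp m f) r volume ≤ C * eLpNorm f r volume := by
  obtain ⟨C, hC⟩ := exists_eLpNorm_le_of_truncation (F := ℂ) (F' := ℂ) h₀ h₀r hr₁ K₀ K₁
    (volume : Measure V)
  refine ⟨C, fun f hf => hC hf.contDiff.continuous.stronglyMeasurable fun t ht => ?_⟩
  obtain ⟨f₀, f₁, hf₀, hf₁, rfl, hle₀, hle₁⟩ := hf.exists_truncation ht
  have hm := hm₀.isBoundedSymbol
  refine ⟨multiplierOp m f₀, multiplierOp m f₁, hm.multiplierOp_add hf₀ hf₁,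
    (hm.contDiff_multiplierOp hf₀).continuous.aestronglyMeasurable,
    (hm.contDiff_multiplierOp hf₁).continuous.aestronglyMeasurable,
    (hm₀.eLpNorm_multiplierOp_le hf₀).trans ?_, (hm₁.eLpNorm_multiplierOp_le hf₁).trans ?_⟩
  · gcongr
    exact eLpNorm_mono hle₀
  · gcongr
    exact eLpNorm_mono hle₁

namespace IsHomogeneousSymbol

lemma comp_neg {W F : Type*} [NormedAddCommGroup W] [NormedSpace ℝ W] [NormedAddCommGroup F]
    [NormedSpace ℝ F] {d : ℤ} {a : W → F} (ha : IsHomogeneousSymbol d a) :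
    IsHomogeneousSymbol d fun ξ => a (-ξ) where
  contDiffOn := ha.contDiffOn.comp contDiff_neg.contDiffOn fun _ hξ => neg_ne_zero.2 hξ
  map_smul t ht ξ hξ := by rw [← smul_neg, ha.map_smul t ht _ (neg_ne_zero.2 hξ)]

variable {a : EuclideanSpace ℝ (Fin 3) → ℂ}

lemma isBoundedSymbol (ha : IsHomogeneousSymbol 0 a) : IsBoundedSymbol a :=
  (ha.exists_hasMultiplierBound 0).choose_spec.isBoundedSymbol

lemma exists_eLpNorm_multiplierOp_le_of_two_le (ha : IsHomogeneousSymbol 0 a) {r : ℝ≥0}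
    (hr : 2 ≤ r) : ∃ C : ℝ≥0, ∀ f, IsTestFunction f →
      eLpNorm (multiplierOp a f) r volume ≤ C * eLpNorm f r volume := by
  obtain ⟨K₀, h₀⟩ := ha.exists_hasMultiplierBound 0
  rw [zero_add, pow_one] at h₀
  rcases hr.eq_or_lt with rfl | hr
  · exact ⟨K₀, fun f hf => h₀.eLpNorm_multiplierOp_le hf⟩
  · obtain ⟨k, hk⟩ := pow_unbounded_of_one_lt r one_lt_two
    obtain ⟨K₁, h₁⟩ := ha.exists_hasMultiplierBound k
    have hcast : (2 : ℝ≥0∞) ^ (k + 1) = ((2 ^ (k + 1) : ℝ≥0) : ℝ≥0∞) := by norm_cast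
    rw [hcast] at h₁
    exact HasMultiplierBound.exists_eLpNorm_multiplierOp_le two_pos hr
      (hk.trans (pow_lt_pow_right₀ one_lt_two k.lt_succ_self)) h₀ h₁

end IsHomogeneousSymbol

end MultiplierOperators

section Cutoff

open scoped ContDiff Topology
open Filter

variable {V : Type*} [NormedAddCommGroup V] [InnerProductSpace ℝ V] [FiniteDimensional ℝ V]

/-- Smooth cutoffs: `cutoff n` is `1` on the ball of radius `n + 1` and `0` off the ball of radius
`2 (n + 1)`. They are dilations of one bump function, so that their gradients are `O(1 / n)`. -/
noncomputable def cutoff (n : ℕ) (x : V) : ℝ :=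
  (⟨1, 2, one_pos, one_lt_two⟩ : ContDiffBump (0 : V)) (((n : ℝ) + 1)⁻¹ • x)

lemma contDiff_cutoff (n : ℕ) : ContDiff ℝ ∞ (cutoff n : V → ℝ) :=
  (ContDiffBump.contDiff _).comp (contDiff_const_smul _)

lemma hasCompactSupport_cutoff (n : ℕ) : HasCompactSupport (cutoff n : V → ℝ) :=
  (ContDiffBump.hasCompactSupport _).comp_homeomorph
    (Homeomorph.smulOfNeZero ((n : ℝ) + 1)⁻¹ (by positivity))

lemma cutoff_nonneg (n : ℕ) (x : V) : 0 ≤ cutoff n x := ContDiffBump.nonneg _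

lemma cutoff_le_one (n : ℕ) (x : V) : cutoff n x ≤ 1 := ContDiffBump.le_one _

lemma eventually_cutoff_eq_one (x : V) : ∀ᶠ n : ℕ in atTop, cutoff n x = 1 := by
  filter_upwards [eventually_ge_atTop ⌈‖x‖⌉₊] with n hn
  refine ContDiffBump.one_of_mem_closedBall _ ?_
  rw [mem_closedBall_zero_iff, norm_smul, Real.norm_of_nonneg (by positivity),
    inv_mul_le_iff₀ (by positivity), mul_one]
  exact (Nat.ceil_le.1 hn).trans (lt_add_one _).le

variable (V) in
lemma exists_norm_fderiv_cutoff_le :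
    ∃ B : ℝ≥0, ∀ (n : ℕ) (x : V), ‖fderiv ℝ (cutoff n) x‖ ≤ B * ((n : ℝ) + 1)⁻¹ := by
  let χ : ContDiffBump (0 : V) := ⟨1, 2, one_pos, one_lt_two⟩
  have hχ : ContDiff ℝ 1 χ := χ.contDiff
  obtain ⟨B, hB⟩ := (hχ.continuous_fderiv one_ne_zero).bounded_above_of_compact_support
    (χ.hasCompactSupport.fderiv ℝ)
  refine ⟨⟨B, (norm_nonneg _).trans (hB 0)⟩, fun n x => ?_⟩
  have hfderiv : fderiv ℝ (cutoff n) x = ((n : ℝ) + 1)⁻¹ • fderiv ℝ χ (((n : ℝ) + 1)⁻¹ • x) :=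
    fderiv_comp_smul _ 
  rw [hfderiv, norm_smul, Real.norm_of_nonneg (by positivity), mul_comm]
  gcongr
  exact hB _

end Cutoff

section ConverseHolder

open scoped ContDiff Topology ComplexConjugate
open Filter

lemma rpow_mul_le_mul_sq {r r' w a s : ℝ} (hr : r.HolderConjugate r') (hr2 : r ≤ 2) (hw : 0 ≤ w)
    (ha : 0 ≤ a) (hs : 0 < s) (hws : w ≤ s ^ ((r - 2) / 2)) (has : a ≤ s ^ (2⁻¹ : ℝ)) :
    (w * a) ^ r' ≤ w * a ^ 2 := by
  have hr' : 2 ≤ r' := by nlinarith [hr.lt, hr.symm.lt, hr.mul_eq_add]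
  have hle : w ^ (r' - 1) * a ^ (r' - 2) ≤ 1 := calc
    w ^ (r' - 1) * a ^ (r' - 2) ≤ (s ^ ((r - 2) / 2)) ^ (r' - 1) * (s ^ (2⁻¹ : ℝ)) ^ (r' - 2) := by
      gcongr
      all_goals linarith
    _ = s ^ ((r * r' - r - r') / 2) := by
      rw [← Real.rpow_mul hs.le, ← Real.rpow_mul hs.le, ← Real.rpow_add hs]
      ring_nf
    _ = 1 := by rw [hr.mul_eq_add, sub_sub, sub_self, zero_div, Real.rpow_zero]
  calc (w * a) ^ r' = w ^ (1 + (r' - 1)) * a ^ (2 + (r' - 2)) := by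
        rw [add_sub_cancel, add_sub_cancel, Real.mul_rpow hw ha]
    _ = w * a ^ 2 * (w ^ (r' - 1) * a ^ (r' - 2)) := by
        rw [Real.rpow_add_of_nonneg hw one_pos.le (by linarith), Real.rpow_one,
          Real.rpow_add_of_nonneg ha two_pos.le (by linarith), Real.rpow_two]
        ring
    _ ≤ w * a ^ 2 := mul_le_of_le_one_right (by positivity) hle

lemma le_rpow_of_le_mul_rpow_inv {X K : ℝ≥0∞} {r r' : ℝ} (hr : r.HolderConjugate r') (hX : X ≠ ⊤)
    (h : X ≤ K * X ^ r'⁻¹) : X ≤ K ^ r := by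
  rcases eq_or_ne X 0 with rfl | hX₀
  · exact zero_le
  have hsplit : X ^ r⁻¹ * X ^ r'⁻¹ = X := by
    rw [← ENNReal.rpow_add _ _ hX₀ hX, hr.inv_add_inv_eq_one, ENNReal.rpow_one]
  have hne : X ^ r'⁻¹ ≠ 0 := (ENNReal.rpow_pos hX₀.bot_lt hX).ne'
  have hne' : X ^ r'⁻¹ ≠ ⊤ := ENNReal.rpow_ne_top_of_nonneg hr.symm.inv_nonneg hX
  rwa [← ENNReal.rpow_inv_le_iff hr.pos, ← ENNReal.mul_le_mul_iff_left hne hne', hsplit]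

variable {V : Type*} [NormedAddCommGroup V] [InnerProductSpace ℝ V] [FiniteDimensional ℝ V]
  {g : V → ℂ}

/-- The smooth compactly supported weights `χ_n (|g|² + 1 / (n + 1)) ^ ((r - 2) / 2)`, which tend to
`|g| ^ (r - 2)`. Thus `dualWeight r g n * conj g` approximates the extremal function of Hölder's
inequality. -/
noncomputable def dualWeight (r : ℝ) (g : V → ℂ) (n : ℕ) (x : V) : ℝ :=
  cutoff n x * (‖g x‖ ^ 2 + 1 / ((n : ℝ) + 1)) ^ ((r - 2) / 2)

lemma dualWeight_nonneg (r : ℝ) (g : V → ℂ) (n : ℕ) (x : V) : 0 ≤ dualWeight r g n x :=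
  mul_nonneg (cutoff_nonneg n x) (by positivity)

lemma contDiff_dualWeight (hg : ContDiff ℝ ∞ g) (r : ℝ) (n : ℕ) :
    ContDiff ℝ ∞ (dualWeight r g n) :=
  (contDiff_cutoff n).mul <| ((hg.norm_sq ℝ).add contDiff_const).rpow_const_of_ne fun x =>
    (show 0 < ‖g x‖ ^ 2 + 1 / ((n : ℝ) + 1) by positivity).ne'

lemma hasCompactSupport_dualWeight (r : ℝ) (g : V → ℂ) (n : ℕ) :
    HasCompactSupport (dualWeight r g n) :=
  (hasCompactSupport_cutoff n).mul_right

lemma isTestFunction_dualWeight_mul_conj (hg : ContDiff ℝ ∞ g) (r : ℝ) (n : ℕ) :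
    IsTestFunction fun x => (dualWeight r g n x : ℂ) * conj (g x) where
  contDiff := (Complex.ofRealCLM.contDiff.comp (contDiff_dualWeight hg r n)).mul
    (Complex.conjCLE.contDiff.comp hg)
  hasCompactSupport := ((hasCompactSupport_dualWeight r g n).comp_left
    Complex.ofReal_zero).mul_right

lemma dualWeight_mul_norm_rpow_le {r r' : ℝ} (hr : r.HolderConjugate r') (hr2 : r ≤ 2)
    (g : V → ℂ) (n : ℕ) (x : V) :
    (dualWeight r g n x * ‖g x‖) ^ r' ≤ dualWeight r g n x * ‖g x‖ ^ 2 := by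
  have hs : ‖g x‖ ^ 2 ≤ ‖g x‖ ^ 2 + 1 / ((n : ℝ) + 1) := le_add_of_nonneg_right (by positivity)
  refine rpow_mul_le_mul_sq hr hr2 (dualWeight_nonneg r g n x) (norm_nonneg _)
    (s := ‖g x‖ ^ 2 + 1 / ((n : ℝ) + 1)) (by positivity)
    (mul_le_of_le_one_left (by positivity) (cutoff_le_one n x)) ?_
  rw [← one_div, ← Real.sqrt_eq_rpow]
  exact Real.le_sqrt_of_sq_le hs

lemma tendsto_dualWeight_mul_norm_sq {r : ℝ} (hr : r ≠ 0) (g : V → ℂ) (x : V) :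
    Tendsto (fun n => dualWeight r g n x * ‖g x‖ ^ 2) atTop (𝓝 (‖g x‖ ^ r)) := by
  rcases (norm_nonneg (g x)).eq_or_lt with hx | hx
  · simp [← hx, Real.zero_rpow hr]
  have hbase : Tendsto (fun n : ℕ => ‖g x‖ ^ 2 + 1 / ((n : ℝ) + 1)) atTop (𝓝 (‖g x‖ ^ 2)) := by
    simpa only [add_zero] using
      tendsto_const_nhds.add (tendsto_one_div_add_atTop_nhds_zero_nat (𝕜 := ℝ))
  have hlim : ‖g x‖ ^ r = 1 * (‖g x‖ ^ 2) ^ ((r - 2) / 2) * ‖g x‖ ^ 2 := by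
    rw [one_mul, ← Real.rpow_two, ← Real.rpow_mul hx.le, ← Real.rpow_add hx]
    ring_nf
  rw [hlim]
  exact ((tendsto_const_nhds.congr' (EventuallyEq.symm (eventually_cutoff_eq_one x))).mul
    (hbase.rpow_const (.inl (pow_pos hx 2).ne'))).mul_const _

variable [MeasurableSpace V] [BorelSpace V]

lemma lintegral_dualWeight_mul_norm_sq_le (hg : ContDiff ℝ ∞ g) {r r' K : ℝ≥0}
    (hr : r.HolderConjugate r') (hr2 : r ≤ 2)
    (hK : ∀ h, IsTestFunction h → ‖∫ x, g x * h x‖ₑ ≤ K * eLpNorm h r' volume) (n : ℕ) :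
    ∫⁻ x, ENNReal.ofReal (dualWeight r g n x * ‖g x‖ ^ 2) ≤ (K : ℝ≥0∞) ^ (r : ℝ) := by
  set w := dualWeight (r : ℝ) g n
  have hw (x : V) : 0 ≤ w x := dualWeight_nonneg _ g n x
  have hwg (x : V) : 0 ≤ w x * ‖g x‖ ^ 2 := mul_nonneg (hw x) (sq_nonneg _)
  have hr' : (r : ℝ).HolderConjugate r' := NNReal.holderConjugate_coe_iff.2 hr
  have hint : Integrable fun x => w x * ‖g x‖ ^ 2 :=
    ((contDiff_dualWeight hg r n).continuous.mul (hg.continuous.norm.pow 2))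
      |>.integrable_of_hasCompactSupport (hasCompactSupport_dualWeight r g n).mul_right
  have hpair : ‖∫ x, g x * (w x * conj (g x))‖ₑ = ∫⁻ x, ENNReal.ofReal (w x * ‖g x‖ ^ 2) := by
    have hreal (x : V) : g x * (w x * conj (g x)) = ((w x * ‖g x‖ ^ 2 : ℝ) : ℂ) := by
      rw [mul_left_comm, Complex.mul_conj, Complex.normSq_eq_norm_sq, ← Complex.ofReal_mul]
    simp only [hreal, integral_complex_ofReal, ← ofReal_norm, Complex.norm_real]
    rw [Real.norm_of_nonneg (integral_nonneg hwg),
      ofReal_integral_eq_lintegral_ofReal hint (.of_forall hwg)]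
  have hnorm : eLpNorm (fun x => (w x : ℂ) * conj (g x)) r' volume ^ (r' : ℝ) ≤
      ∫⁻ x, ENNReal.ofReal (w x * ‖g x‖ ^ 2) := by
    rw [eLpNorm_nnreal_pow_eq_lintegral (NNReal.coe_ne_zero.1 hr'.symm.ne_zero)]
    refine lintegral_mono fun x => ?_
    rw [← ofReal_norm, ENNReal.ofReal_rpow_of_nonneg (norm_nonneg _) hr'.symm.nonneg, norm_mul,
      Complex.norm_real, RCLike.norm_conj, Real.norm_of_nonneg (hw x)]
    exact ENNReal.ofReal_le_ofReal (dualWeight_mul_norm_rpow_le hr' (mod_cast hr2) g n x)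
  have hfin : ∫⁻ x, ENNReal.ofReal (w x * ‖g x‖ ^ 2) ≠ ⊤ := hpair ▸ enorm_ne_top
  refine le_rpow_of_le_mul_rpow_inv hr' hfin ?_
  calc ∫⁻ x, ENNReal.ofReal (w x * ‖g x‖ ^ 2)
      ≤ K * eLpNorm (fun x => (w x : ℂ) * conj (g x)) r' volume :=
        hpair ▸ hK _ (isTestFunction_dualWeight_mul_conj hg r n)
    _ ≤ K * (∫⁻ x, ENNReal.ofReal (w x * ‖g x‖ ^ 2)) ^ (r' : ℝ)⁻¹ := by
        gcongr
        exact (ENNReal.le_rpow_inv_iff hr'.symm.pos).2 hnorm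

lemma eLpNorm_le_of_forall_enorm_integral_mul_le (hg : ContDiff ℝ ∞ g) {r r' K : ℝ≥0}
    (hr : r.HolderConjugate r') (hr2 : r ≤ 2)
    (hK : ∀ h, IsTestFunction h → ‖∫ x, g x * h x‖ₑ ≤ K * eLpNorm h r' volume) :
    eLpNorm g r volume ≤ K := by
  have hr₀ : (0 : ℝ) < r := (NNReal.holderConjugate_coe_iff.2 hr).pos
  rw [← ENNReal.rpow_le_rpow_iff hr₀,
    eLpNorm_nnreal_pow_eq_lintegral (NNReal.coe_ne_zero.1 hr₀.ne')]
  have hle := lintegral_dualWeight_mul_norm_sq_le hg hr hr2 hK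
  calc ∫⁻ x, ‖g x‖ₑ ^ (r : ℝ)
      = ∫⁻ x, liminf (fun n => ENNReal.ofReal (dualWeight r g n x * ‖g x‖ ^ 2)) atTop := by
        refine lintegral_congr fun x => ?_
        rw [(ENNReal.tendsto_ofReal (tendsto_dualWeight_mul_norm_sq hr₀.ne' g x)).liminf_eq,
          ← ofReal_norm, ENNReal.ofReal_rpow_of_nonneg (norm_nonneg _) hr₀.le]
    _ ≤ liminf (fun n => ∫⁻ x, ENNReal.ofReal (dualWeight r g n x * ‖g x‖ ^ 2)) atTop :=
        lintegral_liminf_le fun n => ((contDiff_dualWeight hg r n).continuous.mul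
          (hg.continuous.norm.pow 2)).measurable.ennreal_ofReal
    _ ≤ (K : ℝ≥0∞) ^ (r : ℝ) :=
        liminf_le_of_frequently_le' (Frequently.of_forall hle)

lemma enorm_integral_mul_le {α : Type*} {mα : MeasurableSpace α} {μ : Measure α} {f h : α → ℂ}
    {r r' : ℝ≥0} (hr : r.HolderConjugate r') (hf : AEStronglyMeasurable f μ)
    (hh : AEStronglyMeasurable h μ) :
    ‖∫ x, f x * h x ∂μ‖ₑ ≤ eLpNorm f r μ * eLpNorm h r' μ := by
  have : ENNReal.HolderTriple r r' 1 := hr.coe_ennreal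
  refine (enorm_integral_le_lintegral_enorm _).trans ?_
  rw [← eLpNorm_one_eq_lintegral_enorm]
  exact eLpNorm_smul_le_mul_eLpNorm (p := r) (q := r') (r := 1) (φ := f) hh hf

lemma IsHomogeneousSymbol.exists_eLpNorm_multiplierOp_le {a : EuclideanSpace ℝ (Fin 3) → ℂ}
    (ha : IsHomogeneousSymbol 0 a) {r : ℝ≥0} (hr : 1 < r) :
    ∃ C : ℝ≥0, ∀ f, IsTestFunction f →
      eLpNorm (multiplierOp a f) r volume ≤ C * eLpNorm f r volume := by
  rcases le_total 2 r with hr2 | hr2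
  · exact ha.exists_eLpNorm_multiplierOp_le_of_two_le hr2
  have hconj := NNReal.HolderConjugate.conjExponent hr
  have hr' : 2 ≤ NNReal.conjExponent r := by
    have hconj_coe := NNReal.holderConjugate_coe_iff.2 hconj
    rw [← NNReal.coe_le_coe] at hr2 ⊢
    push_cast at hr2 ⊢
    nlinarith [hconj_coe.lt, hconj_coe.symm.lt, hconj_coe.mul_eq_add]
  obtain ⟨C, hC⟩ := ha.comp_neg.exists_eLpNorm_multiplierOp_le_of_two_le hr'
  refine ⟨C, fun f hf => ?_⟩
  have hfr : eLpNorm f r volume ≠ ⊤ :=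
    (hf.integrableBounded.memLp (mod_cast hr.le) ENNReal.coe_ne_top).2.ne
  lift eLpNorm f r volume to ℝ≥0 using hfr with M hM
  rw [← ENNReal.coe_mul]
  refine eLpNorm_le_of_forall_enorm_integral_mul_le (ha.isBoundedSymbol.contDiff_multiplierOp hf)
    hconj hr2 fun h hh => ?_
  rw [ha.isBoundedSymbol.integral_multiplierOp_mul ha.comp_neg.isBoundedSymbol hf hh]
  refine (enorm_integral_mul_le hconj hf.contDiff.continuous.aestronglyMeasurable
    (ha.comp_neg.isBoundedSymbol.contDiff_multiplierOp hh).continuous.aestronglyMeasurable).trans ?_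
  rw [← hM, ENNReal.coe_mul, mul_comm (C : ℝ≥0∞), mul_assoc]
  gcongr
  exact hC h hh

end ConverseHolder

section SobolevInequality

open scoped Topology
open Filter

variable {V F : Type*} [NormedAddCommGroup V] [InnerProductSpace ℝ V] [FiniteDimensional ℝ V]
  [NormedAddCommGroup F] [NormedSpace ℝ F]

lemma tendsto_cutoff_smul (w : V → F) (x : V) :
    Tendsto (fun n => cutoff n x • w x) atTop (𝓝 (w x)) :=
  tendsto_const_nhds.congr' <| (eventually_cutoff_eq_one x).mono fun n hn => by
    simp only [hn, one_smul]

variable [MeasurableSpace V] [BorelSpace V]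

lemma eLpNorm_fderiv_smul_le {p : ℝ≥0∞} (hp : 1 ≤ p) {χ : V → ℝ} (hχ : ContDiff ℝ 1 χ)
    (hχ₁ : ∀ x, ‖χ x‖ ≤ 1) {b : ℝ≥0} (hb : ∀ x, ‖fderiv ℝ χ x‖₊ ≤ b) {w : V → F}
    (hw : ContDiff ℝ 1 w) :
    eLpNorm (fderiv ℝ fun x => χ x • w x) p volume ≤
      eLpNorm (fderiv ℝ w) p volume + b * eLpNorm w p volume := by
  have hderiv : (fderiv ℝ fun x => χ x • w x) =
      (fun x => χ x • fderiv ℝ w x) + fun x => (fderiv ℝ χ x).smulRight (w x) := by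
    ext1 x
    exact fderiv_fun_smul (hχ.differentiable one_ne_zero x) (hw.differentiable one_ne_zero x)
  have hcont₁ : Continuous fun x => χ x • fderiv ℝ w x :=
    hχ.continuous.smul (hw.continuous_fderiv one_ne_zero)
  have hcont₂ : Continuous fun x => (fderiv ℝ χ x).smulRight (w x) :=
    (ContinuousLinearMap.smulRightL ℝ V F).continuous₂.comp₂
      (hχ.continuous_fderiv one_ne_zero) hw.continuous
  rw [hderiv]
  refine (eLpNorm_add_le hcont₁.aestronglyMeasurable hcont₂.aestronglyMeasurable hp).trans
    (add_le_add (eLpNorm_mono fun x => ?_) ?_)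
  · rw [norm_smul]
    exact mul_le_of_le_one_left (norm_nonneg _) (hχ₁ x)
  · refine eLpNorm_le_nnreal_smul_eLpNorm_of_ae_le_mul (.of_forall fun x => ?_) p
    rw [← NNReal.coe_le_coe, coe_nnnorm, ContinuousLinearMap.norm_smulRight_apply]
    exact mul_le_mul_of_nonneg_right (hb x) (norm_nonneg _)

lemma exists_eLpNorm_le_eLpNorm_fderiv (V F : Type*) [NormedAddCommGroup V]
    [InnerProductSpace ℝ V] [FiniteDimensional ℝ V] [MeasurableSpace V] [BorelSpace V]
    [NormedAddCommGroup F] [NormedSpace ℝ F] [FiniteDimensional ℝ F] {p p' : ℝ≥0} (hp : 1 ≤ p)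
    (hV : 0 < Module.finrank ℝ V) (hp' : (p' : ℝ)⁻¹ = (p : ℝ)⁻¹ - (Module.finrank ℝ V : ℝ)⁻¹) :
    ∃ C : ℝ≥0, ∀ w : V → F, ContDiff ℝ 1 w → eLpNorm w p volume ≠ ⊤ →
      eLpNorm w p' volume ≤ C * eLpNorm (fderiv ℝ w) p volume := by
  obtain ⟨B, hB⟩ := exists_norm_fderiv_cutoff_le V
  let b (n : ℕ) : ℝ≥0 := B * ((n : ℝ≥0) + 1)⁻¹
  let C : ℝ≥0 := SNormLESNormFDerivOfEqConst F (volume : Measure V) p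
  refine ⟨C, fun w hw hwp => ?_⟩
  have hχ (n : ℕ) : ContDiff ℝ 1 (cutoff n : V → ℝ) := (contDiff_cutoff n).of_le (by norm_cast)
  have hbound (n : ℕ) : eLpNorm (fun x => cutoff n x • w x) p' volume ≤
      C * (eLpNorm (fderiv ℝ w) p volume + b n * eLpNorm w p volume) := by
    refine (eLpNorm_le_eLpNorm_fderiv_of_eq volume ((hχ n).smul hw)
      (hasCompactSupport_cutoff n).smul_right hp hV hp').trans ?_
    gcongr
    refine eLpNorm_fderiv_smul_le (by exact_mod_cast hp) (hχ n) (fun x => ?_) (fun x => ?_) hw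
    · rw [Real.norm_of_nonneg (cutoff_nonneg n x)]
      exact cutoff_le_one n x
    · rw [← NNReal.coe_le_coe]
      simpa [b] using hB n x
  have hb : Tendsto b atTop (𝓝 0) := by
    simpa only [b, one_div, mul_zero] using
      (tendsto_one_div_add_atTop_nhds_zero_nat (𝕜 := ℝ≥0)).const_mul B
  have hlim' : Tendsto (fun n => C * (eLpNorm (fderiv ℝ w) p volume + b n * eLpNorm w p volume))
      atTop (𝓝 (C * eLpNorm (fderiv ℝ w) p volume)) := by
    have h := ENNReal.Tendsto.mul_const (ENNReal.tendsto_coe.2 hb) (Or.inr hwp)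
    simpa only [ENNReal.coe_zero, zero_mul, add_zero] using
      ENNReal.Tendsto.const_mul (h.const_add (eLpNorm (fderiv ℝ w) p volume))
        (Or.inr (ENNReal.coe_ne_top (r := C)))
  calc eLpNorm w p' volume
      ≤ atTop.liminf fun n => eLpNorm (fun x => cutoff n x • w x) p' volume :=
        Lp.eLpNorm_lim_le_liminf_eLpNorm
          (fun n => ((hχ n).continuous.smul hw.continuous).aestronglyMeasurable) w
          (.of_forall (tendsto_cutoff_smul w))
    _ ≤ atTop.liminf fun n => C * (eLpNorm (fderiv ℝ w) p volume + b n * eLpNorm w p volume) :=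
        liminf_le_liminf (.of_forall hbound)
    _ = C * eLpNorm (fderiv ℝ w) p volume := hlim'.liminf_eq

end SobolevInequality

section SymbolCalculus

namespace IsHomogeneousSymbol

variable {V F : Type*} [NormedAddCommGroup V] [NormedSpace ℝ V] [NormedAddCommGroup F]
  [NormedSpace ℝ F] {d d' : ℤ}

lemma const (y : F) : IsHomogeneousSymbol 0 fun _ : V => y :=
  ⟨contDiffOn_const, fun t _ ξ _ => by rw [zpow_zero, one_smul]⟩

lemma sub {m m' : V → F} (hm : IsHomogeneousSymbol d m) (hm' : IsHomogeneousSymbol d m') :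
    IsHomogeneousSymbol d fun ξ => m ξ - m' ξ :=
  ⟨hm.contDiffOn.sub hm'.contDiffOn, fun t ht ξ hξ => by
    rw [hm.map_smul t ht ξ hξ, hm'.map_smul t ht ξ hξ, smul_sub]⟩

lemma sum {ρ : Type*} {s : Finset ρ} {m : ρ → V → F}
    (hm : ∀ i ∈ s, IsHomogeneousSymbol d (m i)) : IsHomogeneousSymbol d fun ξ => ∑ i ∈ s, m i ξ :=
  ⟨ContDiffOn.sum fun i hi => (hm i hi).contDiffOn, fun t ht ξ hξ => by
    rw [Finset.smul_sum]
    exact Finset.sum_congr rfl fun i hi => (hm i hi).map_smul t ht ξ hξ⟩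

lemma mul {m m' : V → ℝ} (hm : IsHomogeneousSymbol d m) (hm' : IsHomogeneousSymbol d' m') :
    IsHomogeneousSymbol (d + d') fun ξ => m ξ * m' ξ :=
  ⟨hm.contDiffOn.mul hm'.contDiffOn, fun t ht ξ hξ => by
    rw [hm.map_smul t ht ξ hξ, hm'.map_smul t ht ξ hξ, smul_mul_smul_comm, zpow_add₀ ht.ne']⟩

lemma ofReal {m : V → ℝ} (hm : IsHomogeneousSymbol d m) :
    IsHomogeneousSymbol d fun ξ => (m ξ : ℂ) :=
  ⟨Complex.ofRealCLM.contDiff.comp_contDiffOn hm.contDiffOn, fun t ht ξ hξ => by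
    rw [hm.map_smul t ht ξ hξ, Complex.real_smul, smul_eq_mul, Complex.ofReal_mul]⟩

lemma coord {ι : Type*} [Fintype ι] (j : ι) :
    IsHomogeneousSymbol 1 fun ξ : EuclideanSpace ℝ ι => ξ j :=
  ⟨ContDiff.contDiffOn (by fun_prop), fun t _ ξ _ => by rw [zpow_one, PiLp.smul_apply]⟩

lemma inv_norm_sq (W : Type*) [NormedAddCommGroup W] [InnerProductSpace ℝ W] :
    IsHomogeneousSymbol (-2) fun ξ : W => (‖ξ‖ ^ 2)⁻¹ :=
  ⟨(contDiff_norm_sq ℝ).contDiffOn.inv fun ξ hξ => pow_ne_zero 2 (norm_ne_zero_iff.2 hξ),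
    fun t ht ξ _ => by
      rw [norm_smul, Real.norm_of_nonneg ht.le, mul_pow, mul_inv, zpow_neg, smul_eq_mul]
      rfl⟩

end IsHomogeneousSymbol

end SymbolCalculus

section MatrixRegularity

variable {V κ : Type*} [NormedAddCommGroup V] [NormedSpace ℝ V] [Fintype κ] [DecidableEq κ]
  {k : WithTop ℕ∞} {B : V → Matrix κ κ ℝ} {s : Set V}

lemma contDiff_matrix_det (hB : ∀ i j, ContDiff ℝ k fun ξ => B ξ i j) :
    ContDiff ℝ k fun ξ => (B ξ).det := by
  simp only [Matrix.det_apply']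
  exact ContDiff.sum fun σ _ => contDiff_const.mul (contDiff_prod fun i _ => hB _ i)

lemma contDiff_matrix_adjugate (hB : ∀ i j, ContDiff ℝ k fun ξ => B ξ i j) (i j : κ) :
    ContDiff ℝ k fun ξ => (B ξ).adjugate i j := by
  simp only [Matrix.adjugate_apply]
  refine contDiff_matrix_det fun a b => ?_
  by_cases ha : a = j
  · simpa only [ha, Matrix.updateRow_self] using contDiff_const
  · simpa only [Matrix.updateRow_ne ha] using hB a b

lemma contDiffOn_matrix_inv (hB : ∀ i j, ContDiff ℝ k fun ξ => B ξ i j)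
    (hs : ∀ ξ ∈ s, (B ξ).det ≠ 0) (i j : κ) : ContDiffOn ℝ k (fun ξ => (B ξ)⁻¹ i j) s := by
  simp only [Matrix.inv_def, Ring.inverse_eq_inv', Matrix.smul_apply, smul_eq_mul]
  exact ((contDiff_matrix_det hB).contDiffOn.inv hs).mul
    (contDiff_matrix_adjugate hB i j).contDiffOn

end MatrixRegularity

section EllipticSymbols

open scoped Matrix

variable {ν κ ι : Type*}

/-- The symbol `v ↦ A[v ⊗ ξ]` of the operator `u ↦ A[∇u]`, where `A` has the matrix `c` with
respect to the coordinates `(k, l) : κ × ι` of a matrix field. -/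
def operatorSymbol [Fintype ι] (c : Matrix ν (κ × ι) ℝ) (ξ : EuclideanSpace ℝ ι) :
    Matrix ν κ ℝ :=
  fun n k => ∑ l, c n (k, l) * ξ l

/-- Ellipticity of `u ↦ A[∇u]` in terms of the matrix `c` of `A`. -/
def IsEllipticMatrix [Fintype κ] [Fintype ι] (c : Matrix ν (κ × ι) ℝ) : Prop :=
  ∀ ξ : EuclideanSpace ℝ ι, ξ ≠ 0 → Function.Injective (operatorSymbol c ξ).mulVec

lemma operatorSymbol_smul [Fintype ι] (c : Matrix ν (κ × ι) ℝ) (t : ℝ) (ξ : EuclideanSpace ℝ ι) :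
    operatorSymbol c (t • ξ) = t • operatorSymbol c ξ := by
  ext n k
  simp only [operatorSymbol, PiLp.smul_apply, smul_eq_mul, Matrix.smul_apply, Finset.mul_sum,
    mul_left_comm]

variable [Fintype ν] [Fintype κ] [DecidableEq κ] [Fintype ι] {c : Matrix ν (κ × ι) ℝ}

/-- The Moore–Penrose left inverse `(aᵀ a)⁻¹ aᵀ` of the symbol `a` of an elliptic operator. -/
noncomputable def symbolLeftInv (c : Matrix ν (κ × ι) ℝ) (ξ : EuclideanSpace ℝ ι) :
    Matrix κ ν ℝ :=
  ((operatorSymbol c ξ)ᵀ * operatorSymbol c ξ)⁻¹ * (operatorSymbol c ξ)ᵀ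

lemma IsEllipticMatrix.isUnit_det (hc : IsEllipticMatrix c) {ξ : EuclideanSpace ℝ ι}
    (hξ : ξ ≠ 0) : IsUnit ((operatorSymbol c ξ)ᵀ * operatorSymbol c ξ).det := by
  rw [← Matrix.isUnit_iff_isUnit_det, ← Matrix.mulVec_injective_iff_isUnit,
    ← Matrix.coe_mulVecLin, ← LinearMap.ker_eq_bot, Matrix.ker_mulVecLin_transpose_mul_self,
    LinearMap.ker_eq_bot, Matrix.coe_mulVecLin]
  exact hc ξ hξ

lemma IsEllipticMatrix.symbolLeftInv_mul (hc : IsEllipticMatrix c) {ξ : EuclideanSpace ℝ ι}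
    (hξ : ξ ≠ 0) : symbolLeftInv c ξ * operatorSymbol c ξ = 1 := by
  rw [symbolLeftInv, Matrix.mul_assoc, Matrix.nonsing_inv_mul _ (hc.isUnit_det hξ)]

lemma IsEllipticMatrix.isHomogeneousSymbol_leftInv (hc : IsEllipticMatrix c) (i : κ) (n : ν) :
    IsHomogeneousSymbol (-1) fun ξ => symbolLeftInv c ξ i n where
  contDiffOn := by
    have ha (n k) : ContDiff ℝ 2 fun ξ => operatorSymbol c ξ n k := by
      unfold operatorSymbol
      fun_prop
    simp only [symbolLeftInv, Matrix.mul_apply (N := (operatorSymbol c _)ᵀ),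
      Matrix.transpose_apply]
    refine ContDiffOn.sum fun k _ => ContDiffOn.mul ?_ (ha n k).contDiffOn
    refine contDiffOn_matrix_inv (fun i j => ?_) (fun ξ hξ => (hc.isUnit_det hξ).ne_zero) i k
    simp only [Matrix.mul_apply, Matrix.transpose_apply]
    fun_prop
  map_smul t ht ξ hξ := by
    have hinv : ((t * t) • ((operatorSymbol c ξ)ᵀ * operatorSymbol c ξ))⁻¹ =
        (t * t)⁻¹ • ((operatorSymbol c ξ)ᵀ * operatorSymbol c ξ)⁻¹ :=
      Matrix.inv_eq_left_inv <| by
        rw [smul_mul_smul_comm, Matrix.nonsing_inv_mul _ (hc.isUnit_det hξ),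
          inv_mul_cancel₀ (mul_pos ht ht).ne', one_smul]
    have hsmul : symbolLeftInv c (t • ξ) = t⁻¹ • symbolLeftInv c ξ := by
      simp only [symbolLeftInv, operatorSymbol_smul, Matrix.transpose_smul, Matrix.smul_mul,
        Matrix.mul_smul, smul_smul, hinv, mul_inv, mul_inv_cancel_left₀ ht.ne']
    rw [hsmul, zpow_neg_one, Matrix.smul_apply]

/-- The symbol recovering `v ⊗ ξ` from `A[v ⊗ ξ]`. -/
noncomputable def tensorReconstruction (c : Matrix ν (κ × ι) ℝ) (ξ : EuclideanSpace ℝ ι) :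
    Matrix (κ × ι) ν ℝ :=
  fun p n => symbolLeftInv c ξ p.1 n * ξ p.2

lemma IsEllipticMatrix.isHomogeneousSymbol_tensorReconstruction (hc : IsEllipticMatrix c)
    (p : κ × ι) (n : ν) : IsHomogeneousSymbol 0 fun ξ => tensorReconstruction c ξ p n :=
  (hc.isHomogeneousSymbol_leftInv p.1 n).mul (.coord p.2)

variable [DecidableEq ι]

/-- The symbol of the part of a matrix field that is not recovered from its image under `A`. -/
noncomputable def residualSymbol (c : Matrix ν (κ × ι) ℝ) (ξ : EuclideanSpace ℝ ι) :
    Matrix (κ × ι) (κ × ι) ℝ :=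
  1 - tensorReconstruction c ξ * c

/-- The symbol expressing the `q`-th derivative of the residual part through the curl, whose
components `∂_m F_{kl} - ∂_l F_{km}` are indexed by `((k, l), m)`. -/
noncomputable def curlSymbol (c : Matrix ν (κ × ι) ℝ) (q : ι) (ξ : EuclideanSpace ℝ ι) :
    Matrix (κ × ι) ((κ × ι) × ι) ℝ :=
  fun p s => ξ q * ξ s.2 * (‖ξ‖ ^ 2)⁻¹ * residualSymbol c ξ p s.1

lemma IsEllipticMatrix.isHomogeneousSymbol_residualSymbol (hc : IsEllipticMatrix c)
    (p r : κ × ι) : IsHomogeneousSymbol 0 fun ξ => residualSymbol c ξ p r :=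
  (IsHomogeneousSymbol.const _).sub <| .sum fun n _ =>
    (hc.isHomogeneousSymbol_tensorReconstruction p n).mul (.const _)

lemma IsEllipticMatrix.isHomogeneousSymbol_curlSymbol (hc : IsEllipticMatrix c) (q : ι)
    (p : κ × ι) (s : (κ × ι) × ι) : IsHomogeneousSymbol 0 fun ξ => curlSymbol c q ξ p s :=
  (((IsHomogeneousSymbol.coord q).mul (.coord s.2)).mul (.inv_norm_sq _)).mul
    (hc.isHomogeneousSymbol_residualSymbol p s.1)

lemma IsEllipticMatrix.sum_residualSymbol_mul (hc : IsEllipticMatrix c) {ξ : EuclideanSpace ℝ ι}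
    (hξ : ξ ≠ 0) (p : κ × ι) (k : κ) : ∑ l, residualSymbol c ξ p (k, l) * ξ l = 0 := by
  have hone : ∑ l, (1 : Matrix (κ × ι) (κ × ι) ℝ) p (k, l) * ξ l =
      (1 : Matrix κ κ ℝ) p.1 k * ξ p.2 := by
    rcases eq_or_ne p.1 k with rfl | hk
    · simp [Matrix.one_apply, Prod.ext_iff]
    · simp [Prod.ext_iff, hk]
  have hrec : ∑ l, (tensorReconstruction c ξ * c) p (k, l) * ξ l =
      (symbolLeftInv c ξ * operatorSymbol c ξ) p.1 k * ξ p.2 := by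
    simp only [Matrix.mul_apply, tensorReconstruction, operatorSymbol, Finset.sum_mul,
      Finset.mul_sum]
    rw [Finset.sum_comm]
    exact Finset.sum_congr rfl fun n _ => Finset.sum_congr rfl fun l _ => by ring
  simp only [residualSymbol, Matrix.sub_apply, sub_mul, Finset.sum_sub_distrib]
  rw [hone, hrec, hc.symbolLeftInv_mul hξ, sub_self]

lemma IsEllipticMatrix.sum_curlSymbol_mul (hc : IsEllipticMatrix c) {ξ : EuclideanSpace ℝ ι}
    (hξ : ξ ≠ 0) (q : ι) (p : κ × ι) (k : κ) (m : ι) :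
    ∑ l, curlSymbol c q ξ p ((k, l), m) * ξ l = 0 := by
  simp only [curlSymbol, mul_assoc, ← Finset.mul_sum, hc.sum_residualSymbol_mul hξ, mul_zero]

lemma sum_curlSymbol_mul_coord (c : Matrix ν (κ × ι) ℝ) {ξ : EuclideanSpace ℝ ι} (hξ : ξ ≠ 0)
    (q : ι) (p r : κ × ι) :
    ∑ m, curlSymbol c q ξ p (r, m) * ξ m = ξ q * residualSymbol c ξ p r := by
  have hnorm : (‖ξ‖ ^ 2)⁻¹ * ∑ m, ξ m ^ 2 = 1 := by
    rw [← EuclideanSpace.real_norm_sq_eq, inv_mul_cancel₀ (pow_ne_zero 2 (norm_ne_zero_iff.2 hξ))]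
  rw [← mul_one (_ * _), ← hnorm, Finset.mul_sum, Finset.mul_sum]
  refine Finset.sum_congr rfl fun m _ => ?_
  rw [curlSymbol]
  ring

lemma IsEllipticMatrix.mul_sum_residualSymbol_mul (hc : IsEllipticMatrix c)
    {ξ : EuclideanSpace ℝ ι} (hξ : ξ ≠ 0) (q : ι) (p : κ × ι) (φ : κ × ι → ℂ) :
    (ξ q : ℂ) * ∑ r, (residualSymbol c ξ p r : ℂ) * φ r =
      ∑ s, (curlSymbol c q ξ p s : ℂ) * (ξ s.2 * φ s.1 - ξ s.1.2 * φ (s.1.1, s.2)) := by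
  have hmain (r : κ × ι) : ∑ m, (curlSymbol c q ξ p (r, m) : ℂ) * (ξ m * φ r) =
      ξ q * (residualSymbol c ξ p r * φ r) := by
    simp only [← mul_assoc, ← Finset.sum_mul]
    exact_mod_cast congrArg (fun x : ℝ => (x : ℂ) * φ r) (sum_curlSymbol_mul_coord c hξ q p r)
  have hcancel (k : κ) (m : ι) :
      ∑ l, (curlSymbol c q ξ p ((k, l), m) : ℂ) * (ξ l * φ (k, m)) = 0 := by
    simp only [← mul_assoc, ← Finset.sum_mul]
    exact mul_eq_zero_of_left (by exact_mod_cast hc.sum_curlSymbol_mul hξ q p k m) _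
  have hzero : ∑ s, (curlSymbol c q ξ p s : ℂ) * (ξ s.1.2 * φ (s.1.1, s.2)) = 0 := by
    rw [Fintype.sum_prod_type, Fintype.sum_prod_type]
    refine Finset.sum_eq_zero fun k _ => ?_
    rw [Finset.sum_comm]
    exact Finset.sum_eq_zero fun m _ => hcancel k m
  simp only [mul_sub, Finset.sum_sub_distrib]
  rw [hzero, sub_zero, Finset.mul_sum, Fintype.sum_prod_type (α₁ := κ × ι)]
  exact Finset.sum_congr rfl fun r _ => (hmain r).symm

end EllipticSymbols

section DerivativesOfMultiplierOperators

open scoped ContDiff InnerProductSpace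

variable {V : Type*} [NormedAddCommGroup V] [InnerProductSpace ℝ V] [FiniteDimensional ℝ V]
  [MeasurableSpace V] [BorelSpace V] {m f g : V → ℂ}

lemma fourier_sum {ρ : Type*} {s : Finset ρ} {φ : ρ → V → ℂ}
    (hφ : ∀ i ∈ s, Integrable (φ i)) (x : V) :
    𝓕 (fun ξ => ∑ i ∈ s, φ i ξ) x = ∑ i ∈ s, 𝓕 (φ i) x := by
  simp only [Real.fourier_eq, Finset.smul_sum]
  exact integral_finsetSum s fun i hi => (Real.fourierIntegral_convergent_iff x).2 (hφ i hi)

lemma IsTestFunction.fourierInv_sub (hf : IsTestFunction f) (hg : IsTestFunction g) :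
    𝓕⁻ (fun x => f x - g x) = 𝓕⁻ f - 𝓕⁻ g := by
  refine eq_sub_of_add_eq ?_
  rw [← (hf.sub hg).fourierInv_add hg]
  congr 1
  exact sub_add_cancel f g

lemma fourierInv_sum_const_mul {ρ : Type*} {s : Finset ρ} {φ : ρ → V → ℂ}
    (hφ : ∀ i ∈ s, Integrable (φ i)) (c : ρ → ℂ) (ξ : V) :
    𝓕⁻ (fun x => ∑ i ∈ s, c i * φ i x) ξ = ∑ i ∈ s, c i * 𝓕⁻ (φ i) ξ := by
  simp only [Real.fourierInv_eq_fourier_neg, fourier_sum fun i hi => (hφ i hi).const_mul (c i),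
    fourier_const_mul, Pi.smul_apply, smul_eq_mul]

lemma IsTestFunction.fourierInv_fderiv (hf : IsTestFunction f) (v ξ : V) :
    𝓕⁻ (fun x => fderiv ℝ f x v) ξ = -(2 * Real.pi * Complex.I) * (⟪ξ, v⟫_ℝ * 𝓕⁻ f ξ) := by
  have hint : Integrable (fderiv ℝ f) :=
    (hf.contDiff.continuous_fderiv (by simp)).integrable_of_hasCompactSupport
      (hf.hasCompactSupport.fderiv (𝕜 := ℝ))
  rw [Real.fourierInv_eq_fourier_neg, Real.fourierInv_eq_fourier_neg,
    ← Real.fourier_continuousLinearMap_apply hint, Real.fourier_fderiv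
      hf.integrableBounded.integrable (hf.contDiff.differentiable (by simp)) hint]
  simp [VectorFourier.fourierSMulRight_apply, innerSL_apply_apply ℝ]

lemma IsBoundedSymbol.fderiv_multiplierOp (hm : IsBoundedSymbol m) (hf : IsTestFunction f)
    (x v : V) :
    fderiv ℝ (multiplierOp m f) x v = multiplierOp m (fun y => fderiv ℝ f y v) x := by
  have hint := hm.integrable_mul_fourierInv hf
  have hmoment : Integrable fun ξ => ‖ξ‖ * ‖m ξ * 𝓕⁻ f ξ‖ := by
    simpa only [pow_one] using hm.integrable_pow_mul_norm_mul_fourierInv hf 1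
  have hsmul : Integrable
      (VectorFourier.fourierSMulRight (innerSL ℝ) fun ξ => m ξ * 𝓕⁻ f ξ) := by
    refine (hmoment.const_mul (2 * Real.pi * ‖innerSL ℝ (E := V)‖)).mono' hint.1.fourierSMulRight
      (.of_forall fun ξ => ?_)
    rw [← mul_assoc]
    exact VectorFourier.norm_fourierSMulRight_le _ _ _
  rw [multiplierOp, multiplierOp, Real.fderiv_fourier hint hmoment,
    Real.fourier_continuousLinearMap_apply hsmul]
  refine congrFun (congrArg 𝓕 (funext fun ξ => ?_)) x
  rw [hf.fourierInv_fderiv, VectorFourier.fourierSMulRight_apply]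
  simp only [innerSL_apply_apply ℝ, smul_eq_mul, Complex.real_smul]
  ring

end DerivativesOfMultiplierOperators

section MatrixMultiplierOperators

open scoped ContDiff

variable {V : Type*} [NormedAddCommGroup V] [InnerProductSpace ℝ V] [FiniteDimensional ℝ V]
  [MeasurableSpace V] [BorelSpace V] {ρ ρ' π : Type*} [Fintype ρ] [Fintype ρ']
  {m : V → Matrix π ρ ℝ} {m' : V → Matrix π ρ' ℝ} {f : ρ → V → ℂ} {g : ρ' → V → ℂ} {p : π}

/-- The Fourier multiplier operator with a real matrix-valued symbol, acting on tuples of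
functions. -/
noncomputable def matrixMultiplierOp (m : V → Matrix π ρ ℝ) (f : ρ → V → ℂ) (p : π) (x : V) : ℂ :=
  ∑ r, multiplierOp (fun ξ => (m ξ p r : ℂ)) (f r) x

lemma matrixMultiplierOp_eq_fourier (hm : ∀ r, IsBoundedSymbol fun ξ => (m ξ p r : ℂ))
    (hf : ∀ r, IsTestFunction (f r)) :
    matrixMultiplierOp m f p = 𝓕 fun ξ => ∑ r, (m ξ p r : ℂ) * 𝓕⁻ (f r) ξ := by
  ext x
  exact (fourier_sum (fun r _ => (hm r).integrable_mul_fourierInv (hf r)) x).symm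

lemma contDiff_matrixMultiplierOp (hm : ∀ r, IsBoundedSymbol fun ξ => (m ξ p r : ℂ))
    (hf : ∀ r, IsTestFunction (f r)) : ContDiff ℝ ∞ (matrixMultiplierOp m f p) :=
  ContDiff.sum fun r _ => (hm r).contDiff_multiplierOp (hf r)

lemma fderiv_matrixMultiplierOp (hm : ∀ r, IsBoundedSymbol fun ξ => (m ξ p r : ℂ))
    (hf : ∀ r, IsTestFunction (f r)) (x v : V) :
    fderiv ℝ (matrixMultiplierOp m f p) x v =
      matrixMultiplierOp m (fun r y => fderiv ℝ (f r) y v) p x := by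
  have hdiff (r : ρ) : DifferentiableAt ℝ (multiplierOp (fun ξ => (m ξ p r : ℂ)) (f r)) x :=
    ((hm r).contDiff_multiplierOp (hf r)).differentiable (by simp) x
  calc fderiv ℝ (matrixMultiplierOp m f p) x v
      = ∑ r, fderiv ℝ (multiplierOp (fun ξ => (m ξ p r : ℂ)) (f r)) x v := by
        rw [← sum_apply, ← fderiv_fun_sum fun r _ => hdiff r]
        rfl
    _ = matrixMultiplierOp m (fun r y => fderiv ℝ (f r) y v) p x :=
        Finset.sum_congr rfl fun r _ => (hm r).fderiv_multiplierOp (hf r) x v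

lemma matrixMultiplierOp_congr [Nontrivial V] (hm : ∀ r, IsBoundedSymbol fun ξ => (m ξ p r : ℂ))
    (hf : ∀ r, IsTestFunction (f r)) (hm' : ∀ s, IsBoundedSymbol fun ξ => (m' ξ p s : ℂ))
    (hg : ∀ s, IsTestFunction (g s))
    (h : ∀ ξ ≠ 0, ∑ r, (m ξ p r : ℂ) * 𝓕⁻ (f r) ξ = ∑ s, (m' ξ p s : ℂ) * 𝓕⁻ (g s) ξ) :
    matrixMultiplierOp m f p = matrixMultiplierOp m' g p := by
  rw [matrixMultiplierOp_eq_fourier hm hf, matrixMultiplierOp_eq_fourier hm' hg]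
  ext x
  simp only [Real.fourier_eq]
  refine integral_congr_ae ?_
  filter_upwards [Measure.ae_ne volume (0 : V)] with ξ hξ
  rw [h ξ hξ]

lemma eLpNorm_matrixMultiplierOp_le {r : ℝ≥0∞} (hr : 1 ≤ r)
    (hm : ∀ j, IsBoundedSymbol fun ξ => (m ξ p j : ℂ)) (hf : ∀ j, IsTestFunction (f j)) :
    eLpNorm (matrixMultiplierOp m f p) r volume ≤
      ∑ j, eLpNorm (multiplierOp (fun ξ => (m ξ p j : ℂ)) (f j)) r volume := by
  have hsum : matrixMultiplierOp m f p = ∑ j, multiplierOp (fun ξ => (m ξ p j : ℂ)) (f j) := by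
    ext x
    rw [matrixMultiplierOp, Finset.sum_apply]
  rw [hsum]
  exact eLpNorm_sum_le
    (fun j _ => ((hm j).contDiff_multiplierOp (hf j)).continuous.aestronglyMeasurable) hr

lemma exists_eLpNorm_matrixMultiplierOp_le {m : EuclideanSpace ℝ (Fin 3) → Matrix π ρ ℝ}
    (hm : ∀ j, IsHomogeneousSymbol 0 fun ξ => m ξ p j) {r : ℝ≥0} (hr : 1 < r) :
    ∃ C : ℝ≥0, ∀ f, (∀ j, IsTestFunction (f j)) →
      eLpNorm (matrixMultiplierOp m f p) r volume ≤ C * ∑ j, eLpNorm (f j) r volume := by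
  choose C hC using fun j => (hm j).ofReal.exists_eLpNorm_multiplierOp_le hr
  refine ⟨∑ j, C j, fun f hf => ?_⟩
  calc eLpNorm (matrixMultiplierOp m f p) r volume
      ≤ ∑ j, eLpNorm (multiplierOp (fun ξ => (m ξ p j : ℂ)) (f j)) r volume :=
        eLpNorm_matrixMultiplierOp_le (by exact_mod_cast hr.le)
          (fun j => (hm j).ofReal.isBoundedSymbol) hf
    _ ≤ ∑ j, C j * eLpNorm (f j) r volume := Finset.sum_le_sum fun j _ => hC j (f j) (hf j)
    _ ≤ (∑ j, C j : ℝ≥0) * ∑ j, eLpNorm (f j) r volume := by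
        rw [Finset.mul_sum]
        gcongr with j
        exact Finset.single_le_sum_of_canonicallyOrdered (Finset.mem_univ j)

end MatrixMultiplierOperators

section EllipticDecomposition

variable {ν κ ι : Type*} [Fintype ι]

/-- The field `A[F]`, where `A` has the matrix `c`. -/
def matrixMul [Fintype κ] (c : Matrix ν (κ × ι) ℝ) (F : κ × ι → EuclideanSpace ℝ ι → ℂ) (n : ν)
    (x : EuclideanSpace ℝ ι) : ℂ :=
  ∑ r, (c n r : ℂ) * F r x

/-- The components `∂ₘ F_{kl} - ∂ₗ F_{km}` of the row-wise curl in arbitrary dimension, indexed by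
`((k, l), m)`. -/
noncomputable def rowCurl [DecidableEq ι] (F : κ × ι → EuclideanSpace ℝ ι → ℂ)
    (s : (κ × ι) × ι) (x : EuclideanSpace ℝ ι) : ℂ :=
  fderiv ℝ (F s.1) x (.single s.2 1) - fderiv ℝ (F (s.1.1, s.2)) x (.single s.1.2 1)

variable {F : κ × ι → EuclideanSpace ℝ ι → ℂ}

lemma isTestFunction_matrixMul [Fintype κ] (c : Matrix ν (κ × ι) ℝ)
    (hF : ∀ r, IsTestFunction (F r)) (n : ν) : IsTestFunction (matrixMul c F n) :=
  .sum fun r _ => (hF r).mul_left contDiff_const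

lemma isTestFunction_rowCurl [DecidableEq ι] (hF : ∀ r, IsTestFunction (F r))
    (s : (κ × ι) × ι) : IsTestFunction (rowCurl F s) :=
  ((hF s.1).fderiv_apply _).sub ((hF _).fderiv_apply _)

lemma fourierInv_matrixMul [Fintype κ] (c : Matrix ν (κ × ι) ℝ) (hF : ∀ r, IsTestFunction (F r))
    (n : ν) (ξ : EuclideanSpace ℝ ι) :
    𝓕⁻ (matrixMul c F n) ξ = ∑ r, (c n r : ℂ) * 𝓕⁻ (F r) ξ :=
  fourierInv_sum_const_mul (fun r _ => (hF r).integrableBounded.integrable) _ ξ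

lemma IsTestFunction.fourierInv_fderiv_single [DecidableEq ι] {f : EuclideanSpace ℝ ι → ℂ}
    (hf : IsTestFunction f) (q : ι) (ξ : EuclideanSpace ℝ ι) :
    𝓕⁻ (fun x => fderiv ℝ f x (.single q 1)) ξ =
      -(2 * Real.pi * Complex.I) * (ξ q * 𝓕⁻ f ξ) := by
  rw [hf.fourierInv_fderiv, EuclideanSpace.inner_single_right, one_mul, conj_trivial]

lemma fourierInv_rowCurl [DecidableEq ι] (hF : ∀ r, IsTestFunction (F r)) (s : (κ × ι) × ι)
    (ξ : EuclideanSpace ℝ ι) :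
    𝓕⁻ (rowCurl F s) ξ = -(2 * Real.pi * Complex.I) *
      (ξ s.2 * 𝓕⁻ (F s.1) ξ - ξ s.1.2 * 𝓕⁻ (F (s.1.1, s.2)) ξ) := by
  unfold rowCurl
  rw [((hF s.1).fderiv_apply _).fourierInv_sub ((hF _).fderiv_apply _), Pi.sub_apply,
    (hF s.1).fourierInv_fderiv_single, (hF _).fourierInv_fderiv_single, mul_sub]

variable [Fintype ν] [Fintype κ] [DecidableEq κ]

lemma sum_tensorReconstruction_add_sum_residualSymbol [DecidableEq ι] (c : Matrix ν (κ × ι) ℝ)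
    (ξ : EuclideanSpace ℝ ι) (p : κ × ι) (φ : κ × ι → ℂ) :
    ∑ n, (tensorReconstruction c ξ p n : ℂ) * ∑ r, (c n r : ℂ) * φ r +
      ∑ r, (residualSymbol c ξ p r : ℂ) * φ r = φ p := by
  have hrec : ∑ n, (tensorReconstruction c ξ p n : ℂ) * ∑ r, (c n r : ℂ) * φ r =
      ∑ r, ((tensorReconstruction c ξ * c) p r : ℂ) * φ r := by
    simp only [Matrix.mul_apply, Complex.ofReal_sum, Complex.ofReal_mul, Finset.mul_sum,
      Finset.sum_mul, mul_assoc]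
    exact Finset.sum_comm
  rw [hrec, ← Finset.sum_add_distrib]
  simp [residualSymbol, ← add_mul, Matrix.one_apply, apply_ite Complex.ofReal]

variable {G : κ × Fin 3 → EuclideanSpace ℝ (Fin 3) → ℂ} {c : Matrix ν (κ × Fin 3) ℝ}

lemma IsEllipticMatrix.eq_matrixMultiplierOp_add (hc : IsEllipticMatrix c)
    (hF : ∀ r, IsTestFunction (G r)) (p : κ × Fin 3) :
    G p = matrixMultiplierOp (tensorReconstruction c) (matrixMul c G) p +
      matrixMultiplierOp (residualSymbol c) G p := by
  have hT (n : ν) := (hc.isHomogeneousSymbol_tensorReconstruction p n).ofReal.isBoundedSymbol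
  have hR (r : κ × Fin 3) := (hc.isHomogeneousSymbol_residualSymbol p r).ofReal.isBoundedSymbol
  have hcG := isTestFunction_matrixMul c hF
  rw [matrixMultiplierOp_eq_fourier hT hcG, matrixMultiplierOp_eq_fourier hR hF,
    ← fourier_add (integrable_finsetSum _ fun n _ => (hT n).integrable_mul_fourierInv (hcG n))
      (integrable_finsetSum _ fun r _ => (hR r).integrable_mul_fourierInv (hF r))]
  simp only [fourierInv_matrixMul c hF]
  rw [funext fun ξ => sum_tensorReconstruction_add_sum_residualSymbol c ξ p fun r => 𝓕⁻ (G r) ξ]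
  exact (hF p).fourier_fourierInv.symm

lemma IsEllipticMatrix.fderiv_residual_eq (hc : IsEllipticMatrix c)
    (hF : ∀ r, IsTestFunction (G r)) (p : κ × Fin 3) (q : Fin 3) (x : EuclideanSpace ℝ (Fin 3)) :
    fderiv ℝ (matrixMultiplierOp (residualSymbol c) G p) x (.single q 1) =
      matrixMultiplierOp (curlSymbol c q) (rowCurl G) p x := by
  have hR (r : κ × Fin 3) := (hc.isHomogeneousSymbol_residualSymbol p r).ofReal.isBoundedSymbol
  have hS (s : (κ × Fin 3) × Fin 3) :=
    (hc.isHomogeneousSymbol_curlSymbol q p s).ofReal.isBoundedSymbol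
  rw [fderiv_matrixMultiplierOp hR hF]
  refine congrFun (matrixMultiplierOp_congr hR (fun r => (hF r).fderiv_apply _) hS
    (isTestFunction_rowCurl hF) fun ξ hξ => ?_) x
  have h := congrArg (-(2 * Real.pi * Complex.I : ℂ) * ·)
    (hc.mul_sum_residualSymbol_mul hξ q p fun r => 𝓕⁻ (G r) ξ)
  simp only [Finset.mul_sum] at h
  simp only [fourierInv_rowCurl hF, (hF _).fourierInv_fderiv_single]
  convert h using 2 <;> ring

end EllipticDecomposition

section EuclideanEstimate

lemma norm_clm_le_sum {ι : Type*} [Fintype ι] [DecidableEq ι] {F : Type*} [NormedAddCommGroup F]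
    [NormedSpace ℝ F] (L : EuclideanSpace ℝ ι →L[ℝ] F) : ‖L‖ ≤ ∑ q, ‖L (.single q 1)‖ := by
  refine L.opNorm_le_bound (Finset.sum_nonneg fun _ _ => norm_nonneg _) fun v => ?_
  have hv : L v = ∑ q, v q • L (.single q 1) := by
    conv_lhs => rw [← (EuclideanSpace.basisFun ι ℝ).sum_repr v]
    simp only [map_sum, map_smul, EuclideanSpace.basisFun_repr, EuclideanSpace.basisFun_apply]
  rw [hv, Finset.sum_mul]
  refine norm_sum_le_of_le _ fun q _ => ?_
  rw [norm_smul, mul_comm]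
  gcongr
  exact PiLp.norm_apply_le v q

lemma eLpNorm_fderiv_le_sum {ι : Type*} [Fintype ι] [DecidableEq ι] {F : Type*}
    [NormedAddCommGroup F] [NormedSpace ℝ F] {w : EuclideanSpace ℝ ι → F} (hw : ContDiff ℝ 1 w)
    {r : ℝ≥0∞} (hr : 1 ≤ r) :
    eLpNorm (fderiv ℝ w) r volume ≤
      ∑ q, eLpNorm (fun x => fderiv ℝ w x (.single q 1)) r volume := by
  have hcont (q : ι) : Continuous fun x => fderiv ℝ w x (.single q 1) :=
    (hw.continuous_fderiv one_ne_zero).clm_apply continuous_const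
  calc eLpNorm (fderiv ℝ w) r volume
      ≤ eLpNorm (∑ q, fun x => ‖fderiv ℝ w x (.single q 1)‖) r volume :=
        eLpNorm_mono_real fun x => by
          rw [Finset.sum_apply]
          exact norm_clm_le_sum _
    _ ≤ ∑ q, eLpNorm (fun x => ‖fderiv ℝ w x (.single q 1)‖) r volume :=
        eLpNorm_sum_le (fun q _ => (hcont q).norm.aestronglyMeasurable) hr
    _ = ∑ q, eLpNorm (fun x => fderiv ℝ w x (.single q 1)) r volume := by
        simp only [eLpNorm_norm]

variable {ν κ : Type*} [Fintype ν] [Fintype κ] {c : Matrix ν (κ × Fin 3) ℝ} {p p' : ℝ≥0}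

lemma IsEllipticMatrix.exists_eLpNorm_fderiv_residual_le [DecidableEq κ] (hc : IsEllipticMatrix c)
    (i : κ × Fin 3) (hp : 1 < p) :
    ∃ C : ℝ≥0, ∀ F, (∀ r, IsTestFunction (F r)) →
      eLpNorm (fderiv ℝ (matrixMultiplierOp (residualSymbol c) F i)) p volume ≤
        C * ∑ s, eLpNorm (rowCurl F s) p volume := by
  choose C hC using fun q => exists_eLpNorm_matrixMultiplierOp_le
    (hc.isHomogeneousSymbol_curlSymbol q i) hp
  refine ⟨∑ q, C q, fun F hF => ?_⟩
  have hw := contDiff_matrixMultiplierOp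
    (fun r => (hc.isHomogeneousSymbol_residualSymbol i r).ofReal.isBoundedSymbol) hF
  calc eLpNorm (fderiv ℝ (matrixMultiplierOp (residualSymbol c) F i)) p volume
      ≤ ∑ q, eLpNorm (matrixMultiplierOp (curlSymbol c q) (rowCurl F) i) p volume := by
        simpa only [hc.fderiv_residual_eq hF] using
          eLpNorm_fderiv_le_sum (hw.of_le (by simp)) (by exact_mod_cast hp.le)
    _ ≤ ∑ q, C q * ∑ s, eLpNorm (rowCurl F s) p volume :=
        Finset.sum_le_sum fun q _ => hC q _ (isTestFunction_rowCurl hF)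
    _ = (∑ q, C q : ℝ≥0) * ∑ s, eLpNorm (rowCurl F s) p volume := by
        rw [← Finset.sum_mul, ENNReal.ofNNReal_finsetSum]

lemma IsEllipticMatrix.exists_eLpNorm_residual_le [DecidableEq κ] (hc : IsEllipticMatrix c)
    (i : κ × Fin 3) (hp : 1 < p) (hp' : (p' : ℝ)⁻¹ = (p : ℝ)⁻¹ - 3⁻¹) :
    ∃ C : ℝ≥0, ∀ F, (∀ r, IsTestFunction (F r)) →
      eLpNorm (matrixMultiplierOp (residualSymbol c) F i) p' volume ≤
        C * ∑ s, eLpNorm (rowCurl F s) p volume := by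
  obtain ⟨S, hS⟩ := exists_eLpNorm_le_eLpNorm_fderiv (EuclideanSpace ℝ (Fin 3)) ℂ hp.le
    (by simp) (by simpa using hp')
  obtain ⟨K, hK⟩ := hc.exists_eLpNorm_fderiv_residual_le i hp
  obtain ⟨R, hR⟩ := exists_eLpNorm_matrixMultiplierOp_le (hc.isHomogeneousSymbol_residualSymbol i)
    hp
  refine ⟨S * K, fun F hF => ?_⟩
  have hw := contDiff_matrixMultiplierOp
    (fun r => (hc.isHomogeneousSymbol_residualSymbol i r).ofReal.isBoundedSymbol) hF
  have hfin : eLpNorm (matrixMultiplierOp (residualSymbol c) F i) p volume ≠ ⊤ :=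
    ne_top_of_le_ne_top (ENNReal.mul_ne_top ENNReal.coe_ne_top <| ENNReal.sum_ne_top.2 fun r _ =>
      ((hF r).contDiff.continuous.memLp_of_hasCompactSupport
        (hF r).hasCompactSupport).eLpNorm_ne_top) (hR F hF)
  rw [ENNReal.coe_mul, mul_assoc]
  exact (hS _ (hw.of_le (by simp)) hfin).trans (by gcongr; exact hK F hF)

lemma IsEllipticMatrix.exists_eLpNorm_le (hc : IsEllipticMatrix c) (i : κ × Fin 3) (hp : 1 < p)
    (hp' : (p' : ℝ)⁻¹ = (p : ℝ)⁻¹ - 3⁻¹) (hpp' : 1 < p') :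
    ∃ C : ℝ≥0, ∀ F, (∀ r, IsTestFunction (F r)) →
      eLpNorm (F i) p' volume ≤
        C * (∑ n, eLpNorm (matrixMul c F n) p' volume + ∑ s, eLpNorm (rowCurl F s) p volume) := by
  classical
  obtain ⟨T, hT⟩ := exists_eLpNorm_matrixMultiplierOp_le
    (hc.isHomogeneousSymbol_tensorReconstruction i) hpp'
  obtain ⟨R, hR⟩ := hc.exists_eLpNorm_residual_le i hp hp'
  refine ⟨T + R, fun F hF => ?_⟩
  have hcF := isTestFunction_matrixMul c hF
  have hcont₁ := (contDiff_matrixMultiplierOp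
    (fun n => (hc.isHomogeneousSymbol_tensorReconstruction i n).ofReal.isBoundedSymbol)
    hcF).continuous
  have hcont₂ := (contDiff_matrixMultiplierOp
    (fun r => (hc.isHomogeneousSymbol_residualSymbol i r).ofReal.isBoundedSymbol) hF).continuous
  calc eLpNorm (F i) p' volume
      ≤ eLpNorm (matrixMultiplierOp (tensorReconstruction c) (matrixMul c F) i) p' volume +
          eLpNorm (matrixMultiplierOp (residualSymbol c) F i) p' volume := by
        conv_lhs => rw [hc.eq_matrixMultiplierOp_add hF i]
        exact eLpNorm_add_le hcont₁.aestronglyMeasurable hcont₂.aestronglyMeasurable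
          (by exact_mod_cast hpp'.le)
    _ ≤ T * ∑ n, eLpNorm (matrixMul c F n) p' volume +
          R * ∑ s, eLpNorm (rowCurl F s) p volume := add_le_add (hT _ hcF) (hR F hF)
    _ ≤ (T + R : ℝ≥0) * (∑ n, eLpNorm (matrixMul c F n) p' volume +
          ∑ s, eLpNorm (rowCurl F s) p volume) := by
        rw [mul_add, ENNReal.coe_add]
        gcongr
        · exact le_self_add
        · exact le_add_self

end EuclideanEstimate

section Complexification

open scoped ContDiff

variable {ι : Type*}

/-- The complexification of a real function on `ι → ℝ`, read on the Euclidean space over the same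
coordinates, where the inner product needed by the Fourier transform is available. -/
def complexify (f : (ι → ℝ) → ℝ) (y : EuclideanSpace ℝ ι) : ℂ := f (WithLp.ofLp y)

variable {f : (ι → ℝ) → ℝ}

lemma fderiv_complexify [Finite ι] (hf : Differentiable ℝ f) (y v : EuclideanSpace ℝ ι) :
    fderiv ℝ (complexify f) y v = (fderiv ℝ f (WithLp.ofLp y) (WithLp.ofLp v) : ℂ) := by
  have := Fintype.ofFinite ι
  have h := Complex.ofRealCLM.hasFDerivAt.comp y
    ((hf (WithLp.ofLp y)).hasFDerivAt.comp y (EuclideanSpace.equiv ι ℝ).hasFDerivAt)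
  exact congrArg (· v) (HasFDerivAt.fderiv (f := complexify f) h)

variable [Fintype ι]

lemma isTestFunction_complexify (hf : ContDiff ℝ ∞ f) (hs : HasCompactSupport f) :
    IsTestFunction (complexify f) where
  contDiff := Complex.ofRealCLM.contDiff.comp (hf.comp (EuclideanSpace.equiv ι ℝ).contDiff)
  hasCompactSupport :=
    (hs.comp_homeomorph (EuclideanSpace.equiv ι ℝ).toHomeomorph).comp_left Complex.ofReal_zero

lemma eLpNorm_complexify (hf : Continuous f) (r : ℝ≥0∞) :
    eLpNorm (complexify f) r volume = eLpNorm f r volume :=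
  calc eLpNorm (complexify f) r volume
      = eLpNorm (f ∘ WithLp.ofLp) r (volume : Measure (EuclideanSpace ℝ ι)) :=
        eLpNorm_congr_norm_ae (.of_forall fun _ => Complex.norm_real _)
    _ = eLpNorm f r volume :=
        eLpNorm_comp_measurePreserving hf.aestronglyMeasurable (PiLp.volume_preserving_ofLp ι)

end Complexification

section RealFields

open scoped ContDiff

variable {ν κ ι : Type*}

/-- The matrix of a linear map on matrices with respect to the elementary matrices; it is the
input of `operatorSymbol` and `matrixMul`. -/
def matrixOf [DecidableEq κ] [DecidableEq ι] (A : (κ → ι → ℝ) →ₗ[ℝ] (ν → ℝ)) :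
    Matrix ν (κ × ι) ℝ :=
  fun n r => A (Pi.single r.1 (Pi.single r.2 1)) n

lemma apply_eq_sum_matrixOf [DecidableEq κ] [DecidableEq ι] [Fintype κ] [Fintype ι]
    (A : (κ → ι → ℝ) →ₗ[ℝ] (ν → ℝ)) (v : κ → ι → ℝ) (n : ν) :
    A v n = ∑ r, matrixOf A n r * v r.1 r.2 := by
  have hv : v = ∑ r : κ × ι, v r.1 r.2 • Pi.single r.1 (Pi.single r.2 (1 : ℝ)) := by
    ext a b
    simp [Fintype.sum_prod_type, Finset.sum_apply, Pi.single_apply, ite_apply]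
  conv_lhs => rw [hv]
  simp only [map_sum, map_smul, Finset.sum_apply, Pi.smul_apply, smul_eq_mul, matrixOf, mul_comm]

/-- The complexified components of a real matrix field. -/
def complexifyField (F : (ι → ℝ) → κ → ι → ℝ) (r : κ × ι) : EuclideanSpace ℝ ι → ℂ :=
  complexify fun x => F x r.1 r.2

variable [Fintype κ] [Fintype ι]

lemma norm_le_sum_norm_apply (v : κ → ι → ℝ) : ‖v‖ ≤ ∑ r : κ × ι, ‖v r.1 r.2‖ := by
  refine (pi_norm_le_iff_of_nonneg (by positivity)).2 fun k =>
    (pi_norm_le_iff_of_nonneg (by positivity)).2 fun l => ?_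
  exact Finset.single_le_sum (f := fun r : κ × ι => ‖v r.1 r.2‖) (fun _ _ => norm_nonneg _)
    (Finset.mem_univ (k, l))

variable {F : (ι → ℝ) → κ → ι → ℝ}

lemma isTestFunction_complexifyField (hF : ContDiff ℝ ∞ F) (hs : HasCompactSupport F)
    (r : κ × ι) : IsTestFunction (complexifyField F r) :=
  isTestFunction_complexify (contDiff_pi.1 (contDiff_pi.1 hF r.1) r.2)
    (hs.comp_left (g := fun v : κ → ι → ℝ => v r.1 r.2) rfl)

lemma eLpNorm_le_sum_complexifyField (hF : Continuous F) {q : ℝ≥0∞} (hq : 1 ≤ q) :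
    eLpNorm F q volume ≤ ∑ r, eLpNorm (complexifyField F r) q volume := by
  have hcont (r : κ × ι) : Continuous fun x => F x r.1 r.2 :=
    (continuous_apply_apply r.1 r.2).comp hF
  calc eLpNorm F q volume
      ≤ eLpNorm (∑ r : κ × ι, fun x => ‖F x r.1 r.2‖) q volume :=
        eLpNorm_mono_real fun x => by
          rw [Finset.sum_apply]
          exact norm_le_sum_norm_apply _
    _ ≤ ∑ r : κ × ι, eLpNorm (fun x => ‖F x r.1 r.2‖) q volume :=
        eLpNorm_sum_le (fun r _ => (hcont r).norm.aestronglyMeasurable) hq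
    _ = ∑ r, eLpNorm (complexifyField F r) q volume := by
        simp only [eLpNorm_norm, complexifyField, eLpNorm_complexify (hcont _)]

lemma eLpNorm_matrixMul_complexifyField_le [DecidableEq κ] [DecidableEq ι] [Fintype ν]
    (A : (κ → ι → ℝ) →ₗ[ℝ] (ν → ℝ)) (hF : Continuous F) (n : ν) (q : ℝ≥0∞) :
    eLpNorm (matrixMul (matrixOf A) (complexifyField F) n) q volume ≤
      eLpNorm (fun x => A (F x)) q volume := by
  have heq : matrixMul (matrixOf A) (complexifyField F) n = complexify fun x => A (F x) n := by
    ext y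
    simp only [matrixMul, complexifyField, complexify, apply_eq_sum_matrixOf A, Complex.ofReal_sum,
      Complex.ofReal_mul]
  have hcont : Continuous fun x => A (F x) n :=
    (continuous_apply n).comp (A.continuous_of_finiteDimensional.comp hF)
  rw [heq, eLpNorm_complexify hcont]
  exact eLpNorm_mono fun x => norm_le_pi_norm (A (F x)) n

end RealFields

section ThreeDimensional

open scoped ContDiff

variable {F : (Fin 3 → ℝ) → Fin 3 → Fin 3 → ℝ} {N : ℕ}
  {A : (Fin 3 → Fin 3 → ℝ) →ₗ[ℝ] (Fin N → ℝ)}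

lemma isEllipticMatrix_matrixOf (hA : IsElliptic A) : IsEllipticMatrix (matrixOf A) := by
  intro ξ hξ v w hvw
  refine hA (WithLp.ofLp ξ) (by simpa using hξ) (funext fun n => ?_)
  have happly (u : Fin 3 → ℝ) :
      A (fun i j => u i * ξ j) n = (operatorSymbol (matrixOf A) ξ).mulVec u n := by
    simp only [apply_eq_sum_matrixOf, Fintype.sum_prod_type, Matrix.mulVec, dotProduct,
      operatorSymbol, Finset.sum_mul, mul_assoc, mul_comm (u _)]
  exact (happly v).trans ((congrFun hvw n).trans (happly w).symm)

lemma norm_sub_pd_le_norm_mcurl (F : (Fin 3 → ℝ) → Fin 3 → Fin 3 → ℝ) (x : Fin 3 → ℝ)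
    (k l m : Fin 3) :
    ‖pd m (fun y => F y k l) x - pd l (fun y => F y k m) x‖ ≤ ‖mcurl F x‖ := by
  have hle (a : Fin 3) : ‖mcurl F x k a‖ ≤ ‖mcurl F x‖ :=
    (norm_le_pi_norm (mcurl F x k) a).trans (norm_le_pi_norm (mcurl F x) k)
  fin_cases l <;> fin_cases m
  · simp
  · exact (norm_sub_rev _ _).trans_le (hle 2)
  · exact hle 1
  · exact hle 2
  · simp
  · exact (norm_sub_rev _ _).trans_le (hle 0)
  · exact (norm_sub_rev _ _).trans_le (hle 1)
  · exact hle 0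
  · simp

lemma support_mcurl_subset (F : (Fin 3 → ℝ) → Fin 3 → Fin 3 → ℝ) :
    Function.support (mcurl F) ⊆ tsupport F := by
  refine fun x => Function.mtr fun hx => Function.notMem_support.2 ?_
  have hpd (j k l : Fin 3) : pd j (fun y => F y k l) x = 0 := by
    have hzero : (fun y => F y k l) =ᶠ[nhds x] fun _ => 0 :=
      (notMem_tsupport_iff_eventuallyEq.1 hx).fun_comp fun v => v k l
    rw [pd, hzero.fderiv_eq, fderiv_fun_const, Pi.zero_apply, zero_apply]
  ext i a
  fin_cases a <;> simp [mcurl, hpd]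

lemma eLpNorm_rowCurl_complexifyField_le (hF : ContDiff ℝ ∞ F) (s : (Fin 3 × Fin 3) × Fin 3)
    (q : ℝ≥0∞) :
    eLpNorm (rowCurl (complexifyField F) s) q volume ≤ eLpNorm (mcurl F) q volume := by
  obtain ⟨⟨k, l⟩, m⟩ := s
  have hdiff (k l : Fin 3) : ContDiff ℝ ∞ fun x => F x k l :=
    contDiff_pi.1 (contDiff_pi.1 hF k) l
  have hpd (j k l : Fin 3) : Continuous (pd j fun y => F y k l) :=
    ((hdiff k l).continuous_fderiv (by simp)).clm_apply continuous_const
  have heq : rowCurl (complexifyField F) ((k, l), m) =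
      complexify fun x => pd m (fun y => F y k l) x - pd l (fun y => F y k m) x := by
    ext y
    simp only [rowCurl, complexifyField, complexify, pd, Complex.ofReal_sub,
      fderiv_complexify ((hdiff _ _).differentiable (by simp)), PiLp.ofLp_single]
  have hcont : Continuous fun x => pd m (fun y => F y k l) x - pd l (fun y => F y k m) x :=
    (hpd m k l).sub (hpd l k m)
  rw [heq, eLpNorm_complexify hcont]
  exact eLpNorm_mono fun x => norm_sub_pd_le_norm_mcurl F x k l m

lemma exists_eLpNorm_complexifyField_le (hA : IsElliptic A) (i : Fin 3 × Fin 3)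
    {p p' : ℝ≥0} (hp : 1 < p) (hp' : (p' : ℝ)⁻¹ = (p : ℝ)⁻¹ - 3⁻¹) (hpp' : 1 < p') :
    ∃ C : ℝ≥0, ∀ F, ContDiff ℝ ∞ F → HasCompactSupport F →
      eLpNorm (complexifyField F i) p' volume ≤
        C * (eLpNorm (fun x => A (F x)) p' volume + eLpNorm (mcurl F) p volume) := by
  obtain ⟨C, hC⟩ := (isEllipticMatrix_matrixOf hA).exists_eLpNorm_le i hp hp' hpp'
  refine ⟨C * (N + 27), fun F hF hs => ?_⟩
  calc eLpNorm (complexifyField F i) p' volume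
      ≤ C * (∑ n, eLpNorm (matrixMul (matrixOf A) (complexifyField F) n) p' volume +
          ∑ s, eLpNorm (rowCurl (complexifyField F) s) p volume) :=
        hC _ (isTestFunction_complexifyField hF hs)
    _ ≤ C * (∑ _n : Fin N, eLpNorm (fun x => A (F x)) p' volume +
          ∑ _s : (Fin 3 × Fin 3) × Fin 3, eLpNorm (mcurl F) p volume) := by
        gcongr with n _ s _
        · exact eLpNorm_matrixMul_complexifyField_le A hF.continuous n _
        · exact eLpNorm_rowCurl_complexifyField_le hF s _
    _ = C * (N * eLpNorm (fun x => A (F x)) p' volume + 27 * eLpNorm (mcurl F) p volume) := by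
        simp
    _ ≤ C * ((N + 27) * eLpNorm (fun x => A (F x)) p' volume +
          (N + 27) * eLpNorm (mcurl F) p volume) := by
        gcongr
        · exact le_self_add
        · exact le_add_self
    _ = (C * (N + 27) : ℝ≥0) *
          (eLpNorm (fun x => A (F x)) p' volume + eLpNorm (mcurl F) p volume) := by
        push_cast
        ring

lemma exists_eLpNorm_le_of_isElliptic (hA : IsElliptic A) {p p' : ℝ≥0} (hp : 1 < p)
    (hp' : (p' : ℝ)⁻¹ = (p : ℝ)⁻¹ - 3⁻¹) (hpp' : 1 < p') :
    ∃ C : ℝ≥0, ∀ F, ContDiff ℝ ∞ F → HasCompactSupport F →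
      eLpNorm F p' volume ≤
        C * (eLpNorm (fun x => A (F x)) p' volume + eLpNorm (mcurl F) p volume) := by
  choose C hC using fun i => exists_eLpNorm_complexifyField_le hA i hp hp' hpp'
  refine ⟨∑ i, C i, fun F hF hs => ?_⟩
  calc eLpNorm F p' volume
      ≤ ∑ i, eLpNorm (complexifyField F i) p' volume :=
        eLpNorm_le_sum_complexifyField hF.continuous (by exact_mod_cast hpp'.le)
    _ ≤ ∑ i, C i * (eLpNorm (fun x => A (F x)) p' volume + eLpNorm (mcurl F) p volume) :=
        Finset.sum_le_sum fun i _ => hC i F hF hs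
    _ = (∑ i, C i : ℝ≥0) *
          (eLpNorm (fun x => A (F x)) p' volume + eLpNorm (mcurl F) p volume) := by
        rw [← Finset.sum_mul, ENNReal.ofNNReal_finsetSum]

lemma eLpNorm_restrict_le_of_tsupport_subset {p p' C : ℝ≥0∞}
    (h : eLpNorm F p' volume ≤
      C * (eLpNorm (fun x => A (F x)) p' volume + eLpNorm (mcurl F) p volume))
    {Ω : Set (Fin 3 → ℝ)} (hΩ : tsupport F ⊆ Ω) :
    eLpNorm F p' (volume.restrict Ω) ≤
      C * (eLpNorm (fun x => A (F x)) p' (volume.restrict Ω) +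
        eLpNorm (mcurl F) p (volume.restrict Ω)) := by
  have hFΩ : Function.support F ⊆ Ω := (subset_tsupport F).trans hΩ
  have hAΩ : Function.support (fun x => A (F x)) ⊆ Ω :=
    (Function.support_comp_subset (map_zero A) F).trans hFΩ
  rwa [eLpNorm_restrict_eq_of_support_subset hFΩ, eLpNorm_restrict_eq_of_support_subset hAΩ,
    eLpNorm_restrict_eq_of_support_subset ((support_mcurl_subset F).trans hΩ)]

end ThreeDimensional

end KornMaxwellSobolev

/-- Korn–Maxwell–Sobolev inequality (sufficiency, `1 < p < 3`): if `A` induces an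
elliptic operator, then `‖F‖_{L^{p*}(Ω)} ≤ c(‖A[F]‖_{L^{p*}(Ω)} + ‖curl F‖_{Lᵖ(Ω)})`
with `p* = 3p/(3-p)` for all open `Ω ⊂ ℝ³` and `F ∈ C_c^∞(Ω; ℝ^{3×3})`. -/
theorem korn_maxwell_sobolev_sufficiency (N : ℕ)
    (A : (Fin 3 → Fin 3 → ℝ) →ₗ[ℝ] (Fin N → ℝ)) (hA : IsElliptic A)
    (p : ℝ) (hp1 : 1 < p) (hp3 : p < 3) :
    ∃ c : ℝ, 0 < c ∧
      ∀ Ω : Set (Fin 3 → ℝ), IsOpen Ω →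
        ∀ F : (Fin 3 → ℝ) → Fin 3 → Fin 3 → ℝ,
          ContDiff ℝ (⊤ : ℕ∞) F → HasCompactSupport F → tsupport F ⊆ Ω →
            eLpNorm F (ENNReal.ofReal (3 * p / (3 - p))) (volume.restrict Ω) ≤
              ENNReal.ofReal c *
                (eLpNorm (fun x => A (F x)) (ENNReal.ofReal (3 * p / (3 - p)))
                    (volume.restrict Ω) +
                  eLpNorm (fun x => mcurl F x) (ENNReal.ofReal p)
                    (volume.restrict Ω)) := by
  have h3p : 0 < 3 - p := sub_pos.2 hp3
  have hp' : 1 < 3 * p / (3 - p) := (one_lt_div h3p).2 (by linarith)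
  have hconj : (3 * p / (3 - p))⁻¹ = p⁻¹ - 3⁻¹ := by field_simp
  obtain ⟨C, hC⟩ := KornMaxwellSobolev.exists_eLpNorm_le_of_isElliptic hA (p := p.toNNReal)
    (p' := (3 * p / (3 - p)).toNNReal)
    (Real.one_lt_toNNReal.2 hp1)
    (by rwa [Real.coe_toNNReal _ (by positivity), Real.coe_toNNReal _ (by positivity)])
    (Real.one_lt_toNNReal.2 hp')
  have hCle : (C : ℝ≥0∞) ≤ ENNReal.ofReal (C + 1) := by
    simp [ENNReal.ofReal_add]
  exact ⟨C + 1, by positivity, fun Ω _ F hF hs hΩ =>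
    KornMaxwellSobolev.eLpNorm_restrict_le_of_tsupport_subset
      ((hC F hF hs).trans (mul_le_mul' hCle le_rfl)) hΩ⟩
end

section
/- (Korn–Maxwell–Sobolev, necessity) Let 1 ≤ p < 3 and A ∈ 𝓛(ℝ^{3×3}; ℝᴺ). If there is a constant c > 0 such that ‖F‖_{L^{p*}(ℝ³)} ≤ c(‖A[F]‖_{L^{p*}(ℝ³)} + ‖curl F‖_{Lᵖ(ℝ³)}) for all F ∈ C_c^∞(ℝ³; ℝ^{3×3}), then the induced operator 𝔸u = A[∇u] is elliptic. -/
/-!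
Let `A[v ⊗ ξ] = 0` and test the inequality with gradients `F = Du` of plane waves
`u = φ sin(t ξ + θ) v`, which are curl-free. Differentiating the phase contributes the multiple
`t φ cos(t ξ + θ)` of `v ⊗ ξ`, which `A` annihilates, so `A[Du]` only sees the derivative of the
amplitude `φ` and stays bounded as `t → ∞`. On the other hand, rotating the waves with phases
`θ = 0` and `θ = π / 2` against each other recovers `t φ v ⊗ ξ` exactly, so the inequality bounds
`t ‖φ v ⊗ ξ‖` uniformly in `t`. Hence `v ⊗ ξ = 0`, and `v = 0` if `ξ ≠ 0`.
-/

open MeasureTheory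
open scoped ENNReal

lemma eq_zero_of_eLpNorm_smul_const_eq_zero {X W : Type*} [TopologicalSpace X]
    [SecondCountableTopology X] [MeasurableSpace X] [OpensMeasurableSpace X]
    [NormedAddCommGroup W] [NormedSpace ℝ W] {μ : Measure X} [μ.IsOpenPosMeasure] {q : ℝ≥0∞}
    (hq : q ≠ 0) {φ : X → ℝ} (hφ : Continuous φ) {x : X} (hx : φ x ≠ 0) {w : W}
    (h : eLpNorm (fun y => φ y • w) q μ = 0) : w = 0 := by
  have hcont : Continuous fun y => φ y • w := hφ.smul continuous_const
  have hae := (eLpNorm_eq_zero_iff hcont.aestronglyMeasurable hq).1 h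
  have hzero := (hcont.ae_eq_iff_eq μ continuous_zero).1 hae
  exact (smul_eq_zero.1 (congrFun hzero x)).resolve_left hx

section PlaneWaves

variable {E V W W' : Type*} [NormedAddCommGroup E] [NormedSpace ℝ E]
  [NormedAddCommGroup V] [NormedSpace ℝ V] [NormedAddCommGroup W] [NormedSpace ℝ W]
  [NormedAddCommGroup W'] [NormedSpace ℝ W']

/-- The principal symbol `v ↦ A[v ⊗ ξ]` at the covector `ξ` of the first-order differential
operator `u ↦ A[Du]`. The gradient `Du` is a continuous linear map, so `v ⊗ ξ` is `x ↦ ξ x • v`. -/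
noncomputable def principalSymbol (A : (E →L[ℝ] V) →L[ℝ] W) (ξ : E →L[ℝ] ℝ) : V →L[ℝ] W :=
  A.comp (ContinuousLinearMap.smulRightL ℝ E V ξ)

lemma principalSymbol_apply (A : (E →L[ℝ] V) →L[ℝ] W) (ξ : E →L[ℝ] ℝ) (v : V) :
    principalSymbol A ξ v = A (ξ.smulRight v) := rfl

lemma principalSymbol_smul (A : (E →L[ℝ] V) →L[ℝ] W) (t : ℝ) (ξ : E →L[ℝ] ℝ) :
    principalSymbol A (t • ξ) = t • principalSymbol A ξ := by
  simp only [principalSymbol, map_smul, ContinuousLinearMap.comp_smul]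

/-- The real plane wave with amplitude `φ`, wave covector `ξ`, phase shift `θ` and
polarization `v`. The frequency is part of `ξ`. -/
noncomputable def planeWave (φ : E → ℝ) (ξ : E →L[ℝ] ℝ) (θ : ℝ) (v : V) (x : E) : V :=
  (φ x * Real.sin (ξ x + θ)) • v

lemma contDiff_planeWave {n : WithTop ℕ∞} {φ : E → ℝ} (hφ : ContDiff ℝ n φ) (ξ : E →L[ℝ] ℝ)
    (θ : ℝ) (v : V) : ContDiff ℝ n (planeWave φ ξ θ v) := by
  unfold planeWave
  fun_prop

lemma hasCompactSupport_planeWave {φ : E → ℝ} (hφ : HasCompactSupport φ) (ξ : E →L[ℝ] ℝ)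
    (θ : ℝ) (v : V) : HasCompactSupport (planeWave φ ξ θ v) :=
  hφ.mul_right.smul_right

lemma hasFDerivAt_planeWave {φ : E → ℝ} {φ' : E →L[ℝ] ℝ} {x : E} (hφ : HasFDerivAt φ φ' x)
    (ξ : E →L[ℝ] ℝ) (θ : ℝ) (v : V) :
    HasFDerivAt (planeWave φ ξ θ v)
      ((φ x * Real.cos (ξ x + θ)) • ξ.smulRight v + Real.sin (ξ x + θ) • φ'.smulRight v) x := by
  refine ((hφ.mul (ξ.hasFDerivAt.add_const θ).sin).smul_const v).congr_fderiv ?_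
  ext y
  simp only [add_apply, smul_apply, ContinuousLinearMap.smulRight_apply, smul_eq_mul]
  module

lemma map_fderiv_planeWave (A : (E →L[ℝ] V) →L[ℝ] W) {φ : E → ℝ} {x : E}
    (hφ : DifferentiableAt ℝ φ x) (ξ : E →L[ℝ] ℝ) (θ : ℝ) (v : V) :
    A (fderiv ℝ (planeWave φ ξ θ v) x) =
      (φ x * Real.cos (ξ x + θ)) • principalSymbol A ξ v +
        Real.sin (ξ x + θ) • principalSymbol A (fderiv ℝ φ x) v := by
  simp only [(hasFDerivAt_planeWave hφ.hasFDerivAt ξ θ v).fderiv, map_add, map_smul,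
    principalSymbol_apply]

lemma norm_map_fderiv_planeWave_le_of_principalSymbol_eq_zero {A : (E →L[ℝ] V) →L[ℝ] W}
    {φ : E → ℝ} {x : E} (hφ : DifferentiableAt ℝ φ x) {ξ : E →L[ℝ] ℝ} {v : V}
    (hv : principalSymbol A ξ v = 0) (θ : ℝ) :
    ‖A (fderiv ℝ (planeWave φ ξ θ v) x)‖ ≤ ‖principalSymbol A (fderiv ℝ φ x) v‖ := by
  rw [map_fderiv_planeWave A hφ, hv, smul_zero, zero_add, norm_smul]
  exact mul_le_of_le_one_left (norm_nonneg _) (Real.abs_sin_le_one _)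

lemma norm_smul_principalSymbol_le (B : (E →L[ℝ] V) →L[ℝ] W) {φ : E → ℝ} {x : E}
    (hφ : DifferentiableAt ℝ φ x) (ξ : E →L[ℝ] ℝ) (v : V) :
    ‖φ x • principalSymbol B ξ v‖ ≤
      ‖B (fderiv ℝ (planeWave φ ξ 0 v) x)‖ +
        ‖B (fderiv ℝ (planeWave φ ξ (Real.pi / 2) v) x)‖ := by
  have rotation : φ x • principalSymbol B ξ v =
      Real.cos (ξ x) • B (fderiv ℝ (planeWave φ ξ 0 v) x) -
        Real.sin (ξ x) • B (fderiv ℝ (planeWave φ ξ (Real.pi / 2) v) x) := by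
    calc φ x • principalSymbol B ξ v
        = (φ x * (Real.cos (ξ x) ^ 2 + Real.sin (ξ x) ^ 2)) • principalSymbol B ξ v := by
          rw [Real.cos_sq_add_sin_sq, mul_one]
      _ = _ := by
          simp only [map_fderiv_planeWave B hφ, add_zero, Real.cos_add_pi_div_two,
            Real.sin_add_pi_div_two]
          module
  rw [rotation]
  refine (norm_sub_le _ _).trans (add_le_add ?_ ?_) <;> rw [norm_smul]
  · exact mul_le_of_le_one_left (norm_nonneg _) (Real.abs_cos_le_one _)
  · exact mul_le_of_le_one_left (norm_nonneg _) (Real.abs_sin_le_one _)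

variable [MeasurableSpace E] [OpensMeasurableSpace E] {μ : Measure E} {q c : ℝ≥0∞}
  {A : (E →L[ℝ] V) →L[ℝ] W} {B : (E →L[ℝ] V) →L[ℝ] W'}

/- The right-hand side does not depend on `ξ`, while the left-hand side is homogeneous in it. -/
lemma eLpNorm_smul_principalSymbol_le
    (h : ∀ u : E → V, ContDiff ℝ (⊤ : ℕ∞) u → HasCompactSupport u →
      eLpNorm (fun x => B (fderiv ℝ u x)) q μ ≤ c * eLpNorm (fun x => A (fderiv ℝ u x)) q μ)
    {φ : E → ℝ} (hφ : ContDiff ℝ (⊤ : ℕ∞) φ) (hφc : HasCompactSupport φ)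
    {ξ : E →L[ℝ] ℝ} {v : V} (hv : principalSymbol A ξ v = 0) :
    eLpNorm (fun x => φ x • principalSymbol B ξ v) q μ ≤
      ENNReal.LpAddConst q *
        (2 * (c * eLpNorm (fun x => principalSymbol A (fderiv ℝ φ x) v) q μ)) := by
  have hφd : Differentiable ℝ φ := hφ.differentiable (by simp)
  let waveNorm (θ : ℝ) (x : E) : ℝ := ‖B (fderiv ℝ (planeWave φ ξ θ v) x)‖
  have waveNorm_measurable (θ : ℝ) : AEStronglyMeasurable (waveNorm θ) μ :=
    (B.continuous.comp ((contDiff_planeWave hφ ξ θ v).continuous_fderiv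
      (by simp))).norm.aestronglyMeasurable
  have waveNorm_le (θ : ℝ) : eLpNorm (waveNorm θ) q μ ≤
      c * eLpNorm (fun x => principalSymbol A (fderiv ℝ φ x) v) q μ := by
    calc eLpNorm (waveNorm θ) q μ
        = eLpNorm (fun x => B (fderiv ℝ (planeWave φ ξ θ v) x)) q μ := eLpNorm_norm _
      _ ≤ c * eLpNorm (fun x => A (fderiv ℝ (planeWave φ ξ θ v) x)) q μ :=
          h _ (contDiff_planeWave hφ ξ θ v) (hasCompactSupport_planeWave hφc ξ θ v)
      _ ≤ c * eLpNorm (fun x => principalSymbol A (fderiv ℝ φ x) v) q μ := by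
          gcongr
          exact eLpNorm_mono fun x =>
            norm_map_fderiv_planeWave_le_of_principalSymbol_eq_zero (hφd x) hv θ
  calc eLpNorm (fun x => φ x • principalSymbol B ξ v) q μ
      ≤ eLpNorm (waveNorm 0 + waveNorm (Real.pi / 2)) q μ :=
        eLpNorm_mono_real fun x => norm_smul_principalSymbol_le B (hφd x) ξ v
    _ ≤ ENNReal.LpAddConst q * (eLpNorm (waveNorm 0) q μ + eLpNorm (waveNorm (Real.pi / 2)) q μ) :=
        eLpNorm_add_le' (waveNorm_measurable 0) (waveNorm_measurable _) q
    _ ≤ ENNReal.LpAddConst q *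
          (2 * (c * eLpNorm (fun x => principalSymbol A (fderiv ℝ φ x) v) q μ)) := by
        rw [two_mul]
        gcongr <;> exact waveNorm_le _

lemma eLpNorm_principalSymbol_fderiv_ne_top [IsFiniteMeasureOnCompacts μ]
    (A : (E →L[ℝ] V) →L[ℝ] W) {φ : E → ℝ} (hφ : ContDiff ℝ 1 φ) (hφc : HasCompactSupport φ)
    (v : V) : eLpNorm (fun x => principalSymbol A (fderiv ℝ φ x) v) q μ ≠ ∞ := by
  have symbol_continuous : Continuous fun ω : E →L[ℝ] ℝ => principalSymbol A ω v := by
    unfold principalSymbol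
    fun_prop
  have symbol_zero : principalSymbol A 0 v = 0 := by simp [principalSymbol]
  exact ((symbol_continuous.comp (hφ.continuous_fderiv one_ne_zero)).memLp_of_hasCompactSupport
    ((hφc.fderiv ℝ).comp_left symbol_zero)).eLpNorm_ne_top

theorem ker_principalSymbol_le_of_eLpNorm_fderiv_le [FiniteDimensional ℝ E]
    [IsFiniteMeasureOnCompacts μ] [μ.IsOpenPosMeasure] (hq : q ≠ 0) (hc : c ≠ ∞)
    (h : ∀ u : E → V, ContDiff ℝ (⊤ : ℕ∞) u → HasCompactSupport u →
      eLpNorm (fun x => B (fderiv ℝ u x)) q μ ≤ c * eLpNorm (fun x => A (fderiv ℝ u x)) q μ)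
    (ξ : E →L[ℝ] ℝ) : (principalSymbol A ξ).ker ≤ (principalSymbol B ξ).ker := by
  intro v hv
  let φ : ContDiffBump (0 : E) := default
  let K : ℝ≥0∞ :=
    ENNReal.LpAddConst q * (2 * (c * eLpNorm (fun x => principalSymbol A (fderiv ℝ φ x) v) q μ))
  have hK : K ≠ ∞ := by
    have hAφ : eLpNorm (fun x => principalSymbol A (fderiv ℝ φ x) v) q μ ≠ ∞ :=
      eLpNorm_principalSymbol_fderiv_ne_top A φ.contDiff φ.hasCompactSupport v
    exact ENNReal.mul_ne_top (ENNReal.LpAddConst_lt_top q).ne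
      (ENNReal.mul_ne_top ENNReal.ofNat_ne_top (ENNReal.mul_ne_top hc hAφ))
  have bound (n : ℕ) : n * eLpNorm (fun x => φ x • principalSymbol B ξ v) q μ ≤ K := by
    have hnv : principalSymbol A ((n : ℝ) • ξ) v = 0 := by
      rw [principalSymbol_smul, smul_apply, show principalSymbol A ξ v = 0 from hv, smul_zero]
    calc n * eLpNorm (fun x => φ x • principalSymbol B ξ v) q μ
        = eLpNorm ((n : ℝ) • fun x => φ x • principalSymbol B ξ v) q μ := by
          rw [eLpNorm_const_smul, Real.enorm_natCast]
      _ = eLpNorm (fun x => φ x • principalSymbol B ((n : ℝ) • ξ) v) q μ := by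
          simp only [principalSymbol_smul, smul_apply, smul_comm (φ _),
            Pi.smul_def]
      _ ≤ K := eLpNorm_smul_principalSymbol_le h φ.contDiff φ.hasCompactSupport hnv
  have norm_eq_zero : eLpNorm (fun x => φ x • principalSymbol B ξ v) q μ = 0 := by
    by_contra hne
    obtain ⟨n, hn⟩ := ENNReal.exists_nat_mul_gt hne hK
    exact (bound n).not_gt hn
  have hφ0 : φ 0 ≠ 0 := (φ.pos_of_mem_ball (Metric.mem_ball_self φ.rOut_pos)).ne'
  exact eq_zero_of_eLpNorm_smul_const_eq_zero hq φ.continuous hφ0 norm_eq_zero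

end PlaneWaves

section JacobianMatrix

variable {m n : Type*} [Fintype m] [Fintype n] [DecidableEq n]

/-- The matrix of a continuous linear map in the standard bases. Matrices are plain functions here,
normed by the supremum of the entries. -/
noncomputable def matrixEntries : ((n → ℝ) →L[ℝ] (m → ℝ)) →L[ℝ] (m → n → ℝ) :=
  ContinuousLinearMap.pi fun i => ContinuousLinearMap.pi fun j =>
    (ContinuousLinearMap.proj i).comp (ContinuousLinearMap.apply ℝ (m → ℝ) (Pi.single j 1))

lemma matrixEntries_apply (T : (n → ℝ) →L[ℝ] (m → ℝ)) (i : m) (j : n) :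
    matrixEntries T i j = T (Pi.single j 1) i := rfl

/-- The covector `x ↦ ∑ k, ξ k * x k` with coordinates `ξ`. -/
noncomputable def covector (ξ : n → ℝ) : (n → ℝ) →L[ℝ] ℝ :=
  ∑ k, ξ k • ContinuousLinearMap.proj k

lemma principalSymbol_matrixEntries_covector (ξ : n → ℝ) (v : m → ℝ) :
    principalSymbol matrixEntries (covector ξ) v = fun i j => v i * ξ j := by
  ext i j
  simp [principalSymbol_apply, matrixEntries_apply, covector, Pi.single_apply, mul_comm]

lemma ker_principalSymbol_matrixEntries_covector {ξ : n → ℝ} (hξ : ξ ≠ 0) :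
    (principalSymbol (matrixEntries (m := m)) (covector ξ)).ker = ⊥ := by
  obtain ⟨j, hj⟩ := Function.ne_iff.1 hξ
  refine (Submodule.eq_bot_iff _).2 fun v hv => funext fun i => ?_
  have hprod : v i * ξ j = 0 := by
    have hv : principalSymbol matrixEntries (covector ξ) v = 0 := hv
    rw [principalSymbol_matrixEntries_covector] at hv
    exact congrFun (congrFun hv i) j
  exact (mul_eq_zero.1 hprod).resolve_right hj

lemma pd_matrixEntries_fderiv {u : (Fin 3 → ℝ) → m → ℝ} {x : Fin 3 → ℝ}
    (hu : DifferentiableAt ℝ (fderiv ℝ u) x) (i : m) (j k : Fin 3) :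
    pd j (fun y => matrixEntries (fderiv ℝ u y) i k) x =
      fderiv ℝ (fderiv ℝ u) x (Pi.single j 1) (Pi.single k 1) i := by
  let entry : ((Fin 3 → ℝ) →L[ℝ] (m → ℝ)) →L[ℝ] ℝ :=
    (ContinuousLinearMap.proj i).comp (ContinuousLinearMap.apply ℝ (m → ℝ) (Pi.single k 1))
  exact congrArg (fun T => T (Pi.single j 1)) (entry.hasFDerivAt.comp x hu.hasFDerivAt).fderiv

lemma mcurl_matrixEntries_fderiv {u : (Fin 3 → ℝ) → Fin 3 → ℝ} {x : Fin 3 → ℝ}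
    (hu : ContDiffAt ℝ 2 u x) : mcurl (fun y => matrixEntries (fderiv ℝ u y)) x = 0 := by
  have hdiff : DifferentiableAt ℝ (fderiv ℝ u) x :=
    (hu.fderiv_right (m := 1) (by norm_num)).differentiableAt one_ne_zero
  have schwarz : IsSymmSndFDerivAt ℝ u x := hu.isSymmSndFDerivAt (by simp)
  ext i j
  simp only [mcurl, pd_matrixEntries_fderiv hdiff, sub_self,
    schwarz.eq (Pi.single 1 1) (Pi.single 2 1), schwarz.eq (Pi.single 0 1) (Pi.single 2 1),
    schwarz.eq (Pi.single 0 1) (Pi.single 1 1)]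
  fin_cases j <;> rfl

end JacobianMatrix

theorem korn_maxwell_sobolev_necessity_general {W : Type*} [NormedAddCommGroup W]
    [NormedSpace ℝ W] (A : (Fin 3 → Fin 3 → ℝ) →ₗ[ℝ] W) {p q c : ℝ≥0∞} (hq : q ≠ 0) (hc : c ≠ ∞)
    (h : ∀ F : (Fin 3 → ℝ) → Fin 3 → Fin 3 → ℝ,
      ContDiff ℝ (⊤ : ℕ∞) F → HasCompactSupport F →
        eLpNorm F q volume ≤
          c * (eLpNorm (fun x => A (F x)) q volume + eLpNorm (fun x => mcurl F x) p volume))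
    (ξ : Fin 3 → ℝ) (hξ : ξ ≠ 0) :
    Function.Injective (fun v : Fin 3 → ℝ => A (fun i j => v i * ξ j)) := by
  let 𝔸 : ((Fin 3 → ℝ) →L[ℝ] (Fin 3 → ℝ)) →L[ℝ] W := A.toContinuousLinearMap.comp matrixEntries
  have gradient_bound (u : (Fin 3 → ℝ) → Fin 3 → ℝ) (hu : ContDiff ℝ (⊤ : ℕ∞) u)
      (huc : HasCompactSupport u) :
      eLpNorm (fun x => matrixEntries (fderiv ℝ u x)) q volume ≤
        c * eLpNorm (fun x => 𝔸 (fderiv ℝ u x)) q volume := by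
    have curl_free : (fun x => mcurl (fun y => matrixEntries (fderiv ℝ u y)) x) = 0 :=
      funext fun x => mcurl_matrixEntries_fderiv ((contDiff_infty.1 hu 2).contDiffAt)
    have bound := h (fun x => matrixEntries (fderiv ℝ u x))
      (matrixEntries.contDiff.fun_comp (hu.fderiv_right (m := (⊤ : ℕ∞)) (by simp)))
      ((huc.fderiv ℝ).comp_left (map_zero matrixEntries))
    rwa [curl_free, eLpNorm_zero, add_zero] at bound
  have ker_le := ker_principalSymbol_le_of_eLpNorm_fderiv_le hq hc gradient_bound (covector ξ)
  rw [ker_principalSymbol_matrixEntries_covector hξ, le_bot_iff] at ker_le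
  have symbol_eq (v : Fin 3 → ℝ) :
      principalSymbol 𝔸 (covector ξ) v = A (fun i j => v i * ξ j) :=
    congrArg A (principalSymbol_matrixEntries_covector ξ v)
  simpa only [← symbol_eq] using! LinearMap.ker_eq_bot.1 ker_le

/-- Korn–Maxwell–Sobolev inequality (necessity): for `1 ≤ p < 3`, if
`‖F‖_{L^{p*}} ≤ c(‖A[F]‖_{L^{p*}} + ‖curl F‖_{Lᵖ})` holds on `ℝ³` for all
`F ∈ C_c^∞(ℝ³; ℝ^{3×3})`, then the induced operator `𝔸u = A[∇u]` is elliptic, i.e.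
the symbol `v ↦ A[v ⊗ ξ]` is injective for all `ξ ≠ 0`. -/
theorem korn_maxwell_sobolev_necessity (N : ℕ)
    (A : (Fin 3 → Fin 3 → ℝ) →ₗ[ℝ] (Fin N → ℝ))
    (p : ℝ) (hp1 : 1 ≤ p) (hp3 : p < 3) (c : ℝ) (hc : 0 < c)
    (h : ∀ F : (Fin 3 → ℝ) → Fin 3 → Fin 3 → ℝ,
      ContDiff ℝ (⊤ : ℕ∞) F → HasCompactSupport F →
        eLpNorm F (ENNReal.ofReal (3 * p / (3 - p))) volume ≤
          ENNReal.ofReal c *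
            (eLpNorm (fun x => A (F x)) (ENNReal.ofReal (3 * p / (3 - p))) volume +
              eLpNorm (fun x => mcurl F x) (ENNReal.ofReal p) volume)) :
    ∀ ξ : Fin 3 → ℝ, ξ ≠ 0 →
      Function.Injective (fun v : Fin 3 → ℝ => A (fun i j => v i * ξ j)) := by
  have hq : ENNReal.ofReal (3 * p / (3 - p)) ≠ 0 := by
    rw [← pos_iff_ne_zero, ENNReal.ofReal_pos]
    exact div_pos (by linarith) (by linarith)
  exact korn_maxwell_sobolev_necessity_general A hq ENNReal.ofReal_ne_top h
end
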